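/- Bound for the quantile of the test statistic under the alternative: Assume the multiplicative measurement error model with M_c[φ](t) ≠ 0 for all t, ess sup_t |1_{[−k,k]}(t) w(t)/M_c[φ](t)| < ∞ for every k > 0, φ ∈ L^∞(x^{2c−1}) ∩ L¹(x^{4(c−1)}) and f₀ ∈ L¹(x^{4(c−1)}). Let β ∈ (0,1), n ≥ 2 and k ∈ ℕ. If the density f of X lies in L¹(x^{4(c−1)}) and for some τ > 0 the separation condition q_k²(f − f₀) ≥ 2τ + 2(18 c_φ V⁽²⁾_{f|φ} + 138986 (L_{β/4}/β)(√(2k)/n)) L_{β/4}^{1/2} √(Δ₄(k))/n + 112 c_φ V_{f|φ} (L_{β/4}/β) √(Δ∞(k))/n holds, then P(q̂_k² < τ) ≤ β. -/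

import Mathlib

open MeasureTheory Set Filter
open scoped ENNReal

noncomputable section

namespace MultErr

/-- The complex power `x ↦ x^(c-1+2πit)`. -/
def cpw (c t x : ℝ) : ℂ := (x : ℂ) ^ ((c : ℂ) - 1 + 2 * Real.pi * Complex.I * (t : ℂ))

/-- The Mellin transform `M_c[g](t) = ∫₀^∞ x^(c-1+2πit) g(x) dx` of a real-valued `g`. -/
def mellinT (c : ℝ) (g : ℝ → ℝ) (t : ℝ) : ℂ := ∫ x in Ioi (0 : ℝ), cpw c t x * (g x : ℂ)

/-- The multiplicative convolution `(f*g)(y) = ∫₀^∞ f(x) g(y/x) x⁻¹ dx`. -/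
def mconv (f g : ℝ → ℝ) (y : ℝ) : ℝ := ∫ x in Ioi (0 : ℝ), f x * g (y / x) / x

/-- The weighted `L¹`-norm `‖h‖_{L¹(xᵃ)} = ∫₀^∞ |h(x)| xᵃ dx`. -/
def wnorm1 (a : ℝ) (h : ℝ → ℝ) : ℝ := ∫ x in Ioi (0 : ℝ), |h x| * x ^ a

/-- Membership in `L¹((0,∞), xᵃ dx)`. -/
def MemW1 (a : ℝ) (h : ℝ → ℝ) : Prop := IntegrableOn (fun x => |h x| * x ^ a) (Ioi 0)

/-- Membership in `L²((0,∞), xᵃ dx)`. -/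
def MemW2 (a : ℝ) (h : ℝ → ℝ) : Prop := IntegrableOn (fun x => h x ^ 2 * x ^ a) (Ioi 0)

/-- The weighted `L^∞`-norm `ess sup_{x>0} |h(x)| xᵃ`, valued in `ℝ≥0∞`. -/
def wnormInf (a : ℝ) (h : ℝ → ℝ) : ℝ≥0∞ :=
  essSup (fun x => ENNReal.ofReal (|h x| * x ^ a)) (volume.restrict (Ioi 0))

/-- Real-valued weighted `L^∞`-norm. -/
def wnormInfR (a : ℝ) (h : ℝ → ℝ) : ℝ := (wnormInf a h).toReal

/-- A Lebesgue probability density on `(0,∞)`. -/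
def IsDensity (h : ℝ → ℝ) : Prop :=
  (∀ x, 0 ≤ h x) ∧ (∀ x ≤ (0 : ℝ), h x = 0) ∧ IntegrableOn h (Ioi 0) ∧
    (∫ x in Ioi (0 : ℝ), h x) = 1

/-- The class `𝔻`: densities on `(0,∞)` lying in `L¹(x^(c-1)) ∩ L²(x^(2c-1))`. -/
def regD (c : ℝ) (h : ℝ → ℝ) : Prop := IsDensity h ∧ MemW1 (c - 1) h ∧ MemW2 (2 * c - 1) h

/-- A measurable symmetric probability density on `ℝ`. -/
def IsSymmDensity (w : ℝ → ℝ) : Prop :=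
  Measurable w ∧ (∀ t, 0 ≤ w t) ∧ (∀ t, w (-t) = w t) ∧ Integrable w ∧ (∫ t : ℝ, w t) = 1

/-- `ess sup_t 1_{[-k,k]}(t) w(t)/|M_c[φ](t)|`, valued in `ℝ≥0∞`. -/
def winf (c k : ℝ) (w φ : ℝ → ℝ) : ℝ≥0∞ :=
  essSup (fun t => ENNReal.ofReal ((Icc (-k) k).indicator
    (fun t => w t / ‖mellinT c φ t‖) t)) volume

/-- `L_γ = 1 - log γ`. -/
def Lq (γ : ℝ) : ℝ := 1 - Real.log γ

/-- `Δ₄(k) = ∫_{-k}^k w⁴(t)/|M_c[φ](t)|⁴ dt`. -/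
def Δ4 (c k : ℝ) (w φ : ℝ → ℝ) : ℝ :=
  ∫ t in Icc (-k) k, w t ^ 4 / ‖mellinT c φ t‖ ^ 4

/-- `Δ∞(k) = ‖1_{[-k,k]} w/M_c[φ]‖_∞⁴`. -/
def Δinf (c k : ℝ) (w φ : ℝ → ℝ) : ℝ := (winf c k w φ).toReal ^ 4

/-- `c_φ = (‖φ‖_{L^∞(x^{2c-1})}/‖φ‖_{L¹(x^{2(c-1)})}) ∨ 1`. -/
def cphi (c : ℝ) (φ : ℝ → ℝ) : ℝ := max (wnormInfR (2 * c - 1) φ / wnorm1 (2 * (c - 1)) φ) 1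

/-- `V_{h|φ} = ‖h*φ‖_{L¹(x^{2(c-1)})} ∨ 1`. -/
def Vc (c : ℝ) (h φ : ℝ → ℝ) : ℝ := max (wnorm1 (2 * (c - 1)) (mconv h φ)) 1

/-- `V⁽²⁾_{h|φ} = ‖h*φ‖_{L¹(x^{4(c-1)})} ∨ 1`. -/
def V2c (c : ℝ) (h φ : ℝ → ℝ) : ℝ := max (wnorm1 (4 * (c - 1)) (mconv h φ)) 1

/-- `V_{h|φ}(p) = ‖h*φ‖_{L¹(x^{2p(c-1)})} ∨ 1`. -/
def Vpc (c p : ℝ) (h φ : ℝ → ℝ) : ℝ := max (wnorm1 (2 * p * (c - 1)) (mconv h φ)) 1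

/-- `q_k²(h) = ∫_{-k}^k |M_c[h](t)|² w²(t) dt`. -/
def qk2 (c k : ℝ) (w h : ℝ → ℝ) : ℝ :=
  ∫ t in Icc (-k) k, ‖mellinT c h t‖ ^ 2 * w t ^ 2

/-- `q²(h) = ∫_ℝ |M_c[h](t)|² w²(t) dt`. -/
def q2 (c : ℝ) (w h : ℝ → ℝ) : ℝ :=
  ∫ t : ℝ, ‖mellinT c h t‖ ^ 2 * w t ^ 2

/-- The weight `w²(t)/|M_c[φ](t)|²`. -/
def wgt (c : ℝ) (w φ : ℝ → ℝ) (t : ℝ) : ℝ := w t ^ 2 / ‖mellinT c φ t‖ ^ 2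

variable {Ω : Type*} [MeasurableSpace Ω]

/-- The U-part `T̂_k` of the test statistic. -/
def That (c k : ℝ) (w φ : ℝ → ℝ) {n : ℕ} (Y : Fin n → Ω → ℝ) (ω : Ω) : ℂ :=
  ((n : ℂ) * ((n : ℂ) - 1))⁻¹ *
    ∑ j : Fin n, ∑ l : Fin n,
      if j ≠ l then
        ∫ t in Icc (-k) k, cpw c t (Y j ω) * cpw c (-t) (Y l ω) * (wgt c w φ t : ℂ)
      else 0

/-- The linear part `Ŝ_k` of the test statistic. -/
def Shat (c k : ℝ) (w φ f₀ : ℝ → ℝ) {n : ℕ} (Y : Fin n → Ω → ℝ) (ω : Ω) : ℂ :=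
  (n : ℂ)⁻¹ * ∑ j : Fin n,
    ∫ t in Icc (-k) k,
      cpw c t (Y j ω) * (starRingEnd ℂ) (mellinT c (mconv f₀ φ) t) * (wgt c w φ t : ℂ)

/-- The test statistic `q̂_k² = T̂_k - 2Ŝ_k + q_k²(f₀)`. -/
def qhat (c k : ℝ) (w φ f₀ : ℝ → ℝ) {n : ℕ} (Y : Fin n → Ω → ℝ) (ω : Ω) : ℝ :=
  (That c k w φ Y ω - 2 * Shat c k w φ f₀ Y ω).re + qk2 c k w f₀

/-- The critical value `τ_k(α)`. -/
def τcrit (c k α : ℝ) (w φ f₀ : ℝ → ℝ) (n : ℕ) : ℝ :=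
  (18 * cphi c φ * V2c c f₀ φ
      + 69493 * (Real.sqrt (2 * k) / (n : ℝ)) * (Lq (α / 2) / α)) *
    Real.sqrt (Lq (α / 2)) * Real.sqrt (Δ4 c k w φ) / (n : ℝ)
  + 52 * Vc c f₀ φ * cphi c φ * Lq (α / 2) * Real.sqrt (Δinf c k w φ) / (n : ℝ)

/-- `Y₁,…,Y_n` are i.i.d. with Lebesgue density `g`. -/
def IID (P : Measure Ω) {n : ℕ} (Y : Fin n → Ω → ℝ) (g : ℝ → ℝ) : Prop :=
  ProbabilityTheory.iIndepFun (m := fun _ : Fin n => (inferInstance : MeasurableSpace ℝ)) Y P ∧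
  ∀ j, Measurable (Y j) ∧
    Measure.map (Y j) P = (volume : Measure ℝ).withDensity (fun y => ENNReal.ofReal (g y))


/-- Regularity-function assumptions: `s ≥ 1` symmetric non-decreasing with `s(t) → ∞`,
and `w/s` symmetric non-increasing with `w(t)/s(t) → 0` as `|t| → ∞`. -/
def RegFun (w s : ℝ → ℝ) : Prop :=
  (∀ t, 1 ≤ s t) ∧ (∀ t, s (-t) = s t) ∧ MonotoneOn s (Ici 0) ∧
    Tendsto s atTop atTop ∧
    (∀ t, w (-t) / s (-t) = w t / s t) ∧ AntitoneOn (fun t => w t / s t) (Ici 0) ∧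
    Tendsto (fun t => w t / s t) atTop (nhds 0)

/-- Membership in the regularity class `E_s^R`. -/
def inEs (c R : ℝ) (s h : ℝ → ℝ) : Prop :=
  MemW1 (c - 1) h ∧ MemW2 (2 * c - 1) h ∧
    (∫ t : ℝ, s t ^ 2 * ‖mellinT c h t‖ ^ 2) ≤ R ^ 2

/-- Membership in the class `D_v` of densities with uniformly bounded moment constant. -/
def inDv (c v : ℝ) (φ h : ℝ → ℝ) : Prop :=
  regD c h ∧ MemW1 (4 * (c - 1)) h ∧ V2c c h φ ≤ v

/-- `ρ_{k,s}² = (w²(k)/s²(k)) ∨ (1/n)(√Δ₄(k) ∨ √Δ∞(k))`. -/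
def ρks2 (c : ℝ) (w φ s : ℝ → ℝ) (k : ℝ) (n : ℕ) : ℝ :=
  max (w k ^ 2 / s k ^ 2)
    ((1 / (n : ℝ)) * max (Real.sqrt (Δ4 c k w φ)) (Real.sqrt (Δinf c k w φ)))

/-- `η_k² = 1 ∨ √(2k)/(dn)`. -/
def ηk2 (k d : ℝ) (n : ℕ) : ℝ := max 1 (Real.sqrt (2 * k) / (d * (n : ℝ)))

/-- The Bonferroni-corrected critical value `τ_{k|α}` for a collection of cardinality `m`. -/
def τbon (c k α : ℝ) (m : ℕ) (p : ℝ) (w φ f₀ : ℝ → ℝ) (n : ℕ) : ℝ :=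
  (18 * cphi c φ * Vpc c p f₀ φ
      + 69493 * (Real.sqrt (2 * k) * (m : ℝ) ^ ((1 : ℝ) / (p - 1)) / (n : ℝ))
          * (Lq (α / (2 * (m : ℝ))) ^ 2 / α)) *
    Real.sqrt (Lq (α / (2 * (m : ℝ)))) * Real.sqrt (Δ4 c k w φ) / (n : ℝ)
  + 52 * Vc c f₀ φ * cphi c φ * Lq (α / (2 * (m : ℝ))) * Real.sqrt (Δinf c k w φ) / (n : ℝ)

/-- The adaptive factor `δ_𝒦 = (1 + log |𝒦|)^{-1/2}`. -/
def δK (m : ℕ) : ℝ := (1 + Real.log (m : ℝ)) ^ (-(1 : ℝ) / 2)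

/-- `r_{k,s}² = (w²(k)/s²(k)) ∨ (1/n)(δ_𝒦⁻¹ √Δ₄(k) ∨ δ_𝒦⁻² √Δ∞(k))`. -/
def rks2 (c : ℝ) (w φ s : ℝ → ℝ) (k : ℝ) (m n : ℕ) : ℝ :=
  max (w k ^ 2 / s k ^ 2)
    ((1 / (n : ℝ)) * max ((δK m)⁻¹ * Real.sqrt (Δ4 c k w φ))
        (((δK m)⁻¹) ^ 2 * Real.sqrt (Δinf c k w φ)))

/-- `η_{𝒦,s}² = 1 ∨ √(2k₀)|𝒦|^{1/(p-1)}/(dn δ_𝒦⁴)`. -/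
def ηKs2 (k₀ : ℝ) (m : ℕ) (p d : ℝ) (n : ℕ) : ℝ :=
  max 1 (Real.sqrt (2 * k₀) * (m : ℝ) ^ ((1 : ℝ) / (p - 1)) / (d * (n : ℝ) * δK m ^ 4))

/-- The truncated complex power `b(y,t) = 1_{[0,δ]}(y^{c-1}) y^{c-1+2πit}`. -/
def bfun (c δ : ℝ) (y t : ℝ) : ℂ := if y ^ (c - 1) ∈ Icc (0 : ℝ) δ then cpw c t y else 0

/-- `E[b(Y,t)]` for `Y` with density `g` on `(0,∞)`. -/
def Ebfun (c δ : ℝ) (g : ℝ → ℝ) (t : ℝ) : ℂ := ∫ y in Ioi (0 : ℝ), bfun c δ y t * (g y : ℂ)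

/-- The bounded kernel `h_k^b`. -/
def hkb (c δ k : ℝ) (w φ g : ℝ → ℝ) (x y : ℝ) : ℂ :=
  ∫ t in Icc (-k) k,
    (bfun c δ y t - Ebfun c δ g t) * (bfun c δ x (-t) - Ebfun c δ g (-t)) * (wgt c w φ t : ℂ)

/-- `ṽ(x,t) = x^{c-1+2πit} - E[Y^{c-1+2πit}]` for `Y` with density `g`. -/
def vtil (c : ℝ) (g : ℝ → ℝ) (x t : ℝ) : ℂ := cpw c t x - mellinT c g t

/-- The full (unbounded) kernel `h_k` of the canonical U-statistic. -/
def hkfull (c k : ℝ) (w φ g : ℝ → ℝ) (x y : ℝ) : ℂ :=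
  ∫ t in Icc (-k) k, vtil c g x t * vtil c g y (-t) * (wgt c w φ t : ℂ)

variable {Ω' : Type*} [MeasurableSpace Ω']

/-- The U-statistic with kernel `h` built from the sample `Y`. -/
def Ustat (h : ℝ → ℝ → ℂ) {n : ℕ} (Y : Fin n → Ω' → ℝ) (ω : Ω') : ℂ :=
  ((n : ℂ) * ((n : ℂ) - 1))⁻¹ *
    ∑ j : Fin n, ∑ l : Fin n, if j ≠ l then h (Y j ω) (Y l ω) else 0

/-- The centred linear statistic `W_k` (with `g = f*φ` and `g₀ = f₀*φ`). -/
def Wstat (c k : ℝ) (w φ g g₀ : ℝ → ℝ) {n : ℕ} (Y : Fin n → Ω' → ℝ) (ω : Ω') : ℂ :=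
  (n : ℂ)⁻¹ * ∑ j : Fin n,
    ∫ t in Icc (-k) k,
      vtil c g (Y j ω) t * (starRingEnd ℂ) (mellinT c g t - mellinT c g₀ t) * (wgt c w φ t : ℂ)

/-- Mellin transform of a complex-valued function. -/
def mellinTC (c : ℝ) (g : ℝ → ℂ) (t : ℝ) : ℂ := ∫ x in Ioi (0 : ℝ), cpw c t x * g x

/-- Multiplicative convolution of complex-valued functions. -/
def mconvC (f g : ℝ → ℂ) (y : ℝ) : ℂ := ∫ x in Ioi (0 : ℝ), f x * g (y / x) / (x : ℂ)

/-- Weighted `L¹`-norm of a complex-valued function. -/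
def wnorm1C (a : ℝ) (h : ℝ → ℂ) : ℝ := ∫ x in Ioi (0 : ℝ), ‖h x‖ * x ^ a

/-- Membership in `L¹((0,∞), xᵃ dx)` for complex-valued functions. -/
def MemW1C (a : ℝ) (h : ℝ → ℂ) : Prop :=
  AEStronglyMeasurable h (volume.restrict (Ioi 0)) ∧
    IntegrableOn (fun x => ‖h x‖ * x ^ a) (Ioi 0)

/-- Weighted `L²`-norm of a complex-valued function. -/
def wnorm2C (a : ℝ) (h : ℝ → ℂ) : ℝ :=
  Real.sqrt (∫ x in Ioi (0 : ℝ), ‖h x‖ ^ 2 * x ^ a)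

/-- Membership in `L²((0,∞), xᵃ dx)` for complex-valued functions. -/
def MemW2C (a : ℝ) (h : ℝ → ℂ) : Prop :=
  AEStronglyMeasurable h (volume.restrict (Ioi 0)) ∧
    IntegrableOn (fun x => ‖h x‖ ^ 2 * x ^ a) (Ioi 0)

/-- Weighted `L^∞`-norm of a complex-valued function, valued in `ℝ≥0∞`. -/
def wnormInfC (a : ℝ) (h : ℝ → ℂ) : ℝ≥0∞ :=
  essSup (fun x => ENNReal.ofReal (‖h x‖ * x ^ a)) (volume.restrict (Ioi 0))

/-!
The centred statistic `q̂_k² - q_k²(f - f₀)` splits into a canonical U-statistic, whose kernel is the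
Gram kernel of the centred Mellin characters `y ↦ y ^ (c - 1 + 2πit)`, and a linear statistic.
Plancherel's theorem turns the bound on `φ` into a Bessel inequality for the characters, which bounds
the operators attached to both. The linear statistic is then handled by Chebyshev's inequality. The
U-statistic is a martingale `M`, and `exp (λ M - λ² ([M] + ⟨M⟩) / 2)` is a supermartingale without
any boundedness of the increments; so it remains to bound `[M] + ⟨M⟩` in probability, by second
moments once the diagonal of the squared increments has been truncated.
-/

section SequentialSums

variable {E : Type*}

/-- The sum over the sample of increments that depend on the current observation and on those
preceding it. -/
def pathSum (D : ∀ m : ℕ, (Fin m → E) → E → ℝ) (n : ℕ) (y : Fin n → E) : ℝ :=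
  ∑ i : Fin n, D i (Fin.take i i.2.le y) (y i)

/-- The sum `∑_{j < m} A(y_j, x)` over the past observations. -/
def pastSum (A : E → E → ℝ) (m : ℕ) (y : Fin m → E) (x : E) : ℝ := ∑ j, A (y j) x

/-- The sum `∑_{i < j < n} A(y_i, y_j)` over the pairs of observations. -/
abbrev pairSum (A : E → E → ℝ) (n : ℕ) (y : Fin n → E) : ℝ := pathSum (pastSum A) n y

variable [MeasurableSpace E]

/-- The joint law of an i.i.d. sample of size `n` from `μ`. -/
abbrev sampleLaw (μ : Measure E) (n : ℕ) : Measure (Fin n → E) := Measure.pi fun _ => μ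

/-- Appending a last observation to a sample, as a measurable equivalence. -/
def snocEquiv (E : Type*) [MeasurableSpace E] (m : ℕ) : (Fin m → E) × E ≃ᵐ (Fin (m + 1) → E) :=
  MeasurableEquiv.prodComm.trans (MeasurableEquiv.piFinSuccAbove (fun _ => E) (Fin.last m)).symm

lemma snocEquiv_apply {m : ℕ} (p : (Fin m → E) × E) :
    snocEquiv E m p = Fin.snoc (α := fun _ => E) p.1 p.2 :=
  Fin.insertNth_last' p.2 p.1

lemma measurePreserving_snocEquiv (μ : Measure E) [SigmaFinite μ] (m : ℕ) :
    MeasurePreserving (snocEquiv E m) ((sampleLaw μ m).prod μ) (sampleLaw μ (m + 1)) :=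
  (measurePreserving_piFinSuccAbove (fun _ : Fin (m + 1) => μ) (Fin.last m)).symm.comp
    Measure.measurePreserving_swap

lemma pathSum_snocEquiv (D : ∀ m : ℕ, (Fin m → E) → E → ℝ) {m : ℕ} (p : (Fin m → E) × E) :
    pathSum D (m + 1) (snocEquiv E m p) = pathSum D m p.1 + D m p.1 p.2 := by
  have htake (i : ℕ) (hi : i ≤ m) (hi' : i ≤ m + 1) :
      Fin.take i hi' (Fin.snoc (α := fun _ => E) p.1 p.2) = Fin.take i hi p.1 := by
    funext j
    exact Fin.snoc_castSucc (α := fun _ => E) p.2 p.1 (Fin.castLE hi j)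
  rw [snocEquiv_apply, pathSum, Fin.sum_univ_castSucc]
  congr 1
  · refine Finset.sum_congr rfl fun i _ => ?_
    rw [Fin.snoc_castSucc]
    exact congrArg (D i · (p.1 i)) (htake i i.2.le _)
  · rw [Fin.snoc_last]
    exact congrArg (D m · p.2) (htake m le_rfl _)

lemma measurable_pathSum {D : ∀ m : ℕ, (Fin m → E) → E → ℝ}
    (hD : ∀ m, Measurable fun p : (Fin m → E) × E => D m p.1 p.2) (n : ℕ) :
    Measurable (pathSum D n) :=
  Finset.measurable_fun_sum _ fun i _ => (hD i).comp
    (f := fun y : Fin n → E => (Fin.take i i.2.le y, y i)) <|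
      (measurable_pi_lambda _ fun _ => measurable_pi_apply _).prodMk (measurable_pi_apply i)

lemma sum_sum_eq_pairSum {A : E → E → ℝ} (hA : ∀ x y, A x y = A y x) (n : ℕ) (y : Fin n → E) :
    ∑ i, ∑ j, A (y i) (y j) = ∑ i, A (y i) (y i) + 2 * pairSum A n y := by
  induction n with
  | zero => simp [pathSum]
  | succ m ih =>
    obtain ⟨p, rfl⟩ := (snocEquiv E m).surjective y
    rw [pairSum, pathSum_snocEquiv, snocEquiv_apply]
    simp only [Fin.sum_univ_castSucc, Fin.snoc_castSucc, Fin.snoc_last, Finset.sum_add_distrib,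
      ih p.1, hA p.2, pastSum]
    ring

variable (μ : Measure E) [IsProbabilityMeasure μ]

lemma memLp_pathSum {q : ℝ≥0∞} {D : ∀ m : ℕ, (Fin m → E) → E → ℝ}
    (hD : ∀ m, MemLp (fun p : (Fin m → E) × E => D m p.1 p.2) q ((sampleLaw μ m).prod μ)) (n : ℕ) :
    MemLp (pathSum D n) q (sampleLaw μ n) := by
  induction n with
  | zero => simp
  | succ m ih =>
    have hsplit : pathSum D (m + 1)
        = (fun p => pathSum D m p.1 + D m p.1 p.2) ∘ (snocEquiv E m).symm := by
      funext y
      rw [Function.comp_apply, ← pathSum_snocEquiv, MeasurableEquiv.apply_symm_apply]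
    rw [hsplit]
    exact ((ih.comp_fst μ).add (hD m)).comp_measurePreserving
      (measurePreserving_snocEquiv μ m).symm

lemma integral_pathSum {D : ∀ m : ℕ, (Fin m → E) → E → ℝ}
    (hD : ∀ m, Integrable (fun p : (Fin m → E) × E => D m p.1 p.2) ((sampleLaw μ m).prod μ))
    (n : ℕ) :
    ∫ y, pathSum D n y ∂sampleLaw μ n
      = ∑ m ∈ Finset.range n, ∫ p, D m p.1 p.2 ∂(sampleLaw μ m).prod μ := by
  induction n with
  | zero => simp [pathSum]
  | succ m ih =>
    have hS : Integrable (pathSum D m) (sampleLaw μ m) :=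
      memLp_one_iff_integrable.1 (memLp_pathSum μ (fun m => memLp_one_iff_integrable.2 (hD m)) m)
    rw [← (measurePreserving_snocEquiv μ m).integral_comp', Finset.sum_range_succ, ← ih]
    simp_rw [pathSum_snocEquiv]
    rw [integral_add (hS.comp_fst μ) (hD m), integral_fun_fst, probReal_univ, one_smul]

lemma integral_pathSum_sq {D : ∀ m : ℕ, (Fin m → E) → E → ℝ}
    (hD : ∀ m, MemLp (fun p : (Fin m → E) × E => D m p.1 p.2) 2 ((sampleLaw μ m).prod μ))
    (h0 : ∀ m, ∀ᵐ y ∂sampleLaw μ m, ∫ x, D m y x ∂μ = 0) (n : ℕ) :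
    ∫ y, pathSum D n y ^ 2 ∂sampleLaw μ n
      = ∑ m ∈ Finset.range n, ∫ p, D m p.1 p.2 ^ 2 ∂(sampleLaw μ m).prod μ := by
  induction n with
  | zero => simp [pathSum]
  | succ m ih =>
    have hS := (memLp_pathSum μ hD m).comp_fst (ν := μ)
    have hSD : Integrable (fun p => pathSum D m p.1 * D m p.1 p.2) ((sampleLaw μ m).prod μ) :=
      hS.integrable_mul (hD m)
    have hcross : ∫ p, pathSum D m p.1 * D m p.1 p.2 ∂(sampleLaw μ m).prod μ = 0 := by
      rw [integral_prod _ hSD]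
      refine integral_eq_zero_of_ae ?_
      filter_upwards [h0 m] with y hy
      simp only [integral_const_mul, hy, mul_zero, Pi.zero_apply]
    rw [← (measurePreserving_snocEquiv μ m).integral_comp', Finset.sum_range_succ, ← ih]
    simp_rw [pathSum_snocEquiv, add_sq, mul_assoc]
    rw [integral_add (hS.integrable_sq.fun_add (hSD.const_mul 2)) (hD m).integrable_sq,
      integral_add hS.integrable_sq (hSD.const_mul 2), integral_const_mul, hcross,
      integral_fun_fst (fun y => pathSum D m y ^ 2), probReal_univ, one_smul, mul_zero, add_zero]

end SequentialSums

section SelfNormalized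

variable {E : Type*} [MeasurableSpace E]

lemma exp_sub_half_sq_le (x : ℝ) : Real.exp (x - x ^ 2 / 2) ≤ 1 + x + x ^ 2 / 2 := by
  rcases le_total 0 x with hx | hx
  · have hlog : x - x ^ 2 / 2 ≤ Real.log (1 + x) := by
      refine le_trans ?_ (Real.le_log_one_add_of_nonneg hx)
      rw [le_div_iff₀ (by positivity)]
      nlinarith [pow_nonneg hx 3]
    calc Real.exp (x - x ^ 2 / 2) ≤ 1 + x := (Real.le_log_iff_exp_le (by positivity)).1 hlog
      _ ≤ 1 + x + x ^ 2 / 2 := le_add_of_nonneg_right (by positivity)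
  · have hpos : 0 < 1 + -x + (-x) ^ 2 / 2 := by nlinarith
    calc Real.exp (x - x ^ 2 / 2) ≤ Real.exp x := Real.exp_le_exp.2 (by nlinarith [sq_nonneg x])
      _ = (Real.exp (-x))⁻¹ := by rw [Real.exp_neg, inv_inv]
      _ ≤ (1 + -x + (-x) ^ 2 / 2)⁻¹ :=
        inv_anti₀ hpos (Real.quadratic_le_exp_of_nonneg (neg_nonneg.2 hx))
      _ ≤ 1 + x + x ^ 2 / 2 := by
        rw [inv_le_iff_one_le_mul₀ hpos]
        nlinarith [sq_nonneg (x ^ 2)]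

variable (μ : Measure E) [IsProbabilityMeasure μ]

lemma lintegral_exp_centered_le_one {g : E → ℝ} (hg : MemLp g 2 μ) (h0 : ∫ x, g x ∂μ = 0) (l : ℝ) :
    ∫⁻ x, ENNReal.ofReal
      (Real.exp (l * g x - l ^ 2 / 2 * (g x ^ 2 + ∫ x, g x ^ 2 ∂μ))) ∂μ ≤ 1 := by
  set b := l ^ 2 / 2 * ∫ x, g x ^ 2 ∂μ with hb
  have hlin : Integrable (fun x => 1 + l * g x) μ :=
    (integrable_const 1).add ((hg.integrable (by norm_num)).const_mul l)
  have hsq : Integrable (fun x => l ^ 2 / 2 * g x ^ 2) μ := hg.integrable_sq.const_mul _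
  have hpointwise (x : E) : Real.exp (l * g x - l ^ 2 / 2 * (g x ^ 2 + ∫ x, g x ^ 2 ∂μ))
      ≤ (1 + l * g x + l ^ 2 / 2 * g x ^ 2) * Real.exp (-b) := by
    have hsplit : l * g x - l ^ 2 / 2 * (g x ^ 2 + ∫ x, g x ^ 2 ∂μ)
        = (l * g x - (l * g x) ^ 2 / 2) + -b := by rw [hb]; ring
    rw [hsplit, Real.exp_add]
    refine mul_le_mul_of_nonneg_right ((exp_sub_half_sq_le _).trans_eq ?_) (Real.exp_pos _).le
    ring
  have hint : ∫ x, (1 + l * g x + l ^ 2 / 2 * g x ^ 2) * Real.exp (-b) ∂μ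
      = (1 + b) * Real.exp (-b) := by
    rw [integral_mul_const, integral_add hlin hsq, integral_const_mul,
      integral_add (integrable_const 1) ((hg.integrable (by norm_num)).const_mul l),
      integral_const_mul, h0, integral_const, probReal_univ, one_smul, mul_zero, add_zero]
  calc _ ≤ ∫⁻ x, ENNReal.ofReal ((1 + l * g x + l ^ 2 / 2 * g x ^ 2) * Real.exp (-b)) ∂μ :=
        lintegral_mono fun x => ENNReal.ofReal_le_ofReal (hpointwise x)
    _ = ENNReal.ofReal ((1 + b) * Real.exp (-b)) := by
        rw [← hint, ofReal_integral_eq_lintegral_ofReal ((hlin.fun_add hsq).mul_const _)]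
        exact Eventually.of_forall fun x => (Real.exp_pos _).le.trans (hpointwise x)
    _ ≤ 1 := by
        rw [ENNReal.ofReal_le_one, Real.exp_neg, mul_inv_le_iff₀ (Real.exp_pos _)]
        linarith [Real.add_one_le_exp b]

/-- The quadratic variation `[M] + ⟨M⟩` of the martingale with increments `ξ`. -/
def quadVar (ξ : ∀ m : ℕ, (Fin m → E) → E → ℝ) : ∀ n : ℕ, (Fin n → E) → ℝ :=
  pathSum fun m y x => ξ m y x ^ 2 + ∫ x, ξ m y x ^ 2 ∂μ

variable {μ} {ξ : ∀ m : ℕ, (Fin m → E) → E → ℝ}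

lemma measurable_quadVar_increment
    (hξ : ∀ m, Measurable fun p : (Fin m → E) × E => ξ m p.1 p.2) (m : ℕ) :
    Measurable fun p : (Fin m → E) × E => ξ m p.1 p.2 ^ 2 + ∫ x, ξ m p.1 x ^ 2 ∂μ := by
  have hsq : StronglyMeasurable fun p : (Fin m → E) × E => ξ m p.1 p.2 ^ 2 :=
    ((hξ m).pow_const 2).stronglyMeasurable
  exact hsq.measurable.add (hsq.integral_prod_right'.measurable.comp measurable_fst)

/-- No boundedness of the increments is needed because the exponent is compensated by both `[M]` and
`⟨M⟩`. -/
lemma lintegral_exp_pathSum_sub_quadVar_le_one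
    (hξ : ∀ m, Measurable fun p : (Fin m → E) × E => ξ m p.1 p.2)
    (hL : ∀ m y, MemLp (ξ m y) 2 μ) (h0 : ∀ m y, ∫ x, ξ m y x ∂μ = 0) (l : ℝ) (n : ℕ) :
    ∫⁻ y, ENNReal.ofReal (Real.exp (l * pathSum ξ n y - l ^ 2 / 2 * quadVar μ ξ n y))
      ∂sampleLaw μ n ≤ 1 := by
  have hQ := measurable_quadVar_increment (μ := μ) hξ
  induction n with
  | zero => simp [pathSum, quadVar]
  | succ m ih =>
    have hmeas : Measurable fun y : Fin (m + 1) → E =>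
        ENNReal.ofReal (Real.exp (l * pathSum ξ (m + 1) y - l ^ 2 / 2 * quadVar μ ξ (m + 1) y)) :=
      (((measurable_pathSum hξ _).const_mul l).sub
        ((measurable_pathSum hQ _).const_mul _)).exp.ennreal_ofReal
    rw [← (measurePreserving_snocEquiv μ m).lintegral_comp hmeas]
    refine (lintegral_prod _ (hmeas.comp (snocEquiv E m).measurable).aemeasurable).trans_le ?_
    refine le_trans (lintegral_mono fun y => ?_) ih
    have hsplit (x : E) :
        ENNReal.ofReal (Real.exp (l * pathSum ξ (m + 1) (snocEquiv E m (y, x))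
          - l ^ 2 / 2 * quadVar μ ξ (m + 1) (snocEquiv E m (y, x))))
        = ENNReal.ofReal (Real.exp (l * pathSum ξ m y - l ^ 2 / 2 * quadVar μ ξ m y))
          * ENNReal.ofReal
            (Real.exp (l * ξ m y x - l ^ 2 / 2 * (ξ m y x ^ 2 + ∫ x, ξ m y x ^ 2 ∂μ))) := by
      rw [quadVar, pathSum_snocEquiv, pathSum_snocEquiv, ← ENNReal.ofReal_mul (Real.exp_pos _).le,
        ← Real.exp_add]
      congr 2
      ring
    have hmeas_y : Measurable fun x => ENNReal.ofReal
        (Real.exp (l * ξ m y x - l ^ 2 / 2 * (ξ m y x ^ 2 + ∫ x, ξ m y x ^ 2 ∂μ))) :=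
      ((((hξ m).comp measurable_prodMk_left).const_mul l).sub
        (((hQ m).comp measurable_prodMk_left).const_mul _)).exp.ennreal_ofReal
    refine ((lintegral_congr hsplit).trans (lintegral_const_mul _ hmeas_y)).trans_le ?_
    exact mul_le_of_le_one_right' (lintegral_exp_centered_le_one μ (hL m y) (h0 m y) l)

lemma measureReal_pathSum_le_neg_quadVar_le
    (hξ : ∀ m, Measurable fun p : (Fin m → E) × E => ξ m p.1 p.2)
    (hL : ∀ m y, MemLp (ξ m y) 2 μ) (h0 : ∀ m y, ∫ x, ξ m y x ∂μ = 0) {s z : ℝ} (hs : 0 ≤ s)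
    (hz : 0 < z) (n : ℕ) :
    (sampleLaw μ n).real {y | pathSum ξ n y ≤ -s ∧ quadVar μ ξ n y ≤ z}
      ≤ Real.exp (-(s ^ 2 / (2 * z))) := by
  set l := -(s / z) with hl
  have hexp (y : Fin n → E) (hy : pathSum ξ n y ≤ -s ∧ quadVar μ ξ n y ≤ z) :
      s ^ 2 / (2 * z) ≤ l * pathSum ξ n y - l ^ 2 / 2 * quadVar μ ξ n y := by
    have hM : s / z * s ≤ s / z * -pathSum ξ n y :=
      mul_le_mul_of_nonneg_left (le_neg.1 hy.1) (by positivity)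
    have hQ : (s / z) ^ 2 / 2 * quadVar μ ξ n y ≤ (s / z) ^ 2 / 2 * z :=
      mul_le_mul_of_nonneg_left hy.2 (by positivity)
    have hval : s ^ 2 / (2 * z) = s / z * s - (s / z) ^ 2 / 2 * z := by field_simp; ring
    rw [hl, neg_sq]
    linarith
  have hmeas : Measurable fun y =>
      ENNReal.ofReal (Real.exp (l * pathSum ξ n y - l ^ 2 / 2 * quadVar μ ξ n y)) :=
    (((measurable_pathSum hξ n).const_mul l).sub
      ((measurable_pathSum (measurable_quadVar_increment hξ) n).const_mul _)).exp.ennreal_ofReal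
  refine ENNReal.toReal_le_of_le_ofReal (Real.exp_pos _).le ?_
  calc sampleLaw μ n {y | pathSum ξ n y ≤ -s ∧ quadVar μ ξ n y ≤ z}
      ≤ sampleLaw μ n {y | ENNReal.ofReal (Real.exp (s ^ 2 / (2 * z)))
          ≤ ENNReal.ofReal (Real.exp (l * pathSum ξ n y - l ^ 2 / 2 * quadVar μ ξ n y))} :=
        measure_mono fun y hy => ENNReal.ofReal_le_ofReal (Real.exp_le_exp.2 (hexp y hy))
    _ ≤ _ / ENNReal.ofReal (Real.exp (s ^ 2 / (2 * z))) :=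
        meas_ge_le_lintegral_div hmeas.aemeasurable
          (ENNReal.ofReal_pos.2 (Real.exp_pos _)).ne' ENNReal.ofReal_ne_top
    _ ≤ 1 / ENNReal.ofReal (Real.exp (s ^ 2 / (2 * z))) :=
        ENNReal.div_le_div_right (lintegral_exp_pathSum_sub_quadVar_le_one hξ hL h0 l n) _
    _ = ENNReal.ofReal (Real.exp (-(s ^ 2 / (2 * z)))) := by
        rw [one_div, ← ENNReal.ofReal_inv_of_pos (Real.exp_pos _), Real.exp_neg]

end SelfNormalized

section SecondMoments

lemma measureReal_lt_le_div {X : Type*} [MeasurableSpace X] {ν : Measure X} [IsFiniteMeasure ν]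
    {f : X → ℝ} (hf0 : ∀ x, 0 ≤ f x) (hf : Integrable f ν) {K t : ℝ} (ht : 0 < t)
    (hK : ∫ x, f x ∂ν ≤ K) : ν.real {x | t < f x} ≤ K / t := by
  rw [le_div_iff₀' ht]
  calc t * ν.real {x | t < f x} ≤ t * ν.real {x | t ≤ f x} :=
        mul_le_mul_of_nonneg_left (measureReal_mono fun x (hx : t < f x) => hx.le) ht.le
    _ ≤ K := (mul_meas_ge_le_integral_of_nonneg (Eventually.of_forall hf0) hf t).trans hK

lemma measureReal_lt_abs_le_div {X : Type*} [MeasurableSpace X] {ν : Measure X} [IsFiniteMeasure ν]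
    {f : X → ℝ} (hf : MemLp f 2 ν) {K t : ℝ} (ht : 0 < t) (hK : ∫ x, f x ^ 2 ∂ν ≤ K) :
    ν.real {x | t < |f x|} ≤ K / t ^ 2 := by
  have hset : {x | t < |f x|} = {x | t ^ 2 < f x ^ 2} := by
    ext x
    simp only [mem_ofPred_eq, sq_lt_sq, abs_of_pos ht]
  rw [hset]
  exact measureReal_lt_le_div (fun x => sq_nonneg _) hf.integrable_sq (by positivity) hK

lemma integral_sub_integral_sq {X : Type*} [MeasurableSpace X] {ν : Measure X}
    [IsProbabilityMeasure ν] {f : X → ℝ} (hf : MemLp f 2 ν) :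
    ∫ x, (f x - ∫ z, f z ∂ν) ^ 2 ∂ν = ∫ x, f x ^ 2 ∂ν - (∫ x, f x ∂ν) ^ 2 := by
  rw [← ProbabilityTheory.variance_eq_integral hf.aemeasurable,
    ProbabilityTheory.variance_eq_sub hf]
  rfl

lemma sq_integral_le_integral_sq {X : Type*} [MeasurableSpace X] {ν : Measure X}
    [IsProbabilityMeasure ν] {f : X → ℝ} (hf : MemLp f 2 ν) :
    (∫ x, f x ∂ν) ^ 2 ≤ ∫ x, f x ^ 2 ∂ν := by
  rw [← sub_nonneg, ← integral_sub_integral_sq hf]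
  exact integral_nonneg fun x => sq_nonneg _

variable {E F : Type*} [MeasurableSpace E] [MeasurableSpace F]

lemma memLp_integral_prod_right {ν : Measure F} [SFinite ν] {μ : Measure E} [IsProbabilityMeasure μ]
    {f : F × E → ℝ} (hf : MemLp f 2 (ν.prod μ)) : MemLp (fun y => ∫ x, f (y, x) ∂μ) 2 ν := by
  have hmeas := hf.aestronglyMeasurable.integral_prod_right'
  refine (memLp_two_iff_integrable_sq hmeas).2
    (hf.integrable_sq.integral_prod_left.mono' (hmeas.pow 2) ?_)
  filter_upwards [hf.integrable_sq.prod_right_ae, hf.aestronglyMeasurable.prodMk_left] with y hy hm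
  have hsection : MemLp (fun x => f (y, x)) 2 μ := (memLp_two_iff_integrable_sq hm).2 hy
  rw [Real.norm_of_nonneg (sq_nonneg _), ← sub_nonneg, ← integral_sub_integral_sq hsection]
  exact integral_nonneg fun x => sq_nonneg _

lemma integral_sub_integral_prod_right_sq_le {ν : Measure F} [SFinite ν] {μ : Measure E}
    [IsProbabilityMeasure μ] {f : F × E → ℝ} (hf : MemLp f 2 (ν.prod μ)) :
    ∫ p, (f p - ∫ x, f (p.1, x) ∂μ) ^ 2 ∂ν.prod μ ≤ ∫ p, f p ^ 2 ∂ν.prod μ := by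
  have hcentred : MemLp (fun p => f p - ∫ x, f (p.1, x) ∂μ) 2 (ν.prod μ) :=
    hf.sub ((memLp_integral_prod_right hf).comp_fst μ)
  rw [integral_prod _ hcentred.integrable_sq, integral_prod _ hf.integrable_sq]
  refine integral_mono_ae hcentred.integrable_sq.integral_prod_left
    hf.integrable_sq.integral_prod_left ?_
  filter_upwards [hf.integrable_sq.prod_right_ae, hf.aestronglyMeasurable.prodMk_left] with y hy hm
  have hsection : MemLp (fun x => f (y, x)) 2 μ := (memLp_two_iff_integrable_sq hm).2 hy
  have := integral_sub_integral_sq hsection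
  linarith [sq_nonneg (∫ x, f (y, x) ∂μ)]

variable {μ : Measure E} [IsProbabilityMeasure μ]

lemma memLp_sum_eval {q : ℝ≥0∞} {f : E → ℝ} (hf : MemLp f q μ) (n : ℕ) :
    MemLp (fun y : Fin n → E => ∑ j, f (y j)) q (sampleLaw μ n) :=
  memLp_finsetSum _ fun j _ => hf.comp_measurePreserving (measurePreserving_eval _ j)

lemma integral_sum_eval_sq {f : E → ℝ} (hf : MemLp f 2 μ) (n : ℕ) :
    ∫ y : Fin n → E, (∑ j, f (y j)) ^ 2 ∂sampleLaw μ n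
      = n * ProbabilityTheory.variance f μ + (n * ∫ x, f x ∂μ) ^ 2 := by
  have hmean : ∫ y : Fin n → E, ∑ j, f (y j) ∂sampleLaw μ n = n * ∫ x, f x ∂μ := by
    rw [integral_finsetSum _ fun j _ =>
      integrable_comp_eval (hf.integrable one_le_two)]
    simp [integral_comp_eval (μ := fun _ : Fin n => μ) hf.aestronglyMeasurable]
  have hvar : ProbabilityTheory.variance (fun y : Fin n → E => ∑ j, f (y j)) (sampleLaw μ n)
      = n * ProbabilityTheory.variance f μ := by
    have := ProbabilityTheory.variance_sum_pi (μ := fun _ : Fin n => μ) (X := fun _ => f)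
      fun _ => hf
    simpa [Finset.sum_fn] using this
  rw [ProbabilityTheory.variance_eq_integral (memLp_sum_eval hf n).aemeasurable] at hvar
  rw [← hmean, ← sub_eq_iff_eq_add, ← integral_sub_integral_sq (memLp_sum_eval hf n), hvar]

lemma integral_sum_eval_sq_of_integral_eq_zero {f : E → ℝ} (hf : MemLp f 2 μ)
    (h0 : ∫ x, f x ∂μ = 0) (n : ℕ) :
    ∫ y : Fin n → E, (∑ j, f (y j)) ^ 2 ∂sampleLaw μ n = n * ∫ x, f x ^ 2 ∂μ := by
  rw [integral_sum_eval_sq hf,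
    ProbabilityTheory.variance_of_integral_eq_zero hf.aemeasurable h0, h0]
  ring

lemma integral_sum_eval_sq_le {f : E → ℝ} (hf : MemLp f 2 μ) (n : ℕ) :
    ∫ y : Fin n → E, (∑ j, f (y j)) ^ 2 ∂sampleLaw μ n
      ≤ n * ∫ x, f x ^ 2 ∂μ + (n * ∫ x, f x ∂μ) ^ 2 := by
  rw [integral_sum_eval_sq hf]
  gcongr
  exact ProbabilityTheory.variance_le_expectation_sq hf.aestronglyMeasurable

lemma measurePreserving_eval_prod (μ : Measure E) [IsProbabilityMeasure μ] {m : ℕ} (j : Fin m) :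
    MeasurePreserving (fun p : (Fin m → E) × E => (p.1 j, p.2)) ((sampleLaw μ m).prod μ)
      (μ.prod μ) :=
  (measurePreserving_eval (fun _ : Fin m => μ) j).prod (MeasurePreserving.id μ)

lemma memLp_pastSum {q : ℝ≥0∞} {A : E → E → ℝ}
    (hA : MemLp (fun p : E × E => A p.1 p.2) q (μ.prod μ)) (m : ℕ) :
    MemLp (fun p : (Fin m → E) × E => pastSum A m p.1 p.2) q ((sampleLaw μ m).prod μ) :=
  memLp_finsetSum _ fun j _ => hA.comp_measurePreserving (measurePreserving_eval_prod μ j)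

lemma integral_pastSum {A : E → E → ℝ}
    (hA : Integrable (fun p : E × E => A p.1 p.2) (μ.prod μ)) (m : ℕ) :
    ∫ p : (Fin m → E) × E, pastSum A m p.1 p.2 ∂(sampleLaw μ m).prod μ
      = m * ∫ p, A p.1 p.2 ∂μ.prod μ := by
  have hterm (j : Fin m) :
      ∫ p : (Fin m → E) × E, A (p.1 j) p.2 ∂(sampleLaw μ m).prod μ = ∫ p, A p.1 p.2 ∂μ.prod μ := by
    have hmp := measurePreserving_eval_prod μ j
    rw [← hmp.map_eq, integral_map hmp.aemeasurable (hmp.map_eq ▸ hA.aestronglyMeasurable)]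
  have hint (j : Fin m) :
      Integrable (fun p : (Fin m → E) × E => A (p.1 j) p.2) ((sampleLaw μ m).prod μ) :=
    (measurePreserving_eval_prod μ j).integrable_comp_of_integrable hA
  simp only [pastSum]
  rw [integral_finsetSum _ fun j _ => hint j]
  simp [hterm]

lemma ae_integral_pastSum {A : E → E → ℝ}
    (hA : Integrable (fun p : E × E => A p.1 p.2) (μ.prod μ)) (m : ℕ) :
    ∀ᵐ y ∂sampleLaw μ m, ∫ x, pastSum A m y x ∂μ = ∑ j, ∫ x, A (y j) x ∂μ := by
  have hsections : ∀ᵐ y ∂sampleLaw μ m, ∀ j : Fin m, Integrable (A (y j)) μ :=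
    ae_all_iff.2 fun j =>
      (measurePreserving_eval (fun _ : Fin m => μ) j).quasiMeasurePreserving.ae hA.prod_right_ae
  filter_upwards [hsections] with y hy
  exact integral_finsetSum _ fun j _ => hy j

lemma integral_pastSum_sq {A : E → E → ℝ}
    (hA : MemLp (fun p : E × E => A p.1 p.2) 2 (μ.prod μ))
    (h0 : ∀ᵐ x ∂μ, ∫ u, A u x ∂μ = 0) (m : ℕ) :
    ∫ p : (Fin m → E) × E, pastSum A m p.1 p.2 ^ 2 ∂(sampleLaw μ m).prod μ
      = m * ∫ p, A p.1 p.2 ^ 2 ∂μ.prod μ := by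
  rw [integral_prod_symm _ (memLp_pastSum hA m).integrable_sq,
    integral_prod_symm _ hA.integrable_sq, ← integral_const_mul]
  refine integral_congr_ae ?_
  have hswap : MemLp (fun p : E × E => A p.2 p.1) 2 (μ.prod μ) :=
    hA.comp_measurePreserving Measure.measurePreserving_swap
  filter_upwards [h0, hswap.integrable_sq.prod_right_ae,
    hswap.aestronglyMeasurable.prodMk_left] with x hx hsq hmeas
  exact integral_sum_eval_sq_of_integral_eq_zero ((memLp_two_iff_integrable_sq hmeas).2 hsq) hx m

lemma sum_range_cast_le_sq (n : ℕ) : ∑ m ∈ Finset.range n, (m : ℝ) ≤ (n : ℝ) ^ 2 := by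
  calc ∑ m ∈ Finset.range n, (m : ℝ) ≤ ∑ _m ∈ Finset.range n, (n : ℝ) :=
        Finset.sum_le_sum fun m hm => Nat.cast_le.2 (Finset.mem_range.1 hm).le
    _ = (n : ℝ) ^ 2 := by simp [sq]

lemma integral_pairSum_le {A : E → E → ℝ}
    (hA : Integrable (fun p : E × E => A p.1 p.2) (μ.prod μ))
    (h0 : 0 ≤ ∫ p, A p.1 p.2 ∂μ.prod μ) (n : ℕ) :
    ∫ y, pairSum A n y ∂sampleLaw μ n ≤ n ^ 2 * ∫ p, A p.1 p.2 ∂μ.prod μ := by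
  have hpast (m : ℕ) : Integrable (fun p : (Fin m → E) × E => pastSum A m p.1 p.2)
      ((sampleLaw μ m).prod μ) :=
    memLp_one_iff_integrable.1 (memLp_pastSum (memLp_one_iff_integrable.2 hA) m)
  simp_rw [pairSum, integral_pathSum μ hpast, integral_pastSum hA, ← Finset.sum_mul]
  gcongr
  exact sum_range_cast_le_sq n

lemma integral_pairSum_sq_le {A : E → E → ℝ}
    (hA : MemLp (fun p : E × E => A p.1 p.2) 2 (μ.prod μ))
    (h1 : ∀ᵐ x ∂μ, ∫ u, A u x ∂μ = 0) (h2 : ∀ᵐ u ∂μ, ∫ x, A u x ∂μ = 0) (n : ℕ) :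
    ∫ y, pairSum A n y ^ 2 ∂sampleLaw μ n ≤ n ^ 2 * ∫ p, A p.1 p.2 ^ 2 ∂μ.prod μ := by
  have hcentred (m : ℕ) : ∀ᵐ y ∂sampleLaw μ m, ∫ x, pastSum A m y x ∂μ = 0 := by
    have hterms : ∀ᵐ y ∂sampleLaw μ m, ∀ j : Fin m, ∫ x, A (y j) x ∂μ = 0 :=
      ae_all_iff.2 fun j =>
        (measurePreserving_eval (fun _ : Fin m => μ) j).quasiMeasurePreserving.ae h2
    filter_upwards [ae_integral_pastSum (hA.integrable one_le_two) m, hterms] with y hy hy0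
    rw [hy, Finset.sum_eq_zero fun j _ => hy0 j]
  simp_rw [pairSum, integral_pathSum_sq μ (memLp_pastSum hA) hcentred, integral_pastSum_sq hA h1,
    ← Finset.sum_mul]
  gcongr
  exact sum_range_cast_le_sq n

lemma memLp_sub_integral {m : ℕ} {D : (Fin m → E) → E → ℝ}
    (hD : MemLp (fun p : (Fin m → E) × E => D p.1 p.2) 2 ((sampleLaw μ m).prod μ)) :
    MemLp (fun p : (Fin m → E) × E => D p.1 p.2 - ∫ z, D p.1 z ∂μ) 2 ((sampleLaw μ m).prod μ) :=
  hD.sub ((memLp_integral_prod_right hD).comp_fst μ)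

lemma integral_pathSum_sub_integral_sq_le {D : ∀ m : ℕ, (Fin m → E) → E → ℝ}
    (hD : ∀ m, MemLp (fun p : (Fin m → E) × E => D m p.1 p.2) 2 ((sampleLaw μ m).prod μ)) (n : ℕ) :
    ∫ y, pathSum (fun m y x => D m y x - ∫ z, D m y z ∂μ) n y ^ 2 ∂sampleLaw μ n
      ≤ ∑ m ∈ Finset.range n, ∫ p, D m p.1 p.2 ^ 2 ∂(sampleLaw μ m).prod μ := by
  rw [integral_pathSum_sq μ fun m => memLp_sub_integral (hD m)]
  · exact Finset.sum_le_sum fun m _ => integral_sub_integral_prod_right_sq_le (hD m)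
  · intro m
    filter_upwards [((hD m).integrable one_le_two).prod_right_ae] with y hy
    rw [integral_sub hy (integrable_const _), integral_const, probReal_univ, one_smul, sub_self]

lemma integral_pathSum_sq_le {D : ∀ m : ℕ, (Fin m → E) → E → ℝ}
    (hD : ∀ m, MemLp (fun p : (Fin m → E) × E => D m p.1 p.2) 2 ((sampleLaw μ m).prod μ)) (n : ℕ) :
    ∫ y, pathSum D n y ^ 2 ∂sampleLaw μ n
      ≤ n * ∑ m ∈ Finset.range n, ∫ p, D m p.1 p.2 ^ 2 ∂(sampleLaw μ m).prod μ := by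
  have hsq (m : ℕ) := (hD m).integrable_sq
  rw [← integral_pathSum (D := fun m y x => D m y x ^ 2) μ hsq, ← integral_const_mul]
  refine integral_mono (memLp_pathSum μ hD n).integrable_sq
    ((memLp_one_iff_integrable.1
      (memLp_pathSum μ (fun m => memLp_one_iff_integrable.2 (hsq m)) n)).const_mul _) fun y => ?_
  simpa [pathSum] using sq_sum_le_card_mul_sum_sq (s := Finset.univ)
    (f := fun i : Fin n => D i (Fin.take i i.2.le y) (y i))

end SecondMoments

section CanonicalKernels

variable {E F : Type*} [MeasurableSpace E] [MeasurableSpace F]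

lemma memLp_two_mul_prod {μ : Measure E} {ν : Measure F} {f : E → ℝ} {g : F → ℝ}
    (hf : MemLp f 2 μ) (hg : MemLp g 2 ν) :
    MemLp (fun p : E × F => f p.1 * g p.2) 2 (μ.prod ν) := by
  refine (memLp_two_iff_integrable_sq (f := fun p : E × F => f p.1 * g p.2)
    (hf.aestronglyMeasurable.comp_fst.mul hg.aestronglyMeasurable.comp_snd)).2 ?_
  simpa only [mul_pow] using hf.integrable_sq.mul_prod hg.integrable_sq

/-- The iterated kernel `(u, v) ↦ ∫ h(u, z) h(v, z) dμ(z)`, that is, the kernel of the square of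
the integral operator with symmetric kernel `h`. -/
def iterKernel (μ : Measure E) (h : E → E → ℝ) (u v : E) : ℝ := ∫ z, h u z * h v z ∂μ

/-- A symmetric kernel that is canonical (degenerate) for `μ`, together with an envelope `ρ` with
fourth moment at most `R` and bounds in terms of it. The parameters `s` and `b` bound the squared
Hilbert–Schmidt norms of the kernel and of its iterated kernel. -/
structure IsCanonicalKernel (μ : Measure E) (h : E → E → ℝ) (ρ : E → ℝ) (B a R s b : ℝ) :
    Prop where
  measurable : Measurable fun p : E × E => h p.1 p.2
  symm : ∀ x y, h x y = h y x
  integral_eq_zero : ∀ x, ∫ y, h x y ∂μ = 0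
  measurable_env : Measurable ρ
  env_nonneg : ∀ x, 0 ≤ ρ x
  integrable_env : Integrable (fun x => ρ x ^ 4) μ
  integral_env_le : ∫ x, ρ x ^ 4 ∂μ ≤ R
  bound_nonneg : 0 ≤ B
  abs_le : ∀ x y, |h x y| ≤ B * (ρ x * ρ y)
  section_nonneg : 0 ≤ a
  iterKernel_self_le : ∀ x, iterKernel μ h x x ≤ a * ρ x ^ 2
  integral_iterKernel_self_le : ∫ x, iterKernel μ h x x ∂μ ≤ s
  integral_iterKernel_sq_le : ∫ p, iterKernel μ h p.1 p.2 ^ 2 ∂μ.prod μ ≤ b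

lemma iterKernel_comm (μ : Measure E) (h : E → E → ℝ) (u v : E) :
    iterKernel μ h u v = iterKernel μ h v u := by
  simp only [iterKernel, mul_comm]

lemma iterKernel_self (μ : Measure E) (h : E → E → ℝ) (u : E) :
    iterKernel μ h u u = ∫ z, h u z ^ 2 ∂μ := by
  simp only [iterKernel, sq]

lemma iterKernel_self_nonneg (μ : Measure E) (h : E → E → ℝ) (u : E) :
    0 ≤ iterKernel μ h u u :=
  integral_nonneg fun z => mul_self_nonneg (h u z)

namespace IsCanonicalKernel

variable {μ : Measure E} {h : E → E → ℝ} {ρ : E → ℝ} {B a R s b : ℝ}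

lemma memLp_env_sq (K : IsCanonicalKernel μ h ρ B a R s b) : MemLp (fun x => ρ x ^ 2) 2 μ := by
  refine (memLp_two_iff_integrable_sq (K.measurable_env.pow_const 2).aestronglyMeasurable).2 ?_
  simpa only [← pow_mul] using K.integrable_env

lemma sq_le (K : IsCanonicalKernel μ h ρ B a R s b) (x y : E) :
    h x y ^ 2 ≤ B ^ 2 * (ρ x ^ 2 * ρ y ^ 2) := by
  simpa only [sq_abs, mul_pow] using pow_le_pow_left₀ (abs_nonneg _) (K.abs_le x y) 2

lemma abs_pow_three_le (K : IsCanonicalKernel μ h ρ B a R s b) (x y : E) :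
    |h x y| ^ 3 ≤ B / 2 * (ρ x ^ 2 * h x y ^ 2 + ρ y ^ 2 * h y x ^ 2) := by
  have hamgm : |h x y| ≤ B / 2 * (ρ x ^ 2 + ρ y ^ 2) := by
    nlinarith [K.abs_le x y, mul_nonneg K.bound_nonneg (sq_nonneg (ρ x - ρ y))]
  calc |h x y| ^ 3 = |h x y| * h x y ^ 2 := by rw [pow_succ', sq_abs]
    _ ≤ B / 2 * (ρ x ^ 2 + ρ y ^ 2) * h x y ^ 2 :=
        mul_le_mul_of_nonneg_right hamgm (sq_nonneg _)
    _ = B / 2 * (ρ x ^ 2 * h x y ^ 2 + ρ y ^ 2 * h y x ^ 2) := by rw [K.symm y x]; ring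

lemma memLp_sq (K : IsCanonicalKernel μ h ρ B a R s b) :
    MemLp (fun p : E × E => h p.1 p.2 ^ 2) 2 (μ.prod μ) := by
  refine ((memLp_two_mul_prod K.memLp_env_sq K.memLp_env_sq).const_mul (B ^ 2)).mono'
    (K.measurable.pow_const 2).aestronglyMeasurable (Eventually.of_forall fun p => ?_)
  rw [Real.norm_of_nonneg (sq_nonneg _)]
  exact K.sq_le p.1 p.2

variable [IsProbabilityMeasure μ]

lemma memLp_env (K : IsCanonicalKernel μ h ρ B a R s b) : MemLp ρ 2 μ :=
  (memLp_two_iff_integrable_sq K.measurable_env.aestronglyMeasurable).2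
    (K.memLp_env_sq.integrable one_le_two)

lemma memLp_section (K : IsCanonicalKernel μ h ρ B a R s b) (x : E) : MemLp (h x) 2 μ := by
  refine (K.memLp_env.const_mul (B * ρ x)).mono'
    (K.measurable.comp measurable_prodMk_left).aestronglyMeasurable
    (Eventually.of_forall fun y => ?_)
  rw [Real.norm_eq_abs, mul_assoc]
  exact K.abs_le x y

lemma memLp_section_sq (K : IsCanonicalKernel μ h ρ B a R s b) (x : E) :
    MemLp (fun y => h x y ^ 2) 2 μ := by
  refine (K.memLp_env_sq.const_mul (B ^ 2 * ρ x ^ 2)).mono'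
    ((K.memLp_section x).aestronglyMeasurable.pow 2) (Eventually.of_forall fun y => ?_)
  rw [Real.norm_of_nonneg (sq_nonneg _), mul_assoc]
  exact K.sq_le x y

lemma memLp (K : IsCanonicalKernel μ h ρ B a R s b) :
    MemLp (fun p : E × E => h p.1 p.2) 2 (μ.prod μ) :=
  (memLp_two_iff_integrable_sq K.measurable.aestronglyMeasurable).2
    (K.memLp_sq.integrable one_le_two)

lemma memLp_iterKernel_self (K : IsCanonicalKernel μ h ρ B a R s b) :
    MemLp (fun u => iterKernel μ h u u) 2 μ := by
  simpa only [iterKernel_self] using memLp_integral_prod_right K.memLp_sq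

lemma memLp_iterKernel (K : IsCanonicalKernel μ h ρ B a R s b) :
    MemLp (fun p : E × E => iterKernel μ h p.1 p.2) 2 (μ.prod μ) := by
  have hmeas : Measurable fun q : (E × E) × E => h q.1.1 q.2 * h q.1.2 q.2 :=
    (K.measurable.comp (f := fun q : (E × E) × E => (q.1.1, q.2)) (by fun_prop)).mul
      (K.measurable.comp (f := fun q : (E × E) × E => (q.1.2, q.2)) (by fun_prop))
  have hbound (q : (E × E) × E) : ‖h q.1.1 q.2 * h q.1.2 q.2‖
      ≤ B ^ 2 * (ρ q.1.1 * ρ q.1.2 * ρ q.2 ^ 2) := by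
    have hprod := mul_le_mul (K.abs_le q.1.1 q.2) (K.abs_le q.1.2 q.2) (abs_nonneg _)
      (mul_nonneg K.bound_nonneg (mul_nonneg (K.env_nonneg _) (K.env_nonneg _)))
    rw [Real.norm_eq_abs, abs_mul]
    linarith
  exact memLp_integral_prod_right (f := fun q : (E × E) × E => h q.1.1 q.2 * h q.1.2 q.2)
    (((memLp_two_mul_prod (memLp_two_mul_prod K.memLp_env K.memLp_env) K.memLp_env_sq).const_mul
      (B ^ 2)).mono' hmeas.aestronglyMeasurable (Eventually.of_forall hbound))

lemma integral_iterKernel_eq_zero (K : IsCanonicalKernel μ h ρ B a R s b) (u : E) :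
    ∫ v, iterKernel μ h u v ∂μ = 0 := by
  have hint : Integrable (fun p : E × E => h u p.2 * h p.1 p.2) (μ.prod μ) :=
    ((K.memLp_section u).comp_snd μ).integrable_mul K.memLp
  simp_rw [iterKernel]
  rw [integral_integral_swap hint]
  simp_rw [K.symm _ (_ : E), integral_const_mul]
  simp [K.integral_eq_zero]

lemma integral_iterKernel_self_sq_le (K : IsCanonicalKernel μ h ρ B a R s b) :
    ∫ u, iterKernel μ h u u ^ 2 ∂μ ≤ a ^ 2 * R := by
  calc ∫ u, iterKernel μ h u u ^ 2 ∂μ ≤ ∫ u, a ^ 2 * ρ u ^ 4 ∂μ := by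
        refine integral_mono K.memLp_iterKernel_self.integrable_sq
          (K.integrable_env.const_mul _) fun u => ?_
        calc iterKernel μ h u u ^ 2 ≤ (a * ρ u ^ 2) ^ 2 :=
              pow_le_pow_left₀ (iterKernel_self_nonneg μ h u) (K.iterKernel_self_le u) 2
          _ = a ^ 2 * ρ u ^ 4 := by ring
    _ ≤ a ^ 2 * R := by
        rw [integral_const_mul]
        exact mul_le_mul_of_nonneg_left K.integral_env_le (sq_nonneg a)

lemma integrable_env_sq_mul_sq (K : IsCanonicalKernel μ h ρ B a R s b) :
    Integrable (fun p : E × E => ρ p.1 ^ 2 * h p.1 p.2 ^ 2) (μ.prod μ) :=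
  (K.memLp_env_sq.comp_fst μ).integrable_mul K.memLp_sq

lemma integral_env_sq_mul_sq_le (K : IsCanonicalKernel μ h ρ B a R s b) :
    ∫ p : E × E, ρ p.1 ^ 2 * h p.1 p.2 ^ 2 ∂μ.prod μ ≤ a * R := by
  rw [integral_prod _ K.integrable_env_sq_mul_sq]
  simp_rw [integral_const_mul, ← iterKernel_self]
  calc ∫ x, ρ x ^ 2 * iterKernel μ h x x ∂μ ≤ ∫ x, a * ρ x ^ 4 ∂μ := by
        refine integral_mono (K.memLp_env_sq.integrable_mul K.memLp_iterKernel_self)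
          (K.integrable_env.const_mul _) fun x => ?_
        calc ρ x ^ 2 * iterKernel μ h x x ≤ ρ x ^ 2 * (a * ρ x ^ 2) :=
              mul_le_mul_of_nonneg_left (K.iterKernel_self_le x) (sq_nonneg _)
          _ = a * ρ x ^ 4 := by ring
    _ ≤ a * R := by
        rw [integral_const_mul]
        exact mul_le_mul_of_nonneg_left K.integral_env_le K.section_nonneg

lemma integrable_abs_pow_three (K : IsCanonicalKernel μ h ρ B a R s b) :
    Integrable (fun p : E × E => |h p.1 p.2| ^ 3) (μ.prod μ) := by
  have hint := K.integrable_env_sq_mul_sq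
  refine ((hint.fun_add hint.swap).const_mul (B / 2)).mono'
    (K.measurable.abs.pow_const 3).aestronglyMeasurable (Eventually.of_forall fun p => ?_)
  rw [Real.norm_of_nonneg (by positivity)]
  exact K.abs_pow_three_le p.1 p.2

lemma integral_abs_pow_three_le (K : IsCanonicalKernel μ h ρ B a R s b) :
    ∫ p : E × E, |h p.1 p.2| ^ 3 ∂μ.prod μ ≤ B * a * R := by
  have hint := K.integrable_env_sq_mul_sq
  have hint' : Integrable (fun p : E × E => ρ p.2 ^ 2 * h p.2 p.1 ^ 2) (μ.prod μ) := hint.swap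
  have hswap : ∫ p : E × E, ρ p.2 ^ 2 * h p.2 p.1 ^ 2 ∂μ.prod μ
      = ∫ p : E × E, ρ p.1 ^ 2 * h p.1 p.2 ^ 2 ∂μ.prod μ :=
    integral_prod_swap fun p : E × E => ρ p.1 ^ 2 * h p.1 p.2 ^ 2
  refine (integral_mono K.integrable_abs_pow_three ((hint.fun_add hint').const_mul (B / 2))
    fun p => K.abs_pow_three_le p.1 p.2).trans ?_
  rw [integral_const_mul, integral_add hint hint', hswap]
  linarith [mul_le_mul_of_nonneg_left K.integral_env_sq_mul_sq_le K.bound_nonneg]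

end IsCanonicalKernel

end CanonicalKernels

section Truncation

/-- The square `z²` truncated at level `T`, growing only linearly for `|z| > T`. -/
def truncSq (T z : ℝ) : ℝ := min (z ^ 2) (T * |z|)

lemma measurable_truncSq (T : ℝ) : Measurable (truncSq T) := by
  unfold truncSq
  fun_prop

lemma truncSq_le_sq (T z : ℝ) : truncSq T z ≤ z ^ 2 := min_le_left _ _

lemma truncSq_nonneg {T : ℝ} (hT : 0 ≤ T) (z : ℝ) : 0 ≤ truncSq T z :=
  le_min (sq_nonneg z) (mul_nonneg hT (abs_nonneg z))

lemma truncSq_sq_le {T : ℝ} (hT : 0 ≤ T) (z : ℝ) : truncSq T z ^ 2 ≤ T * |z| ^ 3 := by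
  calc truncSq T z ^ 2 = truncSq T z * truncSq T z := sq _
    _ ≤ T * |z| * |z| ^ 2 := mul_le_mul (min_le_right _ _) ((truncSq_le_sq T z).trans_eq
        (sq_abs z).symm) (truncSq_nonneg hT z) (by positivity)
    _ = T * |z| ^ 3 := by ring

lemma sq_sub_truncSq_le {T : ℝ} (hT : 0 < T) (z : ℝ) : z ^ 2 - truncSq T z ≤ |z| ^ 3 / T := by
  rw [le_div_iff₀ hT, truncSq, ← sq_abs]
  rcases le_total |z| T with hz | hz
  · rw [min_eq_left (by nlinarith [abs_nonneg z]), sub_self, zero_mul]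
    positivity
  · rw [min_eq_right (by nlinarith [abs_nonneg z])]
    nlinarith [pow_nonneg (abs_nonneg z) 2, mul_nonneg hT.le (mul_nonneg hT.le (abs_nonneg z)),
      mul_le_mul_of_nonneg_left hz (pow_nonneg (abs_nonneg z) 2)]

end Truncation

section VariationControl

variable {E : Type*} [MeasurableSpace E]

/-- The squared increment `(∑_{j<m} h(y_j, x))²` with the truncated-off part of its diagonal
`∑_{j<m} h(y_j, x)²` removed. -/
def truncIncr (h : E → E → ℝ) (T : ℝ) (m : ℕ) (y : Fin m → E) (x : E) : ℝ :=
  pastSum h m y x ^ 2 - pastSum (fun u v => h u v ^ 2 - truncSq T (h u v)) m y x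

lemma truncIncr_eq (h : E → E → ℝ) (T : ℝ) (m : ℕ) (y : Fin m → E) (x : E) :
    truncIncr h T m y x = 2 * pairSum (fun u v => h u x * h v x) m y
      + ∑ j, truncSq T (h (y j) x) := by
  have hexpand : pastSum h m y x ^ 2
      = ∑ j, h (y j) x ^ 2 + 2 * pairSum (fun u v => h u x * h v x) m y := by
    simp only [pastSum, sq, Finset.sum_mul_sum]
    exact sum_sum_eq_pairSum (A := fun u v => h u x * h v x) (fun u v => mul_comm _ _) m y
  rw [truncIncr, hexpand, pastSum, Finset.sum_sub_distrib]
  ring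

namespace IsCanonicalKernel

variable {μ : Measure E} {h : E → E → ℝ} {ρ : E → ℝ} {B a R s b : ℝ}

lemma memLp_truncSq (K : IsCanonicalKernel μ h ρ B a R s b) {T : ℝ} (hT : 0 ≤ T) :
    MemLp (fun p : E × E => truncSq T (h p.1 p.2)) 2 (μ.prod μ) := by
  refine K.memLp_sq.mono' ((measurable_truncSq T).comp K.measurable).aestronglyMeasurable
    (Eventually.of_forall fun p => ?_)
  rw [Real.norm_of_nonneg (truncSq_nonneg hT _)]
  exact truncSq_le_sq T _

variable [IsProbabilityMeasure μ]

lemma memLp_truncSq_section (K : IsCanonicalKernel μ h ρ B a R s b) {T : ℝ} (hT : 0 ≤ T) (x : E) :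
    MemLp (fun y => truncSq T (h x y)) 2 μ := by
  refine (K.memLp_section_sq x).mono' ((measurable_truncSq T).comp_aemeasurable
    (K.memLp_section x).aemeasurable).aestronglyMeasurable (Eventually.of_forall fun y => ?_)
  rw [Real.norm_of_nonneg (truncSq_nonneg hT _)]
  exact truncSq_le_sq T _

lemma integral_truncSq_le (K : IsCanonicalKernel μ h ρ B a R s b) {T : ℝ} (hT : 0 ≤ T) (x : E) :
    ∫ y, truncSq T (h x y) ∂μ ≤ iterKernel μ h x x := by
  rw [iterKernel_self]
  exact integral_mono ((K.memLp_truncSq_section hT x).integrable one_le_two)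
    (K.memLp_section x).integrable_sq fun y => truncSq_le_sq T _

lemma integral_truncSq_sq_le (K : IsCanonicalKernel μ h ρ B a R s b) {T : ℝ} (hT : 0 ≤ T) :
    ∫ p : E × E, truncSq T (h p.1 p.2) ^ 2 ∂μ.prod μ ≤ T * (B * a * R) := by
  calc ∫ p : E × E, truncSq T (h p.1 p.2) ^ 2 ∂μ.prod μ
      ≤ ∫ p : E × E, T * |h p.1 p.2| ^ 3 ∂μ.prod μ :=
        integral_mono (K.memLp_truncSq hT).integrable_sq
          (K.integrable_abs_pow_three.const_mul T) fun p => truncSq_sq_le hT _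
    _ ≤ T * (B * a * R) := by
        rw [integral_const_mul]
        exact mul_le_mul_of_nonneg_left K.integral_abs_pow_three_le hT

lemma memLp_truncIncr (K : IsCanonicalKernel μ h ρ B a R s b) {T : ℝ} (hT : 0 ≤ T) (m : ℕ) :
    MemLp (fun p : (Fin m → E) × E => truncIncr h T m p.1 p.2) 2 ((sampleLaw μ m).prod μ) := by
  have hsum : MemLp (fun p : (Fin m → E) × E => pastSum h m p.1 p.2 ^ 2) 2
      ((sampleLaw μ m).prod μ) := by
    refine ((memLp_pastSum (A := fun u v => h u v ^ 2) K.memLp_sq m).const_mul (m : ℝ)).mono'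
      ((memLp_pastSum K.memLp m).aestronglyMeasurable.pow 2) (Eventually.of_forall fun p => ?_)
    rw [Real.norm_of_nonneg (sq_nonneg _)]
    simpa [pastSum] using sq_sum_le_card_mul_sum_sq (s := Finset.univ) (f := fun j => h (p.1 j) p.2)
  exact hsum.sub (memLp_pastSum (A := fun u v => h u v ^ 2 - truncSq T (h u v))
    (K.memLp_sq.sub (K.memLp_truncSq hT)) m)

/-- For a fixed last observation `x`, the off-diagonal part of the squared increment is a
`U`-statistic with canonical kernel `(u, v) ↦ h(u, x) h(v, x)`. -/
lemma integral_truncIncr_sq_section_le (K : IsCanonicalKernel μ h ρ B a R s b) {T : ℝ}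
    (hT : 0 ≤ T) (m : ℕ) (x : E) :
    ∫ y, truncIncr h T m y x ^ 2 ∂sampleLaw μ m
      ≤ 2 * m * ∫ u, truncSq T (h x u) ^ 2 ∂μ + 10 * m ^ 2 * iterKernel μ h x x ^ 2 := by
  have hsec : MemLp (fun u => h u x) 2 μ := by simpa only [K.symm _ x] using K.memLp_section x
  have hsec0 : ∫ u, h u x ∂μ = 0 := by simpa only [K.symm _ x] using K.integral_eq_zero x
  have hA : MemLp (fun p : E × E => h p.1 x * h p.2 x) 2 (μ.prod μ) := memLp_two_mul_prod hsec hsec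
  have hoff : ∫ y, pairSum (fun u v => h u x * h v x) m y ^ 2 ∂sampleLaw μ m
      ≤ m ^ 2 * iterKernel μ h x x ^ 2 := by
    refine (integral_pairSum_sq_le (A := fun u v => h u x * h v x) hA
      (Eventually.of_forall fun v => by rw [integral_mul_const, hsec0, zero_mul])
      (Eventually.of_forall fun u => by rw [integral_const_mul, hsec0, mul_zero]) m).trans_eq ?_
    simp_rw [mul_pow]
    rw [integral_prod_mul (fun u => h u x ^ 2) fun v => h v x ^ 2, iterKernel_self, ← sq]
    simp_rw [K.symm x]
  have hχ := K.memLp_truncSq_section hT x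
  have hdiag : ∫ y : Fin m → E, (∑ j, truncSq T (h (y j) x)) ^ 2 ∂sampleLaw μ m
      ≤ m * ∫ u, truncSq T (h x u) ^ 2 ∂μ + (m * iterKernel μ h x x) ^ 2 := by
    simp_rw [K.symm _ x]
    refine (integral_sum_eval_sq_le hχ m).trans ?_
    have hnonneg : 0 ≤ ∫ u, truncSq T (h x u) ∂μ :=
      integral_nonneg fun u => truncSq_nonneg hT (h x u)
    gcongr
    exact K.integral_truncSq_le hT x
  have hoffI := (memLp_pathSum μ (memLp_pastSum (A := fun u v => h u x * h v x) hA)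
    m).integrable_sq.const_mul 8
  have hdiagI := (memLp_sum_eval hχ m).integrable_sq.const_mul 2
  simp_rw [K.symm x] at hdiagI
  calc ∫ y, truncIncr h T m y x ^ 2 ∂sampleLaw μ m
      ≤ ∫ y, (8 * pairSum (fun u v => h u x * h v x) m y ^ 2
          + 2 * (∑ j, truncSq T (h (y j) x)) ^ 2) ∂sampleLaw μ m := by
        refine integral_mono_of_nonneg (Eventually.of_forall fun y => sq_nonneg _)
          (hoffI.fun_add hdiagI) (Eventually.of_forall fun y => ?_)
        simp only [truncIncr_eq]
        nlinarith [sq_nonneg (2 * pairSum (fun u v => h u x * h v x) m y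
          - ∑ j, truncSq T (h (y j) x))]
    _ ≤ 8 * (m ^ 2 * iterKernel μ h x x ^ 2)
          + 2 * (m * ∫ u, truncSq T (h x u) ^ 2 ∂μ + (m * iterKernel μ h x x) ^ 2) := by
        rw [integral_add hoffI hdiagI, integral_const_mul, integral_const_mul]
        gcongr
    _ = _ := by ring

lemma integral_truncIncr_sq_le (K : IsCanonicalKernel μ h ρ B a R s b) {T : ℝ} (hT : 0 ≤ T)
    (m : ℕ) :
    ∫ p : (Fin m → E) × E, truncIncr h T m p.1 p.2 ^ 2 ∂(sampleLaw μ m).prod μ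
      ≤ 2 * m * (T * (B * a * R)) + 10 * m ^ 2 * (a ^ 2 * R) := by
  have hJ := (K.memLp_truncIncr hT m).integrable_sq
  have hχ := (K.memLp_truncSq hT).integrable_sq.integral_prod_left.const_mul (2 * m : ℝ)
  have hη := K.memLp_iterKernel_self.integrable_sq.const_mul (10 * m ^ 2 : ℝ)
  calc ∫ p : (Fin m → E) × E, truncIncr h T m p.1 p.2 ^ 2 ∂(sampleLaw μ m).prod μ
      ≤ ∫ x, (2 * m * ∫ u, truncSq T (h x u) ^ 2 ∂μ
          + 10 * m ^ 2 * iterKernel μ h x x ^ 2) ∂μ := by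
        rw [integral_prod_symm _ hJ]
        exact integral_mono hJ.integral_prod_right (hχ.fun_add hη)
          (K.integral_truncIncr_sq_section_le hT m)
    _ = 2 * m * ∫ p : E × E, truncSq T (h p.1 p.2) ^ 2 ∂μ.prod μ
          + 10 * m ^ 2 * ∫ x, iterKernel μ h x x ^ 2 ∂μ := by
        rw [integral_add hχ hη, integral_const_mul, integral_const_mul,
          integral_prod _ (K.memLp_truncSq hT).integrable_sq]
    _ ≤ _ := by
        gcongr
        · exact K.integral_truncSq_sq_le hT
        · exact K.integral_iterKernel_self_sq_le

end IsCanonicalKernel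

end VariationControl

section VariationTail

variable {E : Type*}

lemma pathSum_sum_le {f : E → ℝ} (hf : ∀ x, 0 ≤ f x) (n : ℕ) (y : Fin n → E) :
    pathSum (fun _ y _ => ∑ j, f (y j)) n y ≤ n * ∑ j, f (y j) := by
  have hpast (i : Fin n) : ∑ j, f (Fin.take i i.2.le y j) ≤ ∑ j, f (y j) := by
    calc ∑ j, f (Fin.take i i.2.le y j)
        = ∑ j ∈ Finset.univ.map (Fin.castLEEmb i.2.le), f (y j) := by rw [Finset.sum_map]; rfl
      _ ≤ ∑ j, f (y j) := Finset.sum_le_univ_sum_of_nonneg fun j => hf (y j)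
  simpa [pathSum] using Finset.sum_le_card_nsmul Finset.univ _ _ fun i _ => hpast i

namespace IsCanonicalKernel

variable [MeasurableSpace E] {μ : Measure E} [IsProbabilityMeasure μ] {h : E → E → ℝ}
  {ρ : E → ℝ} {B a R s b : ℝ}

lemma memLp_pastSum_section (K : IsCanonicalKernel μ h ρ B a R s b) {m : ℕ} (y : Fin m → E) :
    MemLp (pastSum h m y) 2 μ :=
  memLp_finsetSum _ fun j _ => K.memLp_section (y j)

lemma integral_pastSum_section (K : IsCanonicalKernel μ h ρ B a R s b) {m : ℕ} (y : Fin m → E) :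
    ∫ x, pastSum h m y x ∂μ = 0 := by
  simp only [pastSum]
  rw [integral_finsetSum _ fun j _ => (K.memLp_section (y j)).integrable one_le_two]
  exact Finset.sum_eq_zero fun j _ => K.integral_eq_zero (y j)

lemma integral_pastSum_section_sq (K : IsCanonicalKernel μ h ρ B a R s b) {m : ℕ}
    (y : Fin m → E) :
    ∫ x, pastSum h m y x ^ 2 ∂μ
      = ∑ j, iterKernel μ h (y j) (y j) + 2 * pairSum (iterKernel μ h) m y := by
  have hint (i j : Fin m) : Integrable (fun x => h (y i) x * h (y j) x) μ :=
    (K.memLp_section (y i)).integrable_mul (K.memLp_section (y j))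
  rw [← sum_sum_eq_pairSum (iterKernel_comm μ h)]
  simp only [pastSum, sq, Finset.sum_mul_sum]
  rw [integral_finsetSum _ fun i _ => integrable_finsetSum _ fun j _ => hint i j]
  exact Finset.sum_congr rfl fun i _ => integral_finsetSum _ fun j _ => hint i j

lemma integral_truncIncr_section_le (K : IsCanonicalKernel μ h ρ B a R s b) {T : ℝ}
    (hT : 0 ≤ T) {m : ℕ} (y : Fin m → E) :
    ∫ x, truncIncr h T m y x ∂μ ≤ ∫ x, pastSum h m y x ^ 2 ∂μ := by
  have hsq := (K.memLp_pastSum_section y).integrable_sq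
  have hcut : Integrable (pastSum (fun u v => h u v ^ 2 - truncSq T (h u v)) m y) μ :=
    integrable_finsetSum _ fun j _ => (K.memLp_section (y j)).integrable_sq.sub
      ((K.memLp_truncSq_section hT (y j)).integrable one_le_two)
  refine integral_mono (hsq.sub hcut) hsq fun x => sub_le_self _ ?_
  exact Finset.sum_nonneg fun j _ => sub_nonneg.2 (truncSq_le_sq T _)

lemma quadVar_le (K : IsCanonicalKernel μ h ρ B a R s b) {T : ℝ} (hT : 0 ≤ T) (n : ℕ)
    (y : Fin n → E) :
    quadVar μ (pastSum h) n y
      ≤ pairSum (fun u v => h u v ^ 2 - truncSq T (h u v)) n y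
        + pathSum (fun m y x => truncIncr h T m y x - ∫ z, truncIncr h T m y z ∂μ) n y
        + 2 * (n * ∑ j, iterKernel μ h (y j) (y j))
        + 4 * pathSum (fun m y _ => pairSum (iterKernel μ h) m y) n y := by
  have hincr (m : ℕ) (y : Fin m → E) (x : E) :
      pastSum h m y x ^ 2 + ∫ x, pastSum h m y x ^ 2 ∂μ
        ≤ pastSum (fun u v => h u v ^ 2 - truncSq T (h u v)) m y x
          + (truncIncr h T m y x - ∫ z, truncIncr h T m y z ∂μ)
          + 2 * ∑ j, iterKernel μ h (y j) (y j) + 4 * pairSum (iterKernel μ h) m y := by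
    have hdef : truncIncr h T m y x = pastSum h m y x ^ 2
      - pastSum (fun u v => h u v ^ 2 - truncSq T (h u v)) m y x := rfl
    linarith [K.integral_truncIncr_section_le hT y, K.integral_pastSum_section_sq y]
  have hdiag := pathSum_sum_le (iterKernel_self_nonneg μ h) n y
  have hsum := Finset.sum_le_sum fun (i : Fin n) (_ : i ∈ Finset.univ) =>
    hincr i (Fin.take i i.2.le y) (y i)
  simp only [Finset.sum_add_distrib, ← Finset.mul_sum] at hsum
  simp only [quadVar, pairSum, pathSum] at hdiag hsum ⊢
  simp only [Finset.sum_add_distrib] at hsum ⊢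
  linarith

lemma measureReal_pairSum_truncated_gt_le (K : IsCanonicalKernel μ h ρ B a R s b) {T t : ℝ}
    (hT : 0 < T) (ht : 0 < t) (n : ℕ) :
    (sampleLaw μ n).real {y | t < pairSum (fun u v => h u v ^ 2 - truncSq T (h u v)) n y}
      ≤ n ^ 2 * (B * a * R / T) / t := by
  have hint : Integrable (fun p : E × E => h p.1 p.2 ^ 2 - truncSq T (h p.1 p.2)) (μ.prod μ) :=
    K.memLp.integrable_sq.sub ((K.memLp_truncSq hT.le).integrable one_le_two)
  have hpos (u v : E) : 0 ≤ h u v ^ 2 - truncSq T (h u v) := sub_nonneg.2 (truncSq_le_sq T _)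
  refine measureReal_lt_le_div
    (fun y => Finset.sum_nonneg fun i _ => Finset.sum_nonneg fun j _ => hpos _ _)
    (memLp_one_iff_integrable.1 (memLp_pathSum μ (memLp_pastSum
      (A := fun u v => h u v ^ 2 - truncSq T (h u v)) (memLp_one_iff_integrable.2 hint)) n)) ht ?_
  refine (integral_pairSum_le (A := fun u v => h u v ^ 2 - truncSq T (h u v)) hint
    (integral_nonneg fun p => hpos _ _) n).trans ?_
  gcongr
  calc ∫ p : E × E, (h p.1 p.2 ^ 2 - truncSq T (h p.1 p.2)) ∂μ.prod μ
      ≤ ∫ p : E × E, |h p.1 p.2| ^ 3 / T ∂μ.prod μ :=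
        integral_mono hint (K.integrable_abs_pow_three.div_const T) fun p => sq_sub_truncSq_le hT _
    _ ≤ B * a * R / T := by
        rw [integral_div]
        exact div_le_div_of_nonneg_right K.integral_abs_pow_three_le hT.le

lemma measureReal_pathSum_truncIncr_gt_le (K : IsCanonicalKernel μ h ρ B a R s b) {T t : ℝ}
    (hT : 0 ≤ T) (ht : 0 < t) (n : ℕ) :
    (sampleLaw μ n).real
        {y | t < |pathSum (fun m y x => truncIncr h T m y x - ∫ z, truncIncr h T m y z ∂μ) n y|}
      ≤ (2 * n ^ 2 * (T * (B * a * R)) + 10 * n ^ 3 * (a ^ 2 * R)) / t ^ 2 := by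
  refine measureReal_lt_abs_le_div
    (memLp_pathSum μ (fun m => memLp_sub_integral (K.memLp_truncIncr hT m)) n) ht
    ((integral_pathSum_sub_integral_sq_le (K.memLp_truncIncr hT) n).trans ?_)
  have hcube : 0 ≤ T * (B * a * R) :=
    (integral_nonneg fun _ => sq_nonneg _).trans (K.integral_truncSq_sq_le hT)
  have hself : 0 ≤ a ^ 2 * R :=
    (integral_nonneg fun _ => sq_nonneg _).trans K.integral_iterKernel_self_sq_le
  calc ∑ m ∈ Finset.range n,
        ∫ p : (Fin m → E) × E, truncIncr h T m p.1 p.2 ^ 2 ∂(sampleLaw μ m).prod μ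
      ≤ ∑ _m ∈ Finset.range n, (2 * n * (T * (B * a * R)) + 10 * n ^ 2 * (a ^ 2 * R)) := by
        refine Finset.sum_le_sum fun m hm => (K.integral_truncIncr_sq_le hT m).trans ?_
        have hmn : (m : ℝ) ≤ n := by exact_mod_cast (Finset.mem_range.1 hm).le
        gcongr
    _ = _ := by
        rw [Finset.sum_const, Finset.card_range, nsmul_eq_mul]
        ring

lemma measureReal_sum_iterKernel_self_gt_le (K : IsCanonicalKernel μ h ρ B a R s b) {t : ℝ}
    (ht : 0 < t) (n : ℕ) :
    (sampleLaw μ n).real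
        {y | t < |∑ j, (iterKernel μ h (y j) (y j) - ∫ x, iterKernel μ h x x ∂μ)|}
      ≤ n * (a ^ 2 * R) / t ^ 2 := by
  have hη := K.memLp_iterKernel_self
  have hcentred := hη.sub (memLp_const (∫ x, iterKernel μ h x x ∂μ))
  refine measureReal_lt_abs_le_div (memLp_sum_eval hcentred n) ht ?_
  have hmean : ∫ x, (iterKernel μ h x x - ∫ z, iterKernel μ h z z ∂μ) ∂μ = 0 := by
    rw [integral_sub (hη.integrable one_le_two) (integrable_const _)]
    simp
  refine (integral_sum_eval_sq_of_integral_eq_zero hcentred hmean n).trans_le ?_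
  refine mul_le_mul_of_nonneg_left ?_ n.cast_nonneg
  refine le_trans ?_ K.integral_iterKernel_self_sq_le
  refine (integral_sub_integral_sq hη).trans_le (sub_le_self _ (sq_nonneg _))

lemma measureReal_pathSum_pairSum_iterKernel_gt_le (K : IsCanonicalKernel μ h ρ B a R s b)
    {t : ℝ} (ht : 0 < t) (n : ℕ) :
    (sampleLaw μ n).real {y | t < |pathSum (fun m y _ => pairSum (iterKernel μ h) m y) n y|}
      ≤ n ^ 4 * b / t ^ 2 := by
  have hpair (m : ℕ) : MemLp (pairSum (iterKernel μ h) m) 2 (sampleLaw μ m) :=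
    memLp_pathSum μ (memLp_pastSum K.memLp_iterKernel) m
  have hcentred : ∀ᵐ u ∂μ, ∫ v, iterKernel μ h u v ∂μ = 0 :=
    Eventually.of_forall K.integral_iterKernel_eq_zero
  have hcentred' : ∀ᵐ v ∂μ, ∫ u, iterKernel μ h u v ∂μ = 0 := by
    simpa only [iterKernel_comm μ h _ (_ : E)] using hcentred
  refine measureReal_lt_abs_le_div
    (memLp_pathSum μ (fun m => (hpair m).comp_fst μ) n) ht
    ((integral_pathSum_sq_le (fun m => (hpair m).comp_fst μ) n).trans ?_)
  calc (n : ℝ) * ∑ m ∈ Finset.range n, ∫ p : (Fin m → E) × E,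
        pairSum (iterKernel μ h) m p.1 ^ 2 ∂(sampleLaw μ m).prod μ
      ≤ n * ∑ _m ∈ Finset.range n, (n : ℝ) ^ 2 * b := by
        gcongr with m hm
        rw [integral_fun_fst fun y => pairSum (iterKernel μ h) m y ^ 2, probReal_univ, one_smul]
        have hmn : (m : ℝ) ≤ n := by exact_mod_cast (Finset.mem_range.1 hm).le
        calc _ ≤ (m : ℝ) ^ 2 * ∫ p, iterKernel μ h p.1 p.2 ^ 2 ∂μ.prod μ :=
              integral_pairSum_sq_le K.memLp_iterKernel hcentred' hcentred m
          _ ≤ (n : ℝ) ^ 2 * b := by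
              gcongr
              exact K.integral_iterKernel_sq_le
    _ = n ^ 4 * b := by
        rw [Finset.sum_const, Finset.card_range, nsmul_eq_mul]
        ring

lemma measureReal_quadVar_gt_le (K : IsCanonicalKernel μ h ρ B a R s b)
    {T t₁ t₂ t₃ t₄ : ℝ} (hT : 0 < T) (h₁ : 0 < t₁) (h₂ : 0 < t₂) (h₃ : 0 < t₃) (h₄ : 0 < t₄)
    (n : ℕ) :
    (sampleLaw μ n).real
        {y | t₁ + t₂ + 2 * (n * (n * s + t₃)) + 4 * t₄ < quadVar μ (pastSum h) n y}
      ≤ n ^ 2 * (B * a * R / T) / t₁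
        + (2 * n ^ 2 * (T * (B * a * R)) + 10 * n ^ 3 * (a ^ 2 * R)) / t₂ ^ 2
        + n * (a ^ 2 * R) / t₃ ^ 2 + n ^ 4 * b / t₄ ^ 2 := by
  have hcover : {y | t₁ + t₂ + 2 * (n * (n * s + t₃)) + 4 * t₄ < quadVar μ (pastSum h) n y} ⊆
      {y | t₁ < pairSum (fun u v => h u v ^ 2 - truncSq T (h u v)) n y}
      ∪ {y | t₂ < |pathSum (fun m y x => truncIncr h T m y x
          - ∫ z, truncIncr h T m y z ∂μ) n y|}
      ∪ {y | t₃ < |∑ j, (iterKernel μ h (y j) (y j) - ∫ x, iterKernel μ h x x ∂μ)|}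
      ∪ {y | t₄ < |pathSum (fun m y _ => pairSum (iterKernel μ h) m y) n y|} := by
    intro y hy
    by_contra hout
    simp only [mem_union, mem_ofPred_eq, not_or, not_lt] at hy hout
    obtain ⟨⟨⟨hy₁, hy₂⟩, hy₃⟩, hy₄⟩ := hout
    have hdiag : ∑ j, iterKernel μ h (y j) (y j) ≤ n * s + t₃ := by
      rw [Finset.sum_sub_distrib, Finset.sum_const, Finset.card_univ, Fintype.card_fin,
        nsmul_eq_mul] at hy₃
      have hmean := mul_le_mul_of_nonneg_left K.integral_iterKernel_self_le n.cast_nonneg (α := ℝ)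
      linarith [le_abs_self (∑ j, iterKernel μ h (y j) (y j) - n * ∫ x, iterKernel μ h x x ∂μ)]
    have hdiag' := mul_le_mul_of_nonneg_left hdiag n.cast_nonneg (α := ℝ)
    linarith [K.quadVar_le hT.le n y, (le_abs_self _).trans hy₂, (le_abs_self _).trans hy₄]
  refine (measureReal_mono hcover).trans ?_
  refine (measureReal_union_le _ _).trans (add_le_add ?_
    (K.measureReal_pathSum_pairSum_iterKernel_gt_le h₄ n))
  refine (measureReal_union_le _ _).trans (add_le_add ?_
    (K.measureReal_sum_iterKernel_self_gt_le h₃ n))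
  exact (measureReal_union_le _ _).trans (add_le_add
    (K.measureReal_pairSum_truncated_gt_le hT h₁ n)
    (K.measureReal_pathSum_truncIncr_gt_le hT.le h₂ n))

lemma measureReal_pairSum_le_neg_le (K : IsCanonicalKernel μ h ρ B a R s b) {t z : ℝ}
    (ht : 0 ≤ t) (hz : 0 < z) (n : ℕ) :
    (sampleLaw μ n).real {y | pairSum h n y ≤ -t}
      ≤ Real.exp (-(t ^ 2 / (2 * z)))
        + (sampleLaw μ n).real {y | z < quadVar μ (pastSum h) n y} := by
  have hmeas (m : ℕ) : Measurable fun p : (Fin m → E) × E => pastSum h m p.1 p.2 :=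
    Finset.measurable_fun_sum _ fun j _ =>
      K.measurable.comp (f := fun p : (Fin m → E) × E => (p.1 j, p.2)) (by fun_prop)
  have hcover : {y | pairSum h n y ≤ -t} ⊆
      {y | pairSum h n y ≤ -t ∧ quadVar μ (pastSum h) n y ≤ z}
      ∪ {y | z < quadVar μ (pastSum h) n y} := fun y hy =>
    (le_or_gt (quadVar μ (pastSum h) n y) z).imp (fun hle => ⟨hy, hle⟩) id
  exact (measureReal_mono hcover).trans ((measureReal_union_le _ _).trans (add_le_add_left
    (measureReal_pathSum_le_neg_quadVar_le hmeas (fun _ => K.memLp_pastSum_section)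
      (fun _ => K.integral_pastSum_section) ht hz n) _))

end IsCanonicalKernel

end VariationTail

section CanonicalDeviation

variable {E : Type*} [MeasurableSpace E] {μ : Measure E} [IsProbabilityMeasure μ]
  {h : E → E → ℝ} {ρ : E → ℝ} {B a R s b A X Z β : ℝ} {n : ℕ}

lemma mul_le_deviation_sq {N l : ℝ} (hN : 2 ≤ N) (hA : 0 ≤ A) (hX : 0 ≤ X) (hZ : 0 ≤ Z)
    (hl : 1 ≤ l) :
    l ^ 2 * (2 * (6 * N ^ 2 * A ^ 2 + 1152 * N * A * X + 12 * N ^ 2 * A * Z))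
      ≤ (N * (N - 1) / 2
        * (18 * A * l / N + 138986 * X * l ^ 3 / N ^ 2 + 48 * Z * l ^ 2 / N)) ^ 2 := by
  have hlower : l / 4 * (18 * N * A + 138986 * X + 48 * N * Z) ≤ N * (N - 1) / 2
      * (18 * A * l / N + 138986 * X * l ^ 3 / N ^ 2 + 48 * Z * l ^ 2 / N) := by
    calc l / 4 * (18 * N * A + 138986 * X + 48 * N * Z)
        = N / 4 * (18 * A * l + 138986 * X * l / N + 48 * Z * l) := by field_simp
      _ ≤ (N - 1) / 2 * (18 * A * l + 138986 * X * l ^ 3 / N + 48 * Z * l ^ 2) := by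
          refine mul_le_mul (by linarith) ?_ (by positivity) (by linarith)
          gcongr
          · exact le_self_pow₀ hl three_ne_zero
          · exact le_self_pow₀ hl two_ne_zero
      _ = _ := by field_simp
  calc l ^ 2 * (2 * (6 * N ^ 2 * A ^ 2 + 1152 * N * A * X + 12 * N ^ 2 * A * Z))
      ≤ l ^ 2 * (2 * (6 * N ^ 2 * A ^ 2 + 1152 * N * A * X + 12 * N ^ 2 * A * Z))
        + l ^ 2 * (33 / 4 * N ^ 2 * A ^ 2 + 310414 * N * A * X + N * A * X / 2
          + 84 * N ^ 2 * A * Z + (138986 * X + 48 * N * Z) ^ 2 / 16) :=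
        le_add_of_nonneg_right (by positivity)
    _ = (l / 4 * (18 * N * A + 138986 * X + 48 * N * Z)) ^ 2 := by ring
    _ ≤ _ := pow_le_pow_left₀ (by positivity) hlower 2

namespace IsCanonicalKernel

lemma measureReal_quadVar_gt_le_half (K : IsCanonicalKernel μ h ρ B a R s b) (hn : 0 < n)
    (hA : 0 < A) (hX : 0 < X) (hZ : 0 < Z) (hβ : 0 < β) (hβ1 : β ≤ 1)
    (hcube : B * a * R ≤ 16 * β * X * A ^ 2) (hself : a ^ 2 * R ≤ 16 * β * X * A ^ 3)
    (hs : s ≤ A ^ 2) (hb : b ≤ (β * Z * A) ^ 2) :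
    (sampleLaw μ n).real
        {y | 6 * n ^ 2 * A ^ 2 + 1152 * n * A * X + 12 * n ^ 2 * A * Z < quadVar μ (pastSum h) n y}
      ≤ β / 2 := by
  have hN : (0 : ℝ) < n := Nat.cast_pos.2 hn
  have htail := K.measureReal_quadVar_gt_le (T := 128 * X) (t₁ := n ^ 2 * A ^ 2)
    (t₂ := n ^ 2 * A ^ 2 + 1024 * n * A * X) (t₃ := n * A ^ 2 + 64 * A * X)
    (t₄ := 3 * n ^ 2 * A * Z) (by positivity) (by positivity) (by positivity) (by positivity)
    (by positivity) n
  generalize (n : ℝ) = N at hN htail ⊢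
  have hthreshold : N ^ 2 * A ^ 2 + (N ^ 2 * A ^ 2 + 1024 * N * A * X)
      + 2 * (N * (N * s + (N * A ^ 2 + 64 * A * X))) + 4 * (3 * N ^ 2 * A * Z)
        ≤ 6 * N ^ 2 * A ^ 2 + 1152 * N * A * X + 12 * N ^ 2 * A * Z := by
    nlinarith [mul_le_mul_of_nonneg_left hs (sq_nonneg N)]
  have htrunc : N ^ 2 * (B * a * R / (128 * X)) / (N ^ 2 * A ^ 2) ≤ β / 8 := by
    rw [div_le_iff₀ (by positivity)]
    calc N ^ 2 * (B * a * R / (128 * X)) ≤ N ^ 2 * (16 * β * X * A ^ 2 / (128 * X)) := by gcongr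
      _ = β / 8 * (N ^ 2 * A ^ 2) := by field_simp; norm_num
  have hincr : (2 * N ^ 2 * (128 * X * (B * a * R)) + 10 * N ^ 3 * (a ^ 2 * R))
      / (N ^ 2 * A ^ 2 + 1024 * N * A * X) ^ 2 ≤ β / 8 := by
    rw [div_le_iff₀ (by positivity)]
    calc 2 * N ^ 2 * (128 * X * (B * a * R)) + 10 * N ^ 3 * (a ^ 2 * R)
        ≤ 2 * N ^ 2 * (128 * X * (16 * β * X * A ^ 2)) + 10 * N ^ 3 * (16 * β * X * A ^ 3) := by
          gcongr
      _ ≤ 2 * N ^ 2 * (128 * X * (16 * β * X * A ^ 2)) + 10 * N ^ 3 * (16 * β * X * A ^ 3)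
          + (β / 8 * (N ^ 2 * A ^ 2) ^ 2 + 96 * N ^ 3 * β * X * A ^ 3
            + 126976 * N ^ 2 * β * X ^ 2 * A ^ 2) := le_add_of_nonneg_right (by positivity)
      _ = β / 8 * (N ^ 2 * A ^ 2 + 1024 * N * A * X) ^ 2 := by ring
  have hdiag : N * (a ^ 2 * R) / (N * A ^ 2 + 64 * A * X) ^ 2 ≤ β / 8 := by
    rw [div_le_iff₀ (by positivity)]
    calc N * (a ^ 2 * R) ≤ N * (16 * β * X * A ^ 3) := by gcongr
      _ ≤ N * (16 * β * X * A ^ 3) + β / 8 * ((N * A ^ 2) ^ 2 + (64 * A * X) ^ 2) :=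
          le_add_of_nonneg_right (by positivity)
      _ = β / 8 * (N * A ^ 2 + 64 * A * X) ^ 2 := by ring
  have hiter : N ^ 4 * b / (3 * N ^ 2 * A * Z) ^ 2 ≤ β / 8 := by
    rw [div_le_iff₀ (by positivity)]
    calc N ^ 4 * b ≤ N ^ 4 * (β * Z * A) ^ 2 := by gcongr
      _ = β * β * (N ^ 4 * Z ^ 2 * A ^ 2) := by ring
      _ ≤ β * (9 / 8) * (N ^ 4 * Z ^ 2 * A ^ 2) := by gcongr; linarith
      _ = β / 8 * (3 * N ^ 2 * A * Z) ^ 2 := by ring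
  refine (measureReal_mono fun y hy => ?_).trans (htail.trans ?_)
  · exact hthreshold.trans_lt hy
  · linarith

/-- The term with `X` comes from the fourth moment of the envelope, the one with `Z` from the
iterated kernel. -/
lemma measureReal_pairSum_le_neg_le_of_log_le (K : IsCanonicalKernel μ h ρ B a R s b)
    (hn : 2 ≤ n) (hA : 0 < A) (hX : 0 < X) (hZ : 0 < Z) (hβ : 0 < β) (hβ1 : β ≤ 1)
    (hcube : B * a * R ≤ 16 * β * X * A ^ 2) (hself : a ^ 2 * R ≤ 16 * β * X * A ^ 3)
    (hs : s ≤ A ^ 2) (hb : b ≤ (β * Z * A) ^ 2) {l : ℝ} (hl : 1 ≤ l)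
    (hlβ : Real.log (4 / β) ≤ l ^ 2) :
    (sampleLaw μ n).real {y | pairSum h n y
        ≤ -(n * (n - 1) / 2 * (18 * A * l / n + 138986 * X * l ^ 3 / n ^ 2 + 48 * Z * l ^ 2 / n))}
      ≤ 3 * β / 4 := by
  have hN : (2 : ℝ) ≤ n := by exact_mod_cast hn
  have hlevel := mul_le_deviation_sq hN hA.le hX.le hZ.le hl
  set t := (n : ℝ) * (n - 1) / 2
    * (18 * A * l / n + 138986 * X * l ^ 3 / n ^ 2 + 48 * Z * l ^ 2 / n)
  set z := 6 * (n : ℝ) ^ 2 * A ^ 2 + 1152 * n * A * X + 12 * n ^ 2 * A * Z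
  have ht0 : 0 ≤ t := mul_nonneg (by nlinarith) (by positivity)
  have hz0 : 0 < z := by positivity
  have hexp : Real.exp (-(t ^ 2 / (2 * z))) ≤ β / 4 := by
    calc Real.exp (-(t ^ 2 / (2 * z))) ≤ Real.exp (-Real.log (4 / β)) := by
          gcongr
          exact hlβ.trans ((le_div_iff₀ (by positivity)).2 hlevel)
      _ = β / 4 := by rw [Real.exp_neg, Real.exp_log (by positivity), inv_div]
  linarith [K.measureReal_pairSum_le_neg_le ht0 hz0 n,
    K.measureReal_quadVar_gt_le_half (two_pos.trans_le hn) hA hX hZ hβ hβ1 hcube hself hs hb]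

end IsCanonicalKernel

end CanonicalDeviation

section Plancherel

open FourierTransform SchwartzMap
open scoped ContDiff

variable {V E : Type*} [NormedAddCommGroup V] [InnerProductSpace ℝ V] [FiniteDimensional ℝ V]
  [MeasurableSpace V] [BorelSpace V] [NormedAddCommGroup E] [InnerProductSpace ℂ E]
  [CompleteSpace E]

theorem integral_schwartz_smul_fourier {f : V → E} (hf : Integrable f) (g : 𝓢(V, ℂ)) :
    ∫ ξ, g ξ • 𝓕 f ξ = ∫ x, (𝓕 g : 𝓢(V, ℂ)) x • f x := by
  have h := VectorFourier.integral_fourierIntegral_smul_eq_flip (L := innerₗ V)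
    Real.continuous_fourierChar continuous_inner (g.integrable (μ := volume)) hf
  rw [flip_innerₗ] at h
  exact h.symm

theorem integral_schwartz_smul_fourier_toLp {f : V → E} (hf : MemLp f 2) (g : 𝓢(V, ℂ)) :
    ∫ ξ, g ξ • (𝓕 hf.toLp : Lp E 2 (volume : Measure V)) ξ =
      ∫ x, (𝓕 g : 𝓢(V, ℂ)) x • f x := by
  rw [← Lp.toTemperedDistribution_apply (μ := volume) (𝓕 hf.toLp) g,
    ← Lp.fourier_toTemperedDistribution_eq, TemperedDistribution.fourier_apply,
    Lp.toTemperedDistribution_apply (μ := volume)]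
  refine integral_congr_ae ?_
  filter_upwards [hf.coeFn_toLp] with x hx
  rw [hx]

theorem fourier_ae_eq_fourier_toLp {f : V → E} (hf1 : Integrable f) (hf : MemLp f 2) :
    𝓕 f =ᵐ[volume] (𝓕 hf.toLp : Lp E 2 (volume : Measure V)) := by
  have hcont : Continuous (𝓕 f) := VectorFourier.fourierIntegral_continuous
    Real.continuous_fourierChar (innerSL ℝ).continuous₂ hf1
  refine ae_eq_of_integral_contDiff_smul_eq hcont.locallyIntegrable
    ((Lp.memLp _).locallyIntegrable one_le_two) fun g hg hgc => ?_
  have hgc' : HasCompactSupport (Complex.ofRealCLM ∘ g) := hgc.comp_left rfl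
  have hg' : ContDiff ℝ ∞ (Complex.ofRealCLM ∘ g) := by fun_prop
  have h := (integral_schwartz_smul_fourier hf1 (hgc'.toSchwartzMap hg')).trans
    (integral_schwartz_smul_fourier_toLp hf (hgc'.toSchwartzMap hg')).symm
  simpa using h

theorem eLpNorm_fourier_eq {f : V → E} (hf1 : Integrable f) (hf : MemLp f 2) :
    eLpNorm (𝓕 f) 2 = eLpNorm f 2 := by
  rw [eLpNorm_congr_ae (fourier_ae_eq_fourier_toLp hf1 hf), ← eLpNorm_congr_ae hf.coeFn_toLp,
    ← Lp.enorm_def, ← Lp.enorm_def, ← ofReal_norm, Lp.norm_fourier_eq, ofReal_norm]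

end Plancherel

section BesselFamilies

open scoped ComplexConjugate

variable {E T : Type*} [MeasurableSpace E] [MeasurableSpace T]

lemma integral_norm_sub_integral_sq_le {H : Type*} [NormedAddCommGroup H] [InnerProductSpace ℝ H]
    [CompleteSpace H] {μ : Measure E} [IsProbabilityMeasure μ] {X : E → H} (hX : MemLp X 2 μ) :
    ∫ y, ‖X y - ∫ z, X z ∂μ‖ ^ 2 ∂μ ≤ ∫ y, ‖X y‖ ^ 2 ∂μ := by
  set m := ∫ z, X z ∂μ
  have hXi : Integrable X μ := hX.integrable one_le_two
  have hsq : Integrable (fun y => ‖X y‖ ^ 2) μ := hX.norm.integrable_sq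
  have hinner : Integrable (fun y => 2 * inner ℝ m (X y)) μ := (hXi.const_inner m).const_mul 2
  have hexpand : ∫ y, ‖X y - m‖ ^ 2 ∂μ = ∫ y, ‖X y‖ ^ 2 ∂μ - ‖m‖ ^ 2 := by
    simp only [norm_sub_sq_real, real_inner_comm m]
    rw [integral_add (f := fun y => ‖X y‖ ^ 2 - 2 * inner ℝ m (X y)) (hsq.sub hinner)
      (integrable_const _), integral_sub hsq hinner, integral_const_mul, integral_inner hXi,
      real_inner_self_eq_norm_sq]
    simp only [integral_const, probReal_univ, one_smul]
    ring
  rw [hexpand]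
  linarith [sq_nonneg ‖m‖]

lemma add_pow_four_le (x y : ℝ) : (x + y) ^ 4 ≤ 8 * x ^ 4 + 8 * y ^ 4 := by
  nlinarith [add_sq_le (a := x) (b := y), add_sq_le (a := x ^ 2) (b := y ^ 2),
    pow_le_pow_left₀ (sq_nonneg (x + y)) (add_sq_le (a := x) (b := y)) 2]

/-- The integral operator with kernel `v`; its transpose is `integralOp μ (flip v)`. -/
def integralOp (ν : Measure T) (v : E → T → ℂ) (a : T → ℂ) (y : E) : ℂ := ∫ t, v y t * a t ∂ν

lemma integral_mul_integralOp {μ : Measure E} {ν : Measure T} [SFinite μ] [SFinite ν]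
    {v : E → T → ℂ} {g : E → ℂ} {a : T → ℂ}
    (h : Integrable (fun p : E × T => v p.1 p.2 * (g p.1 * a p.2)) (μ.prod ν)) :
    ∫ y, g y * integralOp ν v a y ∂μ = ∫ t, integralOp μ (flip v) g t * a t ∂ν := by
  calc ∫ y, g y * integralOp ν v a y ∂μ = ∫ y, ∫ t, v y t * (g y * a t) ∂ν ∂μ := by
        simp only [integralOp, ← integral_const_mul, mul_left_comm]
    _ = ∫ t, ∫ y, v y t * (g y * a t) ∂μ ∂ν := integral_integral_swap h
    _ = ∫ t, integralOp μ (flip v) g t * a t ∂ν := by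
        simp only [integralOp, flip, ← integral_mul_const, mul_assoc]

/-- The means of the functions `v(·, t)`. -/
def familyMean (μ : Measure E) (v : E → T → ℂ) (t : T) : ℂ := ∫ y, v y t ∂μ

/-- The family `v(·, t)` with the means subtracted. -/
def centered (μ : Measure E) (v : E → T → ℂ) (y : E) : T → ℂ := v y - familyMean μ v

/-- A family `v(·, t)` of functions in `L²(μ)` such that the integral operator `L²(ν) → L²(μ)` with
kernel `v` has squared norm at most `κ`, together with an envelope `r` with fourth moment at most
`W`; the squared norms of the members of the family are at most `V`. -/
structure IsBesselFamily (μ : Measure E) (ν : Measure T) (v : E → T → ℂ) (r : E → ℝ)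
    (κ V W : ℝ) : Prop where
  measurable : Measurable fun p : E × T => v p.1 p.2
  measurable_env : Measurable r
  norm_le : ∀ y t, ‖v y t‖ ≤ r y
  env_nonneg : ∀ y, 0 ≤ r y
  integrable_env : Integrable (fun y => r y ^ 4) μ
  integral_env_le : ∫ y, r y ^ 4 ∂μ ≤ W
  integral_norm_sq_le : ∀ t, ∫ y, ‖v y t‖ ^ 2 ∂μ ≤ V
  bessel_pos : 0 < κ
  integral_integralOp_sq_le : ∀ a : T → ℂ, MemLp a 2 ν →
    ∫ y, ‖integralOp ν v a y‖ ^ 2 ∂μ ≤ κ * ∫ t, ‖a t‖ ^ 2 ∂ν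

namespace IsBesselFamily

variable {μ : Measure E} {ν : Measure T} {v : E → T → ℂ} {r : E → ℝ} {κ V W : ℝ}

lemma memLp_env_sq (B : IsBesselFamily μ ν v r κ V W) : MemLp (fun y => r y ^ 2) 2 μ := by
  refine (memLp_two_iff_integrable_sq (B.measurable_env.pow_const 2).aestronglyMeasurable).2 ?_
  simpa only [← pow_mul] using B.integrable_env

lemma integrable_mul (B : IsBesselFamily μ ν v r κ V W) {a : T → ℂ} (ha : Integrable a ν) (y : E) :
    Integrable (fun t => v y t * a t) ν :=
  ha.bdd_mul (B.measurable.comp measurable_prodMk_left).aestronglyMeasurable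
    (Eventually.of_forall (B.norm_le y))

variable [IsProbabilityMeasure μ]

lemma memLp_env (B : IsBesselFamily μ ν v r κ V W) : MemLp r 2 μ :=
  (memLp_two_iff_integrable_sq B.measurable_env.aestronglyMeasurable).2
    (B.memLp_env_sq.integrable one_le_two)

lemma memLp_two (B : IsBesselFamily μ ν v r κ V W) (t : T) : MemLp (fun y => v y t) 2 μ :=
  B.memLp_env.mono' (B.measurable.comp measurable_prodMk_right).aestronglyMeasurable
    (Eventually.of_forall fun y => B.norm_le y t)

lemma integral_env_pow_four_le (B : IsBesselFamily μ ν v r κ V W) : (∫ y, r y ∂μ) ^ 4 ≤ W := by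
  calc (∫ y, r y ∂μ) ^ 4 = ((∫ y, r y ∂μ) ^ 2) ^ 2 := by rw [← pow_mul]
    _ ≤ (∫ y, r y ^ 2 ∂μ) ^ 2 :=
        pow_le_pow_left₀ (sq_nonneg _) (sq_integral_le_integral_sq B.memLp_env) 2
    _ ≤ ∫ y, (r y ^ 2) ^ 2 ∂μ := sq_integral_le_integral_sq B.memLp_env_sq
    _ ≤ W := by simpa only [← pow_mul] using B.integral_env_le

lemma integrable_prod (B : IsBesselFamily μ ν v r κ V W) {g : E → ℂ} (hg : MemLp g 2 μ)
    {a : T → ℂ} (ha : Integrable a ν) :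
    Integrable (fun p : E × T => v p.1 p.2 * (g p.1 * a p.2)) (μ.prod ν) := by
  refine ((B.memLp_env.integrable_mul hg.norm).mul_prod ha.norm).mono'
    (B.measurable.aestronglyMeasurable.mul
      (hg.aestronglyMeasurable.comp_fst.mul ha.aestronglyMeasurable.comp_snd))
    (Eventually.of_forall fun p => ?_)
  rw [norm_mul, norm_mul, Pi.mul_apply, mul_assoc]
  exact mul_le_mul_of_nonneg_right (B.norm_le _ _) (by positivity)

lemma memLp_integralOp [SFinite ν] (B : IsBesselFamily μ ν v r κ V W) {a : T → ℂ}
    (ha : Integrable a ν) : MemLp (integralOp ν v a) 2 μ := by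
  refine (B.memLp_env.mul_const (∫ t, ‖a t‖ ∂ν)).mono'
    (B.measurable.aestronglyMeasurable.mul ha.aestronglyMeasurable.comp_snd).integral_prod_right'
    (Eventually.of_forall fun y => ?_)
  rw [← integral_const_mul]
  refine norm_integral_le_of_norm_le (ha.norm.const_mul _) (Eventually.of_forall fun t => ?_)
  rw [norm_mul]
  exact mul_le_mul_of_nonneg_right (B.norm_le y t) (norm_nonneg _)

lemma memLp_transpose [IsFiniteMeasure ν] (B : IsBesselFamily μ ν v r κ V W) {g : E → ℂ}
    (hg : MemLp g 2 μ) : MemLp (integralOp μ (flip v) g) 2 ν := by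
  have hmeas : AEStronglyMeasurable (integralOp μ (flip v) g) ν :=
    (B.measurable.comp measurable_swap).aestronglyMeasurable.mul
      hg.aestronglyMeasurable.comp_snd |>.integral_prod_right'
  refine MemLp.of_bound hmeas (∫ y, r y * ‖g y‖ ∂μ) (Eventually.of_forall fun t => ?_)
  refine norm_integral_le_of_norm_le (B.memLp_env.integrable_mul hg.norm)
    (Eventually.of_forall fun y => ?_)
  rw [norm_mul]
  exact mul_le_mul_of_nonneg_right (B.norm_le y t) (norm_nonneg _)

lemma integral_norm_transpose_sq_le [IsFiniteMeasure ν] (B : IsBesselFamily μ ν v r κ V W)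
    {g : E → ℂ} (hg : MemLp g 2 μ) :
    ∫ t, ‖integralOp μ (flip v) g t‖ ^ 2 ∂ν ≤ κ * ∫ y, ‖g y‖ ^ 2 ∂μ := by
  set b := integralOp μ (flip v) g
  have hb : MemLp (star b) 2 ν := (B.memLp_transpose hg).star
  have hbi : Integrable (star b) ν := hb.integrable one_le_two
  have hop := B.memLp_integralOp hbi
  have hκ := B.bessel_pos
  have hduality : ((∫ t, ‖b t‖ ^ 2 ∂ν : ℝ) : ℂ) = ∫ y, g y * integralOp ν v (star b) y ∂μ := by
    rw [integral_mul_integralOp (B.integrable_prod hg hbi), ← integral_complex_ofReal]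
    simp only [Pi.star_apply, RCLike.star_def, Complex.mul_conj', Complex.ofReal_pow, b]
  have hamgm : ∫ t, ‖b t‖ ^ 2 ∂ν ≤ ∫ y, (κ / 2 * ‖g y‖ ^ 2
      + (2 * κ)⁻¹ * ‖integralOp ν v (star b) y‖ ^ 2) ∂μ := by
    rw [← Complex.norm_of_nonneg (integral_nonneg fun t => sq_nonneg ‖b t‖), hduality]
    refine norm_integral_le_of_norm_le ((hg.norm.integrable_sq.const_mul _).fun_add
      (hop.norm.integrable_sq.const_mul _)) (Eventually.of_forall fun y => ?_)
    rw [norm_mul, ← sub_nonneg]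
    have hsq : κ / 2 * ‖g y‖ ^ 2 + (2 * κ)⁻¹ * ‖integralOp ν v (star b) y‖ ^ 2
        - ‖g y‖ * ‖integralOp ν v (star b) y‖
        = (2 * κ)⁻¹ * (κ * ‖g y‖ - ‖integralOp ν v (star b) y‖) ^ 2 := by
      field_simp
      ring
    rw [hsq]
    positivity
  have hbessel := B.integral_integralOp_sq_le (star b) hb
  simp only [Pi.star_apply, norm_star] at hbessel
  rw [integral_add (hg.norm.integrable_sq.const_mul _) (hop.norm.integrable_sq.const_mul _),
    integral_const_mul, integral_const_mul] at hamgm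
  have hhalf := mul_le_mul_of_nonneg_left hbessel (inv_nonneg.2 (by positivity : 0 ≤ 2 * κ))
  rw [← mul_assoc, show (2 * κ)⁻¹ * κ = 1 / 2 by field_simp] at hhalf
  linarith

lemma integral_integralOp [SFinite ν] (B : IsBesselFamily μ ν v r κ V W) {a : T → ℂ}
    (ha : Integrable a ν) :
    ∫ y, integralOp ν v a y ∂μ = ∫ t, (∫ y, v y t ∂μ) * a t ∂ν := by
  have h := integral_mul_integralOp (v := v) (g := fun _ => 1) (a := a)
    (B.integrable_prod (memLp_const 1) ha)
  simpa only [integralOp, flip, one_mul, mul_one] using h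

lemma integralOp_centered [SFinite ν] (B : IsBesselFamily μ ν v r κ V W) {a : T → ℂ}
    (ha : Integrable a ν) (y : E) : integralOp ν (centered μ v) a y
      = integralOp ν v a y - ∫ z, integralOp ν v a z ∂μ := by
  have hmean : Integrable (fun t => (∫ z, v z t ∂μ) * a t) ν := by
    have hint : Integrable (fun p : E × T => v p.1 p.2 * a p.2) (μ.prod ν) := by
      simpa only [one_mul] using B.integrable_prod (memLp_const (1 : ℂ)) ha
    simpa only [integral_mul_const] using hint.integral_prod_right
  rw [B.integral_integralOp ha]
  simp only [integralOp, centered, familyMean, Pi.sub_apply, sub_mul]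
  exact integral_sub (B.integrable_mul ha y) hmean

lemma integrable_env_add_const_pow_four (B : IsBesselFamily μ ν v r κ V W) (M : ℝ) :
    Integrable (fun y => (r y + M) ^ 4) μ := by
  refine ((B.integrable_env.const_mul 8).fun_add (integrable_const (8 * M ^ 4))).mono'
    ((B.measurable_env.add_const M).pow_const 4).aestronglyMeasurable
    (Eventually.of_forall fun y => ?_)
  rw [Real.norm_of_nonneg (by positivity)]
  exact add_pow_four_le (r y) M

lemma center [IsFiniteMeasure ν] (B : IsBesselFamily μ ν v r κ V W) :
    IsBesselFamily μ ν (centered μ v) (fun y => r y + ∫ z, r z ∂μ) κ V (16 * W) where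
  measurable := B.measurable.sub <| (StronglyMeasurable.integral_prod_left'
    B.measurable.stronglyMeasurable).measurable.comp measurable_snd
  measurable_env := B.measurable_env.add_const _
  norm_le y t := (norm_sub_le _ _).trans <| add_le_add (B.norm_le y t) <|
    norm_integral_le_of_norm_le (B.memLp_env.integrable one_le_two)
      (Eventually.of_forall fun z => B.norm_le z t)
  env_nonneg y := add_nonneg (B.env_nonneg y) (integral_nonneg B.env_nonneg)
  integrable_env := B.integrable_env_add_const_pow_four _
  integral_env_le := by
    set M := ∫ z, r z ∂μ
    calc ∫ y, (r y + M) ^ 4 ∂μ ≤ ∫ y, (8 * r y ^ 4 + 8 * M ^ 4) ∂μ :=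
          integral_mono (B.integrable_env_add_const_pow_four M)
            ((B.integrable_env.const_mul 8).fun_add (integrable_const _))
            fun y => add_pow_four_le (r y) M
      _ = 8 * ∫ y, r y ^ 4 ∂μ + 8 * M ^ 4 := by
          rw [integral_add (B.integrable_env.const_mul 8) (integrable_const _),
            integral_const_mul, integral_const, probReal_univ, one_smul]
      _ ≤ 16 * W := by linarith [B.integral_env_le, B.integral_env_pow_four_le]
  integral_norm_sq_le t :=
    (integral_norm_sub_integral_sq_le (B.memLp_two t)).trans (B.integral_norm_sq_le t)
  bessel_pos := B.bessel_pos
  integral_integralOp_sq_le a ha := by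
    simp only [B.integralOp_centered (ha.integrable one_le_two)]
    exact (integral_norm_sub_integral_sq_le
      (B.memLp_integralOp (ha.integrable one_le_two))).trans (B.integral_integralOp_sq_le a ha)

lemma integral_centered (B : IsBesselFamily μ ν v r κ V W) (t : T) :
    ∫ y, centered μ v y t ∂μ = 0 := by
  simp only [centered, familyMean, Pi.sub_apply]
  rw [integral_sub ((B.memLp_two t).integrable one_le_two) (integrable_const _), integral_const,
    probReal_univ, one_smul, sub_self]

end IsBesselFamily

end BesselFamilies

section GramKernels

open scoped ComplexConjugate

variable {E T : Type*} [MeasurableSpace T]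

/-- The real part of the weighted inner product `∫ a b̄ ω dν`. -/
def weightedInner (ν : Measure T) (om : T → ℝ) (a b : T → ℂ) : ℝ :=
  (∫ t, a t * conj (b t) * (om t : ℂ) ∂ν).re

/-- A weight function bounded by `e` almost everywhere whose integral and squared `L²` norm are at
most `I` and `D`. -/
structure IsBoundedWeight (ν : Measure T) (om : T → ℝ) (e I D : ℝ) : Prop where
  measurable : Measurable om
  nonneg : ∀ t, 0 ≤ om t
  ae_le : ∀ᵐ t ∂ν, om t ≤ e
  integral_le : ∫ t, om t ∂ν ≤ I
  integral_sq_le : ∫ t, om t ^ 2 ∂ν ≤ D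

lemma weightedInner_comm (ν : Measure T) (om : T → ℝ) (a b : T → ℂ) :
    weightedInner ν om a b = weightedInner ν om b a := by
  simp only [weightedInner]
  rw [← Complex.conj_re, ← integral_conj]
  simp only [map_mul, Complex.conj_conj, Complex.conj_ofReal, mul_comm]

lemma weightedInner_self (ν : Measure T) (om : T → ℝ) (q : T → ℂ) :
    weightedInner ν om q q = ∫ t, ‖q t‖ ^ 2 * om t ∂ν := by
  simp only [weightedInner, Complex.mul_conj', ← Complex.ofReal_pow, ← Complex.ofReal_mul,
    integral_complex_ofReal, Complex.ofReal_re]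

lemma weightedInner_eq_re_integralOp (ν : Measure T) (om : T → ℝ) (v : E → T → ℂ) (y : E)
    (q : T → ℂ) : weightedInner ν om (v y) q
      = (integralOp ν v (fun t => conj (q t) * (om t : ℂ)) y).re := by
  simp only [weightedInner, integralOp, mul_assoc]

namespace IsBoundedWeight

variable {ν : Measure T} {om : T → ℝ} {e I D : ℝ}

lemma memLp_top (hom : IsBoundedWeight ν om e I D) : MemLp om ∞ ν := by
  refine memLp_top_of_bound hom.measurable.aestronglyMeasurable e ?_
  filter_upwards [hom.ae_le] with t ht
  rwa [Real.norm_of_nonneg (hom.nonneg t)]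

lemma memLp_conj_mul (hom : IsBoundedWeight ν om e I D) {q : T → ℂ} (hq : MemLp q 2 ν) :
    MemLp (fun t => conj (q t) * (om t : ℂ)) 2 ν :=
  hom.memLp_top.ofReal.mul hq.star

lemma integrable_mul_conj_mul (hom : IsBoundedWeight ν om e I D) {a b : T → ℂ} (ha : MemLp a 2 ν)
    (hb : MemLp b 2 ν) : Integrable (fun t => a t * conj (b t) * (om t : ℂ)) ν := by
  simpa only [mul_assoc] using! ha.integrable_mul (hom.memLp_conj_mul hb)

lemma weightedInner_add_left (hom : IsBoundedWeight ν om e I D) {a b c : T → ℂ}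
    (ha : MemLp a 2 ν) (hb : MemLp b 2 ν) (hc : MemLp c 2 ν) :
    weightedInner ν om (a + b) c = weightedInner ν om a c + weightedInner ν om b c := by
  simp only [weightedInner, Pi.add_apply, add_mul]
  rw [integral_add (hom.integrable_mul_conj_mul ha hc) (hom.integrable_mul_conj_mul hb hc),
    Complex.add_re]

lemma weightedInner_sub_left (hom : IsBoundedWeight ν om e I D) {a b c : T → ℂ}
    (ha : MemLp a 2 ν) (hb : MemLp b 2 ν) (hc : MemLp c 2 ν) :
    weightedInner ν om (a - b) c = weightedInner ν om a c - weightedInner ν om b c := by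
  simp only [weightedInner, Pi.sub_apply, sub_mul]
  rw [integral_sub (hom.integrable_mul_conj_mul ha hc) (hom.integrable_mul_conj_mul hb hc),
    Complex.sub_re]

lemma integrable_norm_sq_mul (hom : IsBoundedWeight ν om e I D) {q : T → ℂ} (hq : MemLp q 2 ν) :
    Integrable (fun t => ‖q t‖ ^ 2 * om t) ν := by
  have h := (hom.integrable_mul_conj_mul hq hq).norm
  refine h.congr (Eventually.of_forall fun t => ?_)
  simp only [norm_mul, RCLike.norm_conj, Complex.norm_real, Real.norm_of_nonneg (hom.nonneg t), sq]

lemma integrable_norm_sq_mul_sq (hom : IsBoundedWeight ν om e I D) {q : T → ℂ}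
    (hq : MemLp q 2 ν) : Integrable (fun t => ‖q t‖ ^ 2 * om t ^ 2) ν := by
  have h := (hom.memLp_conj_mul hq).norm.integrable_sq
  refine h.congr (Eventually.of_forall fun t => ?_)
  simp only [norm_mul, RCLike.norm_conj, Complex.norm_real, Real.norm_eq_abs, mul_pow, sq_abs]

lemma integral_norm_sq_mul_sq_le_weightedInner (hom : IsBoundedWeight ν om e I D) {q : T → ℂ}
    (hq : MemLp q 2 ν) : ∫ t, ‖q t‖ ^ 2 * om t ^ 2 ∂ν ≤ e * weightedInner ν om q q := by
  rw [weightedInner_self, ← integral_const_mul]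
  refine integral_mono_ae (hom.integrable_norm_sq_mul_sq hq)
    ((hom.integrable_norm_sq_mul hq).const_mul e) ?_
  filter_upwards [hom.ae_le] with t ht
  nlinarith [mul_le_mul_of_nonneg_left ht (mul_nonneg (sq_nonneg ‖q t‖) (hom.nonneg t))]

lemma integral_norm_sq_mul_sq_le (hom : IsBoundedWeight ν om e I D) {q : T → ℂ}
    (hq : MemLp q 2 ν) : ∫ t, ‖q t‖ ^ 2 * om t ^ 2 ∂ν ≤ e ^ 2 * ∫ t, ‖q t‖ ^ 2 ∂ν := by
  rw [← integral_const_mul]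
  refine integral_mono_ae (hom.integrable_norm_sq_mul_sq hq)
    (hq.norm.integrable_sq.const_mul (e ^ 2)) ?_
  filter_upwards [hom.ae_le] with t ht
  rw [mul_comm]
  exact mul_le_mul_of_nonneg_right (pow_le_pow_left₀ (hom.nonneg t) ht 2) (sq_nonneg _)

end IsBoundedWeight

variable [MeasurableSpace E]

/-- The Gram kernel `(x, y) ↦ Re ⟨v(x, ·), v(y, ·)⟩` of a family in the weighted space. -/
def gramKernel (ν : Measure T) (om : T → ℝ) (v : E → T → ℂ) (x y : E) : ℝ :=
  weightedInner ν om (v x) (v y)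

namespace IsBesselFamily

variable {μ : Measure E} {ν : Measure T} {v : E → T → ℂ} {r : E → ℝ} {κ V W : ℝ} {om : T → ℝ}
  {e I D : ℝ}

lemma norm_sq_bound_nonneg [Nonempty T] (B : IsBesselFamily μ ν v r κ V W) : 0 ≤ V :=
  (integral_nonneg fun y => sq_nonneg ‖v y _‖).trans (B.integral_norm_sq_le (Classical.arbitrary T))

variable [IsFiniteMeasure ν]

lemma memLp_section (B : IsBesselFamily μ ν v r κ V W) (y : E) : MemLp (v y) 2 ν :=
  MemLp.of_bound (B.measurable.comp measurable_prodMk_left).aestronglyMeasurable (r y)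
    (Eventually.of_forall (B.norm_le y))

lemma measurable_gramKernel (B : IsBesselFamily μ ν v r κ V W)
    (hom : IsBoundedWeight ν om e I D) :
    Measurable fun p : E × E => gramKernel ν om v p.1 p.2 := by
  have hx : Measurable fun q : (E × E) × T => v q.1.1 q.2 :=
    B.measurable.comp (f := fun q : (E × E) × T => (q.1.1, q.2)) (by fun_prop)
  have hy : Measurable fun q : (E × E) × T => v q.1.2 q.2 :=
    B.measurable.comp (f := fun q : (E × E) × T => (q.1.2, q.2)) (by fun_prop)
  have h : Measurable fun q : (E × E) × T => v q.1.1 q.2 * conj (v q.1.2 q.2) * (om q.2 : ℂ) :=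
    (hx.mul (Complex.continuous_conj.measurable.comp hy)).mul
      (Complex.measurable_ofReal.comp (hom.measurable.comp measurable_snd))
  exact Complex.measurable_re.comp h.stronglyMeasurable.integral_prod_right'.measurable

lemma abs_gramKernel_le (B : IsBesselFamily μ ν v r κ V W) (hom : IsBoundedWeight ν om e I D)
    (x y : E) : |gramKernel ν om v x y| ≤ I * (r x * r y) := by
  refine (Complex.abs_re_le_norm _).trans ?_
  have hint : Integrable om ν := hom.memLp_top.integrable le_top
  calc ‖∫ t, v x t * conj (v y t) * (om t : ℂ) ∂ν‖ ≤ ∫ t, r x * r y * om t ∂ν := by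
        refine norm_integral_le_of_norm_le (hint.const_mul _) (Eventually.of_forall fun t => ?_)
        rw [norm_mul, norm_mul, RCLike.norm_conj, Complex.norm_real,
          Real.norm_of_nonneg (hom.nonneg t)]
        exact mul_le_mul_of_nonneg_right (mul_le_mul (B.norm_le x t) (B.norm_le y t)
          (norm_nonneg _) (B.env_nonneg x)) (hom.nonneg t)
    _ ≤ I * (r x * r y) := by
        rw [integral_const_mul, mul_comm]
        exact mul_le_mul_of_nonneg_right hom.integral_le
          (mul_nonneg (B.env_nonneg x) (B.env_nonneg y))

variable [IsProbabilityMeasure μ]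

lemma memLp_weightedInner (B : IsBesselFamily μ ν v r κ V W) (hom : IsBoundedWeight ν om e I D)
    {q : T → ℂ} (hq : MemLp q 2 ν) : MemLp (fun y => weightedInner ν om (v y) q) 2 μ := by
  simp only [weightedInner_eq_re_integralOp]
  exact (B.memLp_integralOp ((hom.memLp_conj_mul hq).integrable one_le_two)).re

lemma integral_weightedInner (B : IsBesselFamily μ ν v r κ V W)
    (hom : IsBoundedWeight ν om e I D) (h0 : ∀ t, ∫ y, v y t ∂μ = 0) {q : T → ℂ}
    (hq : MemLp q 2 ν) : ∫ y, weightedInner ν om (v y) q ∂μ = 0 := by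
  have hint := (hom.memLp_conj_mul hq).integrable one_le_two
  simp only [weightedInner_eq_re_integralOp]
  refine (integral_re ((B.memLp_integralOp hint).integrable one_le_two)).trans ?_
  simp only [B.integral_integralOp hint, h0, zero_mul, integral_zero, map_zero]

lemma integral_weightedInner_sq_le (B : IsBesselFamily μ ν v r κ V W)
    (hom : IsBoundedWeight ν om e I D) {q : T → ℂ} (hq : MemLp q 2 ν) :
    ∫ y, weightedInner ν om (v y) q ^ 2 ∂μ ≤ κ * ∫ t, ‖q t‖ ^ 2 * om t ^ 2 ∂ν := by
  have hmem := hom.memLp_conj_mul hq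
  have hop := B.memLp_integralOp (hmem.integrable one_le_two)
  calc ∫ y, weightedInner ν om (v y) q ^ 2 ∂μ
      ≤ ∫ y, ‖integralOp ν v (fun t => conj (q t) * (om t : ℂ)) y‖ ^ 2 ∂μ := by
        refine integral_mono (B.memLp_weightedInner hom hq).integrable_sq
          hop.norm.integrable_sq fun y => ?_
        rw [weightedInner_eq_re_integralOp]
        exact sq_le_sq.2 ((Complex.abs_re_le_norm _).trans_eq (abs_norm _).symm)
    _ ≤ κ * ∫ t, ‖conj (q t) * (om t : ℂ)‖ ^ 2 ∂ν := B.integral_integralOp_sq_le _ hmem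
    _ = κ * ∫ t, ‖q t‖ ^ 2 * om t ^ 2 ∂ν := by
        simp only [norm_mul, RCLike.norm_conj, Complex.norm_real, Real.norm_eq_abs, mul_pow,
          sq_abs]

lemma memLp_gramKernel (B : IsBesselFamily μ ν v r κ V W) (hom : IsBoundedWeight ν om e I D)
    (x : E) : MemLp (gramKernel ν om v x) 2 μ := by
  simpa only [weightedInner_comm ν om _ (v x)] using!
    B.memLp_weightedInner hom (B.memLp_section x)

lemma integral_gramKernel_sq_le (B : IsBesselFamily μ ν v r κ V W)
    (hom : IsBoundedWeight ν om e I D) (x : E) :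
    ∫ y, gramKernel ν om v x y ^ 2 ∂μ ≤ κ * ∫ t, ‖v x t‖ ^ 2 * om t ^ 2 ∂ν := by
  simpa only [weightedInner_comm ν om _ (v x)] using!
    B.integral_weightedInner_sq_le hom (B.memLp_section x)

lemma iterKernel_gramKernel (B : IsBesselFamily μ ν v r κ V W)
    (hom : IsBoundedWeight ν om e I D) (x y : E) :
    iterKernel μ (gramKernel ν om v) x y = weightedInner ν om (v y)
      (integralOp μ (flip v) fun z => (gramKernel ν om v x z : ℂ)) := by
  set u : E → ℂ := fun z => (gramKernel ν om v x z : ℂ)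
  set a : T → ℂ := fun t => conj (v y t) * (om t : ℂ)
  have hu : MemLp u 2 μ := (B.memLp_gramKernel hom x).ofReal
  have ha : Integrable a ν := (hom.memLp_conj_mul (B.memLp_section y)).integrable one_le_two
  calc iterKernel μ (gramKernel ν om v) x y = ∫ z, (u z * integralOp ν v a z).re ∂μ := by
        refine integral_congr_ae (Eventually.of_forall fun z => ?_)
        simp only [u, a, Complex.re_ofReal_mul, gramKernel, ← weightedInner_eq_re_integralOp,
          weightedInner_comm ν om (v y)]
    _ = (∫ t, integralOp μ (flip v) u t * a t ∂ν).re := by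
        rw [← integral_mul_integralOp (B.integrable_prod hu ha)]
        exact integral_re (hu.integrable_mul (B.memLp_integralOp ha))
    _ = weightedInner ν om (v y) (integralOp μ (flip v) u) := by
        rw [weightedInner_comm]
        simp only [weightedInner, a, mul_assoc]

lemma integral_iterKernel_gramKernel_sq_le (B : IsBesselFamily μ ν v r κ V W)
    (hom : IsBoundedWeight ν om e I D) (x : E) :
    ∫ y, iterKernel μ (gramKernel ν om v) x y ^ 2 ∂μ
      ≤ κ ^ 2 * e ^ 2 * ∫ y, gramKernel ν om v x y ^ 2 ∂μ := by
  have hu : MemLp (fun z => (gramKernel ν om v x z : ℂ)) 2 μ := (B.memLp_gramKernel hom x).ofReal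
  have hκ := B.bessel_pos.le
  set b := integralOp μ (flip v) fun z => (gramKernel ν om v x z : ℂ)
  have hb : MemLp b 2 ν := B.memLp_transpose hu
  calc ∫ y, iterKernel μ (gramKernel ν om v) x y ^ 2 ∂μ
      = ∫ y, weightedInner ν om (v y) b ^ 2 ∂μ := by
        simp only [B.iterKernel_gramKernel hom, b]
    _ ≤ κ * ∫ t, ‖b t‖ ^ 2 * om t ^ 2 ∂ν := B.integral_weightedInner_sq_le hom hb
    _ ≤ κ * (e ^ 2 * (κ * ∫ y, ‖(gramKernel ν om v x y : ℂ)‖ ^ 2 ∂μ)) := by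
        gcongr
        exact (hom.integral_norm_sq_mul_sq_le hb).trans
          (mul_le_mul_of_nonneg_left (B.integral_norm_transpose_sq_le hu) (sq_nonneg e))
    _ = κ ^ 2 * e ^ 2 * ∫ y, gramKernel ν om v x y ^ 2 ∂μ := by
        simp only [Complex.norm_real, Real.norm_eq_abs, sq_abs]
        ring

lemma iterKernel_gramKernel_self_le (B : IsBesselFamily μ ν v r κ V W)
    (hom : IsBoundedWeight ν om e I D) (x : E) :
    iterKernel μ (gramKernel ν om v) x x ≤ κ * D * r x ^ 2 := by
  have hsq : Integrable (fun t => om t ^ 2) ν := (hom.memLp_top.mono_exponent le_top).integrable_sq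
  calc iterKernel μ (gramKernel ν om v) x x = ∫ y, gramKernel ν om v x y ^ 2 ∂μ :=
        iterKernel_self _ _ _
    _ ≤ κ * ∫ t, ‖v x t‖ ^ 2 * om t ^ 2 ∂ν := B.integral_gramKernel_sq_le hom x
    _ ≤ κ * ∫ t, r x ^ 2 * om t ^ 2 ∂ν := by
        refine mul_le_mul_of_nonneg_left (integral_mono
          (hom.integrable_norm_sq_mul_sq (B.memLp_section x)) (hsq.const_mul _) fun t => ?_)
          B.bessel_pos.le
        exact mul_le_mul_of_nonneg_right
          (pow_le_pow_left₀ (norm_nonneg _) (B.norm_le x t) 2) (sq_nonneg _)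
    _ ≤ κ * (r x ^ 2 * D) := by
        rw [integral_const_mul]
        exact mul_le_mul_of_nonneg_left
          (mul_le_mul_of_nonneg_left hom.integral_sq_le (sq_nonneg _)) B.bessel_pos.le
    _ = κ * D * r x ^ 2 := by ring

lemma integrable_norm_sq_mul_sq (B : IsBesselFamily μ ν v r κ V W)
    (hom : IsBoundedWeight ν om e I D) :
    Integrable (fun p : E × T => ‖v p.1 p.2‖ ^ 2 * om p.2 ^ 2) (μ.prod ν) := by
  have hsq : Integrable (fun t => om t ^ 2) ν := (hom.memLp_top.mono_exponent le_top).integrable_sq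
  refine (B.memLp_env.integrable_sq.mul_prod hsq).mono'
    ((B.measurable.norm.pow_const 2).mul
      ((hom.measurable.pow_const 2).comp measurable_snd)).aestronglyMeasurable
    (Eventually.of_forall fun p => ?_)
  rw [Real.norm_of_nonneg (by positivity)]
  exact mul_le_mul_of_nonneg_right (pow_le_pow_left₀ (norm_nonneg _) (B.norm_le _ _) 2)
    (sq_nonneg _)

lemma integral_integral_norm_sq_mul_sq_le [Nonempty T] (B : IsBesselFamily μ ν v r κ V W)
    (hom : IsBoundedWeight ν om e I D) :
    ∫ x, ∫ t, ‖v x t‖ ^ 2 * om t ^ 2 ∂ν ∂μ ≤ V * D := by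
  have hint := B.integrable_norm_sq_mul_sq hom
  have hsq : Integrable (fun t => om t ^ 2) ν := (hom.memLp_top.mono_exponent le_top).integrable_sq
  calc ∫ x, ∫ t, ‖v x t‖ ^ 2 * om t ^ 2 ∂ν ∂μ = ∫ t, ∫ x, ‖v x t‖ ^ 2 * om t ^ 2 ∂μ ∂ν :=
        integral_integral_swap hint
    _ ≤ ∫ t, V * om t ^ 2 ∂ν := by
        refine integral_mono hint.integral_prod_right (hsq.const_mul V) fun t => ?_
        simp only [integral_mul_const]
        exact mul_le_mul_of_nonneg_right (B.integral_norm_sq_le t) (sq_nonneg _)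
    _ ≤ V * D := by
        rw [integral_const_mul]
        exact mul_le_mul_of_nonneg_left hom.integral_sq_le B.norm_sq_bound_nonneg

lemma integrable_gramKernel_sq (B : IsBesselFamily μ ν v r κ V W)
    (hom : IsBoundedWeight ν om e I D) :
    Integrable (fun p : E × E => gramKernel ν om v p.1 p.2 ^ 2) (μ.prod μ) := by
  have henv := B.memLp_env.integrable_sq
  refine ((henv.mul_prod henv).const_mul (I ^ 2)).mono'
    ((B.measurable_gramKernel hom).pow_const 2).aestronglyMeasurable
    (Eventually.of_forall fun p => ?_)
  rw [Real.norm_of_nonneg (sq_nonneg _), ← mul_pow, ← mul_pow]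
  exact sq_le_sq.2 ((B.abs_gramKernel_le hom p.1 p.2).trans (le_abs_self _))

lemma integral_integral_gramKernel_sq_le [Nonempty T] (B : IsBesselFamily μ ν v r κ V W)
    (hom : IsBoundedWeight ν om e I D) :
    ∫ x, ∫ y, gramKernel ν om v x y ^ 2 ∂μ ∂μ ≤ κ * V * D := by
  calc ∫ x, ∫ y, gramKernel ν om v x y ^ 2 ∂μ ∂μ
      ≤ ∫ x, κ * ∫ t, ‖v x t‖ ^ 2 * om t ^ 2 ∂ν ∂μ :=
        integral_mono (B.integrable_gramKernel_sq hom).integral_prod_left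
          ((B.integrable_norm_sq_mul_sq hom).integral_prod_left.const_mul κ)
          (B.integral_gramKernel_sq_le hom)
    _ ≤ κ * (V * D) := by
        rw [integral_const_mul]
        exact mul_le_mul_of_nonneg_left (B.integral_integral_norm_sq_mul_sq_le hom)
          B.bessel_pos.le
    _ = κ * V * D := (mul_assoc κ V D).symm

lemma isCanonicalKernel_gramKernel_integral_sq [Nonempty T] (B : IsBesselFamily μ ν v r κ V W)
    (hom : IsBoundedWeight ν om e I D) (h0 : ∀ t, ∫ y, v y t ∂μ = 0) :
    IsCanonicalKernel μ (gramKernel ν om v) r I (κ * D) W (κ * V * D)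
      (∫ p, iterKernel μ (gramKernel ν om v) p.1 p.2 ^ 2 ∂μ.prod μ) where
  measurable := B.measurable_gramKernel hom
  symm x y := weightedInner_comm ν om (v x) (v y)
  integral_eq_zero x := by
    simpa only [weightedInner_comm ν om _ (v x)] using!
      B.integral_weightedInner hom h0 (B.memLp_section x)
  measurable_env := B.measurable_env
  env_nonneg := B.env_nonneg
  integrable_env := B.integrable_env
  integral_env_le := B.integral_env_le
  bound_nonneg := (integral_nonneg hom.nonneg).trans hom.integral_le
  abs_le := B.abs_gramKernel_le hom
  section_nonneg := mul_nonneg B.bessel_pos.le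
    ((integral_nonneg fun t => sq_nonneg (om t)).trans hom.integral_sq_le)
  iterKernel_self_le := B.iterKernel_gramKernel_self_le hom
  integral_iterKernel_self_le := by
    simpa only [iterKernel_self] using B.integral_integral_gramKernel_sq_le hom
  integral_iterKernel_sq_le := le_rfl

lemma isCanonicalKernel_gramKernel [Nonempty T] (B : IsBesselFamily μ ν v r κ V W)
    (hom : IsBoundedWeight ν om e I D) (h0 : ∀ t, ∫ y, v y t ∂μ = 0) :
    IsCanonicalKernel μ (gramKernel ν om v) r I (κ * D) W (κ * V * D)
      (κ ^ 2 * e ^ 2 * (κ * V * D)) where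
  __ := B.isCanonicalKernel_gramKernel_integral_sq hom h0
  integral_iterKernel_sq_le := by
    have hint := (B.isCanonicalKernel_gramKernel_integral_sq hom h0).memLp_iterKernel.integrable_sq
    rw [integral_prod _ hint]
    calc ∫ x, ∫ y, iterKernel μ (gramKernel ν om v) x y ^ 2 ∂μ ∂μ
        ≤ ∫ x, κ ^ 2 * e ^ 2 * ∫ y, gramKernel ν om v x y ^ 2 ∂μ ∂μ :=
          integral_mono hint.integral_prod_left
            ((B.integrable_gramKernel_sq hom).integral_prod_left.const_mul _)
            (B.integral_iterKernel_gramKernel_sq_le hom)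
      _ ≤ κ ^ 2 * e ^ 2 * (κ * V * D) := by
          rw [integral_const_mul]
          exact mul_le_mul_of_nonneg_left (B.integral_integral_gramKernel_sq_le hom)
            (by positivity)

end IsBesselFamily

end GramKernels

section DistanceStatistic

variable {E T : Type*} [MeasurableSpace E]

lemma sum_sum_ne_eq_pairSum {A : E → E → ℝ} (hA : ∀ x y, A x y = A y x) (n : ℕ) (y : Fin n → E) :
    ∑ j, ∑ l, (if j ≠ l then A (y j) (y l) else 0) = 2 * pairSum A n y := by
  have hdiag (j l : Fin n) : (if j ≠ l then A (y j) (y l) else 0)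
      = A (y j) (y l) - if j = l then A (y j) (y l) else 0 := by
    by_cases h : j = l <;> simp [h]
  simp only [hdiag, Finset.sum_sub_distrib, Finset.sum_ite_eq, Finset.mem_univ, if_true,
    sum_sum_eq_pairSum hA]
  ring

lemma two_mul_pairSum_of_hoeffding {A H : E → E → ℝ} {g : E → ℝ} {m : ℝ}
    (hH : ∀ x y, H x y = H y x) (hA : ∀ x y, A x y = H x y + (g x + g y) + m) (n : ℕ)
    (y : Fin n → E) :
    2 * pairSum A n y = 2 * pairSum H n y + 2 * (n - 1) * ∑ j, g (y j) + n * (n - 1) * m := by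
  have hAsymm (x z : E) : A x z = A z x := by rw [hA, hA z, hH, add_comm (g x)]
  have hsumA := sum_sum_eq_pairSum hAsymm n y
  have hsumH := sum_sum_eq_pairSum hH n y
  simp only [hA, Finset.sum_add_distrib, Finset.sum_const, Finset.card_univ, Fintype.card_fin,
    nsmul_eq_mul, ← Finset.mul_sum] at hsumA
  linarith

variable [MeasurableSpace T]

/-- The unbiased estimator of the squared weighted distance from the mean of the family `u` to `q`:
a U-statistic for the squared norm of the mean, a linear statistic for the cross term, and the
squared norm of `q`. -/
def distanceStat (ν : Measure T) (om : T → ℝ) (u : E → T → ℂ) (q : T → ℂ) (n : ℕ)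
    (y : Fin n → E) : ℝ :=
  ((n : ℝ) * (n - 1))⁻¹ * (2 * pairSum (gramKernel ν om u) n y)
    - 2 * ((n : ℝ)⁻¹ * ∑ j, weightedInner ν om (u (y j)) q) + weightedInner ν om q q

lemma neg_level_of_statistic_lt {τ G a d U x : ℝ} (ha : 0 ≤ a) (hd : 0 ≤ d)
    (hsep : 2 * τ + 2 * G + 16 * a ≤ d) (hx : |x| ≤ 2 * √(a * d)) (hlt : U + 2 * x + d < τ) :
    U ≤ -G := by
  have hamgm : 4 * √(a * d) ≤ d / 2 + 8 * a := by
    rw [Real.sqrt_mul ha]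
    nlinarith [sq_nonneg (4 * √a - √d), Real.sq_sqrt ha, Real.sq_sqrt hd]
  linarith [neg_le_of_abs_le hx]

namespace IsBesselFamily

variable {μ : Measure E} {ν : Measure T} {u : E → T → ℂ} {r : E → ℝ} {om : T → ℝ}
  {κ C V W e I D S d : ℝ} [IsFiniteMeasure ν] [IsProbabilityMeasure μ]

lemma memLp_familyMean (B : IsBesselFamily μ ν u r κ V W) : MemLp (familyMean μ u) 2 ν := by
  refine (memLp_congr_ae (Eventually.of_forall fun t => ?_)).1 (B.memLp_transpose (memLp_const 1))
  simp only [integralOp, flip, mul_one, familyMean]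

lemma gramKernel_eq_centered (B : IsBesselFamily μ ν u r κ V W)
    (hom : IsBoundedWeight ν om e I D) (x y : E) :
    gramKernel ν om u x y = gramKernel ν om (centered μ u) x y
      + (weightedInner ν om (centered μ u x) (familyMean μ u)
        + weightedInner ν om (centered μ u y) (familyMean μ u))
      + weightedInner ν om (familyMean μ u) (familyMean μ u) := by
  have hm := B.memLp_familyMean
  have hv := B.center.memLp_section
  have hsplit (z : E) {b : T → ℂ} (hb : MemLp b 2 ν) : weightedInner ν om (u z) b
      = weightedInner ν om (centered μ u z) b + weightedInner ν om (familyMean μ u) b := by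
    rw [← hom.weightedInner_add_left (hv z) hm hb, centered, sub_add_cancel]
  rw [gramKernel, hsplit x (B.memLp_section y), weightedInner_comm ν om _ (u y),
    weightedInner_comm ν om _ (u y), hsplit y (hv x), hsplit y hm,
    weightedInner_comm ν om _ (centered μ u x), weightedInner_comm ν om _ (centered μ u x),
    gramKernel]
  ring

lemma distanceStat_eq (B : IsBesselFamily μ ν u r κ V W) (hom : IsBoundedWeight ν om e I D)
    {q : T → ℂ} (hq : MemLp q 2 ν) {n : ℕ} (hn : 2 ≤ n) (y : Fin n → E) :
    distanceStat ν om u q n y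
      = ((n : ℝ) * (n - 1))⁻¹ * (2 * pairSum (gramKernel ν om (centered μ u)) n y)
        + 2 * ((n : ℝ)⁻¹ * ∑ j, weightedInner ν om (centered μ u (y j)) (familyMean μ u - q))
        + weightedInner ν om (familyMean μ u - q) (familyMean μ u - q) := by
  have hN : (2 : ℝ) ≤ n := by exact_mod_cast hn
  have hN1 : (n : ℝ) - 1 ≠ 0 := by linarith
  have hm := B.memLp_familyMean
  have hδ : MemLp (familyMean μ u - q) 2 ν := hm.sub hq
  have hv := B.center.memLp_section
  have hleft (z : E) : weightedInner ν om (u z) q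
      = weightedInner ν om (centered μ u z) q + weightedInner ν om (familyMean μ u) q := by
    rw [← hom.weightedInner_add_left (hv z) hm hq, centered, sub_add_cancel]
  have hright {a : T → ℂ} (ha : MemLp a 2 ν) : weightedInner ν om a (familyMean μ u - q)
      = weightedInner ν om a (familyMean μ u) - weightedInner ν om a q := by
    simp only [weightedInner_comm ν om a, hom.weightedInner_sub_left hm hq ha]
  rw [distanceStat, two_mul_pairSum_of_hoeffding (H := gramKernel ν om (centered μ u))
    (fun x z => weightedInner_comm ν om _ _) (B.gramKernel_eq_centered hom) n y,
    hom.weightedInner_sub_left hm hq hδ, hright hm, hright hq,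
    weightedInner_comm ν om q (familyMean μ u)]
  simp only [hleft, hright (hv _), Finset.sum_add_distrib, Finset.sum_sub_distrib,
    Finset.sum_const, Finset.card_univ, Fintype.card_fin, nsmul_eq_mul]
  field_simp
  ring

lemma measureReal_lt_abs_mean_weightedInner_le (B : IsBesselFamily μ ν u r κ V W)
    (hom : IsBoundedWeight ν om e I D) (h0 : ∀ t, ∫ y, u y t ∂μ = 0) (he : 0 < e) {q : T → ℂ}
    (hq : MemLp q 2 ν) (hpos : 0 < weightedInner ν om q q) {n : ℕ} (hn : 0 < n) {β : ℝ}
    (hβ : 0 < β) :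
    (sampleLaw μ n).real {y | 2 * √(κ * e / (n * β) * weightedInner ν om q q)
      < |(n : ℝ)⁻¹ * ∑ j, weightedInner ν om (u (y j)) q|} ≤ β / 4 := by
  have : (0 : ℝ) < n := Nat.cast_pos.2 hn
  have hκ := B.bessel_pos
  set Q := weightedInner ν om q q
  have hmem := B.memLp_weightedInner hom hq
  have hvar : ∫ y, ((n : ℝ)⁻¹ * ∑ j, weightedInner ν om (u (y j)) q) ^ 2 ∂sampleLaw μ n
      ≤ κ * e / n * Q := by
    calc ∫ y, ((n : ℝ)⁻¹ * ∑ j, weightedInner ν om (u (y j)) q) ^ 2 ∂sampleLaw μ n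
        = ((n : ℝ)⁻¹) ^ 2 * (n * ∫ x, weightedInner ν om (u x) q ^ 2 ∂μ) := by
          simp only [mul_pow]
          rw [integral_const_mul, integral_sum_eval_sq_of_integral_eq_zero hmem
            (B.integral_weightedInner hom h0 hq)]
      _ ≤ ((n : ℝ)⁻¹) ^ 2 * (n * (κ * (e * Q))) := by
          gcongr
          exact (B.integral_weightedInner_sq_le hom hq).trans
            (mul_le_mul_of_nonneg_left (hom.integral_norm_sq_mul_sq_le_weightedInner hq) hκ.le)
      _ = κ * e / n * Q := by field_simp
  refine (measureReal_lt_abs_le_div ((memLp_sum_eval hmem n).const_mul _) (by positivity)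
    hvar).trans_eq ?_
  rw [mul_pow, Real.sq_sqrt (by positivity)]
  field_simp
  norm_num

lemma measureReal_pairSum_gramKernel_le_neg_le [Nonempty T]
    (B : IsBesselFamily μ ν u r (C * V) V (16 * W)) (hom : IsBoundedWeight ν om e (S * d) (d ^ 2))
    (h0 : ∀ t, ∫ y, u y t ∂μ = 0) (hC : 1 ≤ C) (hV : 1 ≤ V) (hVW : V ^ 2 ≤ W) (hS : 1 ≤ S)
    (hd : 0 < d) (he : 0 < e) {n : ℕ} (hn : 2 ≤ n) {β l : ℝ} (hβ : 0 < β) (hβ1 : β ≤ 1)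
    (hl : 1 ≤ l) (hlβ : Real.log (4 / β) ≤ l ^ 2) :
    (sampleLaw μ n).real {y | pairSum (gramKernel ν om u) n y ≤ -(n * (n - 1) / 2
        * (18 * (C * W * d) * l / n + 138986 * (S * d / β) * l ^ 3 / n ^ 2
          + 48 * (C * V * e / β) * l ^ 2 / n))} ≤ 3 * β / 4 := by
  have hW : V ≤ W := (le_self_pow₀ hV two_ne_zero).trans hVW
  have hCW : V ≤ C * W := hW.trans (le_mul_of_one_le_left (by linarith) hC)
  have hVCW : V ^ 2 ≤ C * W ^ 2 := by nlinarith
  have hVSCW : V ^ 2 ≤ S * (C * W ^ 2) := hVCW.trans (le_mul_of_one_le_left (by positivity) hS)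
  have hW0 : 0 < W := by linarith
  refine (B.isCanonicalKernel_gramKernel hom h0).measureReal_pairSum_le_neg_le_of_log_le hn
    (by positivity) (by positivity) (by positivity) hβ hβ1 ?_ ?_ ?_ ?_ hl hlβ
  · calc S * d * (C * V * d ^ 2) * (16 * W) = 16 * S * d ^ 3 * C * W * V := by ring
      _ ≤ 16 * S * d ^ 3 * C * W * (C * W) := by gcongr
      _ = 16 * β * (S * d / β) * (C * W * d) ^ 2 := by field_simp
  · calc (C * V * d ^ 2) ^ 2 * (16 * W) = 16 * C ^ 2 * d ^ 4 * W * V ^ 2 := by ring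
      _ ≤ 16 * C ^ 2 * d ^ 4 * W * (S * (C * W ^ 2)) := by gcongr
      _ = 16 * β * (S * d / β) * (C * W * d) ^ 3 := by field_simp
  · calc C * V * V * d ^ 2 = C * d ^ 2 * V ^ 2 := by ring
      _ ≤ C * d ^ 2 * (C * W ^ 2) := by gcongr
      _ = (C * W * d) ^ 2 := by ring
  · calc (C * V) ^ 2 * e ^ 2 * (C * V * V * d ^ 2) = C ^ 3 * V ^ 2 * e ^ 2 * d ^ 2 * V ^ 2 := by
          ring
      _ ≤ C ^ 3 * V ^ 2 * e ^ 2 * d ^ 2 * (C * W ^ 2) := by gcongr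
      _ = (β * (C * V * e / β) * (C * W * d)) ^ 2 := by field_simp

/-- The deviation splits into the canonical U-statistic, with probability `3 β / 4`, and the linear
statistic, with probability `β / 4`. -/
lemma measureReal_distanceStat_lt_le [Nonempty T] (B : IsBesselFamily μ ν u r (C * V) V W)
    (hom : IsBoundedWeight ν om e (S * d) (d ^ 2)) (hC : 1 ≤ C) (hV : 1 ≤ V) (hVW : V ^ 2 ≤ W)
    (hS : 1 ≤ S) (hd : 0 < d) (he : 0 < e) {q : T → ℂ} (hq : MemLp q 2 ν) {n : ℕ} (hn : 2 ≤ n)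
    {β l τ : ℝ} (hβ : 0 < β) (hβ1 : β ≤ 1) (hl : 1 ≤ l) (hlβ : Real.log (4 / β) ≤ l ^ 2)
    (hτ : 0 ≤ τ)
    (hsep : 2 * τ + 2 * (18 * C * W + 138986 * (l ^ 2 / β) * (S / n)) * l * d / n
        + 112 * C * V * (l ^ 2 / β) * e / n
      ≤ weightedInner ν om (familyMean μ u - q) (familyMean μ u - q)) :
    (sampleLaw μ n).real {y | distanceStat ν om u q n y < τ} ≤ β := by
  have hN : (2 : ℝ) ≤ n := by exact_mod_cast hn
  have hW : 0 < W := by nlinarith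
  set Q := weightedInner ν om (familyMean μ u - q) (familyMean μ u - q)
  set a := C * V * e / (n * β)
  set G := 18 * (C * W * d) * l / n + 138986 * (S * d / β) * l ^ 3 / n ^ 2
    + 48 * (C * V * e / β) * l ^ 2 / n
  have ha : 0 < a := by positivity
  have hG : 0 < G := by positivity
  have hlevel : 2 * τ + 2 * G + 16 * a ≤ Q := by
    have hal : a ≤ a * l ^ 2 := le_mul_of_one_le_right ha.le (one_le_pow₀ hl)
    calc 2 * τ + 2 * G + 16 * a ≤ 2 * τ + 2 * G + 16 * (a * l ^ 2) := by linarith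
      _ = 2 * τ + 2 * (18 * C * W + 138986 * (l ^ 2 / β) * (S / n)) * l * d / n
          + 112 * C * V * (l ^ 2 / β) * e / n := by
          simp only [G, a]
          field_simp
          ring
      _ ≤ Q := hsep
  have hQ : 0 < Q := by linarith
  have hδ : MemLp (familyMean μ u - q) 2 ν := B.memLp_familyMean.sub hq
  have hlinear := B.center.measureReal_lt_abs_mean_weightedInner_le hom B.integral_centered he hδ
    hQ (two_pos.trans_le hn) hβ
  have hcanonical := B.center.measureReal_pairSum_gramKernel_le_neg_le hom B.integral_centered
    hC hV hVW hS hd he hn hβ hβ1 hl hlβ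
  refine (measureReal_mono (fun y hy => ?_)).trans <| (measureReal_union_le _ _).trans <|
    (add_le_add hcanonical hlinear).trans_eq (by ring)
  rw [mem_ofPred_eq, B.distanceStat_eq hom hq hn] at hy
  refine or_iff_not_imp_right.2 fun hx => ?_
  have hU := neg_level_of_statistic_lt ha.le hQ.le hlevel (not_lt.1 hx) hy
  have hN1 : 0 < (n : ℝ) * (n - 1) := by nlinarith
  rw [inv_mul_le_iff₀ hN1] at hU
  rw [mem_ofPred_eq]
  linarith

end IsBesselFamily

end DistanceStatistic

section MultiplicativeConvolution

/-- The measure on `(0, ∞)` with Lebesgue density `f`, viewed as a measure on `ℝ`. -/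
def densityMeasure (f : ℝ → ℝ) : Measure ℝ :=
  (volume.restrict (Ioi 0)).withDensity fun y => ENNReal.ofReal (f y)

lemma ae_densityMeasure_pos (f : ℝ → ℝ) : ∀ᵐ y ∂densityMeasure f, 0 < y :=
  (withDensity_absolutelyContinuous _ _).ae_le (ae_restrict_mem measurableSet_Ioi)

lemma IsDensity.aemeasurable {f : ℝ → ℝ} (hf : IsDensity f) :
    AEMeasurable f (volume.restrict (Ioi 0)) :=
  hf.2.2.1.aemeasurable

lemma IsDensity.withDensity_eq {f : ℝ → ℝ} (hf : IsDensity f) :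
    volume.withDensity (fun y => ENNReal.ofReal (f y)) = densityMeasure f := by
  rw [densityMeasure, ← withDensity_indicator measurableSet_Ioi]
  congr with y
  by_cases hy : 0 < y
  · simp [hy]
  · simp [hf.2.1 y (not_lt.1 hy), hy]

lemma IsDensity.isProbabilityMeasure {f : ℝ → ℝ} (hf : IsDensity f) :
    IsProbabilityMeasure (densityMeasure f) := by
  constructor
  rw [densityMeasure, withDensity_apply _ MeasurableSet.univ, Measure.restrict_univ,
    ← ofReal_integral_eq_lintegral_ofReal hf.2.2.1 (Eventually.of_forall hf.1), hf.2.2.2,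
    ENNReal.ofReal_one]

lemma isDensity_of_isProbabilityMeasure {f : ℝ → ℝ} (hf : AEMeasurable f (volume.restrict (Ioi 0)))
    (hnonneg : ∀ x, 0 ≤ f x) (hzero : ∀ x ≤ 0, f x = 0)
    (hprob : IsProbabilityMeasure (densityMeasure f)) : IsDensity f := by
  have hmass : ∫⁻ x in Ioi 0, ENNReal.ofReal (f x) = 1 := by
    have := hprob.measure_univ
    rwa [densityMeasure, withDensity_apply _ MeasurableSet.univ, Measure.restrict_univ] at this
  refine ⟨hnonneg, hzero, ⟨hf.aestronglyMeasurable, ?_⟩, ?_⟩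
  · rw [hasFiniteIntegral_iff_ofReal (Eventually.of_forall hnonneg), hmass]
    exact ENNReal.one_lt_top
  · rw [integral_eq_lintegral_of_nonneg_ae (Eventually.of_forall hnonneg) hf.aestronglyMeasurable,
      hmass, ENNReal.toReal_one]

lemma IsDensity.integral_densityMeasure {X : Type*} [NormedAddCommGroup X] [NormedSpace ℝ X]
    {f : ℝ → ℝ} (hf : IsDensity f) (F : ℝ → X) :
    ∫ y, F y ∂densityMeasure f = ∫ y in Ioi 0, f y • F y := by
  rw [densityMeasure, integral_withDensity_eq_integral_toReal_smul₀ hf.aemeasurable.ennreal_ofReal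
    (Eventually.of_forall fun y => ENNReal.ofReal_lt_top)]
  simp only [ENNReal.toReal_ofReal (hf.1 _)]

lemma IsDensity.integrable_densityMeasure_iff {X : Type*} [NormedAddCommGroup X] [NormedSpace ℝ X]
    {f : ℝ → ℝ} (hf : IsDensity f) {F : ℝ → X} :
    Integrable F (densityMeasure f) ↔ IntegrableOn (fun y => f y • F y) (Ioi 0) := by
  rw [densityMeasure, integrable_withDensity_iff_integrable_smul₀' hf.aemeasurable.ennreal_ofReal
    (Eventually.of_forall fun y => ENNReal.ofReal_lt_top)]
  simp only [ENNReal.toReal_ofReal (hf.1 _), IntegrableOn]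

lemma lintegral_Ioi_comp_mul_left (H : ℝ → ℝ≥0∞) {x : ℝ} (hx : 0 < x) :
    ∫⁻ u in Ioi 0, H (x * u) = ENNReal.ofReal x⁻¹ * ∫⁻ y in Ioi 0, H y := by
  have hsubst := lintegral_image_eq_lintegral_abs_deriv_mul (s := Ioi 0) (f := (x * ·))
    (f' := fun _ => x) measurableSet_Ioi
    (fun y _ => by simpa using ((hasDerivAt_id y).const_mul x).hasDerivWithinAt)
    (mul_right_injective₀ hx.ne').injOn H
  rw [image_mul_left_Ioi hx, mul_zero, abs_of_pos hx,
    lintegral_const_mul' _ _ ENNReal.ofReal_ne_top] at hsubst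
  rw [hsubst, ← mul_assoc, ← ENNReal.ofReal_mul (inv_nonneg.2 hx.le), inv_mul_cancel₀ hx.ne',
    ENNReal.ofReal_one, one_mul]

lemma quasiMeasurePreserving_const_div {y : ℝ} (hy : 0 < y) :
    Measure.QuasiMeasurePreserving (y / ·) (volume.restrict (Ioi 0)) (volume.restrict (Ioi 0)) := by
  have hmeas : Measurable (y / · : ℝ → ℝ) := measurable_const.div measurable_id
  refine ⟨hmeas, Measure.AbsolutelyContinuous.mk fun s hs hs0 => ?_⟩
  rw [Measure.restrict_apply hs] at hs0
  have hdiff : DifferentiableOn ℝ (y / ·) (s ∩ Ioi 0) := fun z hz =>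
    ((differentiableAt_const y).div differentiableAt_id hz.2.ne').differentiableWithinAt
  rw [Measure.map_apply hmeas hs, Measure.restrict_apply (hmeas hs)]
  refine measure_mono_null ?_
    (addHaar_image_eq_zero_of_differentiableOn_of_addHaar_eq_zero volume hdiff hs0)
  rintro x ⟨hxs, hx : 0 < x⟩
  exact ⟨y / x, ⟨hxs, div_pos hy hx⟩, div_div_cancel₀ hy.ne'⟩

/-- The multiplicative convolution on `(0, ∞)` of `ℝ≥0∞`-valued functions. -/
def lmconv (F Φ : ℝ → ℝ≥0∞) (y : ℝ) : ℝ≥0∞ :=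
  ∫⁻ x in Ioi 0, F x * Φ (y / x) * ENNReal.ofReal x⁻¹

variable {F F' Φ Φ' : ℝ → ℝ≥0∞}

lemma lmconv_congr_ae (hF : F =ᵐ[volume.restrict (Ioi 0)] F')
    (hΦ : Φ =ᵐ[volume.restrict (Ioi 0)] Φ') {y : ℝ} (hy : 0 < y) :
    lmconv F Φ y = lmconv F' Φ' y := by
  refine lintegral_congr_ae ?_
  filter_upwards [hF, (quasiMeasurePreserving_const_div hy).ae hΦ] with x hFx hΦx
  rw [hFx, hΦx]

lemma ae_lmconv_eq_mk (hF : AEMeasurable F (volume.restrict (Ioi 0)))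
    (hΦ : AEMeasurable Φ (volume.restrict (Ioi 0))) :
    lmconv F Φ =ᵐ[volume.restrict (Ioi 0)] lmconv (hF.mk F) (hΦ.mk Φ) := by
  filter_upwards [ae_restrict_mem measurableSet_Ioi] with y hy
  exact lmconv_congr_ae hF.ae_eq_mk hΦ.ae_eq_mk hy

lemma measurable_lmconv (hF : Measurable F) (hΦ : Measurable Φ) : Measurable (lmconv F Φ) := by
  have hintegrand : Measurable fun p : ℝ × ℝ =>
      F p.2 * Φ (p.1 / p.2) * ENNReal.ofReal p.2⁻¹ := by fun_prop
  exact hintegrand.lintegral_prod_right' (ν := volume.restrict (Ioi 0))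

lemma aemeasurable_lmconv (hF : AEMeasurable F (volume.restrict (Ioi 0)))
    (hΦ : AEMeasurable Φ (volume.restrict (Ioi 0))) :
    AEMeasurable (lmconv F Φ) (volume.restrict (Ioi 0)) :=
  ⟨_, measurable_lmconv hF.measurable_mk hΦ.measurable_mk, ae_lmconv_eq_mk hF hΦ⟩

lemma lintegral_lmconv_mul (hF : Measurable F) (hΦ : Measurable Φ) {G : ℝ → ℝ≥0∞}
    (hG : Measurable G) :
    ∫⁻ y in Ioi 0, lmconv F Φ y * G y
      = ∫⁻ x in Ioi 0, F x * ∫⁻ u in Ioi 0, Φ u * G (x * u) := by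
  calc ∫⁻ y in Ioi 0, lmconv F Φ y * G y
      = ∫⁻ y in Ioi 0, ∫⁻ x in Ioi 0, F x * Φ (y / x) * ENNReal.ofReal x⁻¹ * G y := by
        refine lintegral_congr fun y => ?_
        rw [lmconv, lintegral_mul_const _ (by fun_prop)]
    _ = ∫⁻ x in Ioi 0, ∫⁻ y in Ioi 0, F x * Φ (y / x) * ENNReal.ofReal x⁻¹ * G y :=
        lintegral_lintegral_swap (by fun_prop)
    _ = ∫⁻ x in Ioi 0, F x * ∫⁻ u in Ioi 0, Φ u * G (x * u) := by
        refine setLIntegral_congr_fun measurableSet_Ioi fun x (hx : 0 < x) => ?_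
        have hscale := lintegral_Ioi_comp_mul_left (fun y => Φ (y / x) * G y) hx
        simp only [mul_div_cancel_left₀ _ hx.ne'] at hscale
        rw [hscale, ← lintegral_const_mul' _ _ ENNReal.ofReal_ne_top, ← lintegral_const_mul _
          (by fun_prop)]
        exact lintegral_congr fun y => by ring

lemma withDensity_lmconv (hF : AEMeasurable F (volume.restrict (Ioi 0)))
    (hΦ : AEMeasurable Φ (volume.restrict (Ioi 0))) :
    (volume.restrict (Ioi 0)).withDensity (lmconv F Φ)
      = (volume.restrict (Ioi 0)).withDensity F ∗ₘ (volume.restrict (Ioi 0)).withDensity Φ := by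
  rw [withDensity_congr_ae hF.ae_eq_mk, withDensity_congr_ae hΦ.ae_eq_mk,
    withDensity_congr_ae (ae_lmconv_eq_mk hF hΦ)]
  have hFm := hF.measurable_mk
  have hΦm := hΦ.measurable_mk
  refine Measure.ext_of_lintegral _ fun G hG => ?_
  rw [Measure.lintegral_mconv hG, lintegral_withDensity_eq_lintegral_mul _
    (measurable_lmconv hFm hΦm) hG, lintegral_withDensity_eq_lintegral_mul _ hFm
    ((by fun_prop : Measurable fun p : ℝ × ℝ => G (p.1 * p.2)).lintegral_prod_right')]
  refine (lintegral_lmconv_mul hFm hΦm hG).trans (lintegral_congr fun x => ?_)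
  rw [Pi.mul_apply, lintegral_withDensity_eq_lintegral_mul _ hΦm (by fun_prop)]
  rfl

namespace IsDensity

variable {f φ : ℝ → ℝ}

lemma mconv_eq_toReal_lmconv (hf : IsDensity f) (hφ : IsDensity φ) {y : ℝ} (hy : 0 < y) :
    mconv f φ y
      = (lmconv (fun x => ENNReal.ofReal (f x)) (fun x => ENNReal.ofReal (φ x)) y).toReal := by
  have hmeas : AEMeasurable (fun x => f x * φ (y / x) / x) (volume.restrict (Ioi 0)) :=
    (hf.aemeasurable.mul (hφ.aemeasurable.comp_quasiMeasurePreserving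
      (quasiMeasurePreserving_const_div hy))).div aemeasurable_id
  have hnonneg : 0 ≤ᵐ[volume.restrict (Ioi 0)] fun x => f x * φ (y / x) / x := by
    filter_upwards [ae_restrict_mem measurableSet_Ioi] with x hx
    exact div_nonneg (mul_nonneg (hf.1 _) (hφ.1 _)) hx.le
  rw [mconv, lmconv, integral_eq_lintegral_of_nonneg_ae hnonneg hmeas.aestronglyMeasurable]
  simp only [div_eq_mul_inv, ENNReal.ofReal_mul (mul_nonneg (hf.1 _) (hφ.1 _)),
    ENNReal.ofReal_mul (hf.1 _)]

lemma aemeasurable_mconv (hf : IsDensity f) (hφ : IsDensity φ) :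
    AEMeasurable (mconv f φ) (volume.restrict (Ioi 0)) := by
  refine (aemeasurable_lmconv hf.aemeasurable.ennreal_ofReal
    hφ.aemeasurable.ennreal_ofReal).ennreal_toReal.congr ?_
  filter_upwards [ae_restrict_mem measurableSet_Ioi] with y hy
  exact (hf.mconv_eq_toReal_lmconv hφ hy).symm

lemma densityMeasure_mconv (hf : IsDensity f) (hφ : IsDensity φ) :
    densityMeasure (mconv f φ) = densityMeasure f ∗ₘ densityMeasure φ := by
  have := hf.isProbabilityMeasure
  have := hφ.isProbabilityMeasure
  set L := lmconv (fun x => ENNReal.ofReal (f x)) (fun x => ENNReal.ofReal (φ x))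
  have hlaw : (volume.restrict (Ioi 0)).withDensity L = densityMeasure f ∗ₘ densityMeasure φ :=
    withDensity_lmconv hf.aemeasurable.ennreal_ofReal hφ.aemeasurable.ennreal_ofReal
  have hmass : ∫⁻ y in Ioi 0, L y = 1 := by
    rw [← setLIntegral_univ, ← withDensity_apply _ MeasurableSet.univ, hlaw, measure_univ]
  have hfin : ∀ᵐ y ∂volume.restrict (Ioi 0), L y < ⊤ :=
    ae_lt_top' (aemeasurable_lmconv hf.aemeasurable.ennreal_ofReal
      hφ.aemeasurable.ennreal_ofReal) (hmass ▸ ENNReal.one_ne_top)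
  rw [← hlaw, densityMeasure]
  refine withDensity_congr_ae ?_
  filter_upwards [hfin, ae_restrict_mem measurableSet_Ioi] with y hLy hy
  rw [hf.mconv_eq_toReal_lmconv hφ hy, ENNReal.ofReal_toReal hLy.ne]

lemma mconv (hf : IsDensity f) (hφ : IsDensity φ) : IsDensity (mconv f φ) := by
  have := hf.isProbabilityMeasure
  have := hφ.isProbabilityMeasure
  refine isDensity_of_isProbabilityMeasure (hf.aemeasurable_mconv hφ) (fun y => ?_)
    (fun y hy => ?_) ?_
  · exact setIntegral_nonneg measurableSet_Ioi fun x hx =>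
      div_nonneg (mul_nonneg (hf.1 _) (hφ.1 _)) hx.le
  · refine setIntegral_eq_zero_of_forall_eq_zero fun x hx => ?_
    rw [hφ.2.1 _ (div_nonpos_of_nonpos_of_nonneg hy hx.le), mul_zero, zero_div]
  · rw [hf.densityMeasure_mconv hφ]
    infer_instance

end IsDensity

end MultiplicativeConvolution

section MellinTransform

open scoped FourierTransform ComplexConjugate

/-- The character `y ↦ y ^ (c - 1 + 2πit)` of `(0, ∞)`, extended to `ℝ` with absolute value
`|y| ^ (c - 1)` everywhere, with the arguments in the order of a family indexed by `t`. -/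
def mellinChar (c y t : ℝ) : ℂ := (|y| ^ (c - 1) : ℝ) * 𝐞 (t * Real.log y)

lemma cpw_eq_mellinChar (c t : ℝ) {y : ℝ} (hy : 0 < y) : cpw c t y = mellinChar c y t := by
  rw [cpw, mellinChar, abs_of_pos hy, Real.fourierChar_apply,
    Complex.cpow_def_of_ne_zero (Complex.ofReal_ne_zero.2 hy.ne'), Real.rpow_def_of_pos hy,
    ← Complex.ofReal_log hy.le, Complex.ofReal_exp, ← Complex.exp_add]
  push_cast
  ring_nf

lemma norm_mellinChar (c y t : ℝ) : ‖mellinChar c y t‖ = |y| ^ (c - 1) := by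
  rw [mellinChar, norm_mul, Circle.norm_coe, mul_one, Complex.norm_real,
    Real.norm_of_nonneg (by positivity)]

lemma measurable_mellinChar (c : ℝ) : Measurable fun p : ℝ × ℝ => mellinChar c p.1 p.2 := by
  have : Measurable fun x : ℝ => (𝐞 x : ℂ) :=
    (continuous_subtype_val.comp Real.continuous_fourierChar).measurable
  unfold mellinChar
  fun_prop

lemma mellinChar_mul (c t : ℝ) {x y : ℝ} (hx : 0 < x) (hy : 0 < y) :
    mellinChar c (x * y) t = mellinChar c x t * mellinChar c y t := by
  rw [mellinChar, mellinChar, mellinChar, abs_mul, Real.mul_rpow (abs_nonneg _) (abs_nonneg _),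
    Real.log_mul hx.ne' hy.ne', mul_add, AddChar.map_add_eq_mul, Circle.coe_mul,
    Complex.ofReal_mul]
  ring

lemma conj_mellinChar (c y t : ℝ) : conj (mellinChar c y t) = mellinChar c y (-t) := by
  rw [mellinChar, mellinChar, map_mul, Complex.conj_ofReal, neg_mul, AddChar.map_neg_eq_inv,
    Circle.coe_inv_eq_conj]

lemma mellinChar_exp (c s t : ℝ) :
    mellinChar c (Real.exp s) t = (Real.exp (s * (c - 1)) : ℝ) * 𝐞 (t * s) := by
  rw [mellinChar, abs_of_pos (Real.exp_pos s), Real.log_exp, ← Real.exp_mul]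

lemma abs_rpow_mul (a x y : ℝ) : |x * y| ^ a = |x| ^ a * |y| ^ a := by
  rw [abs_mul, Real.mul_rpow (abs_nonneg x) (abs_nonneg y)]

lemma abs_rpow_pow (y a : ℝ) (m : ℕ) : (|y| ^ a) ^ m = |y| ^ (m * a) := by
  rw [← Real.rpow_mul_natCast (abs_nonneg y), mul_comm]

lemma lintegral_Ioi_comp_exp_neg (H : ℝ → ℝ≥0∞) :
    ∫⁻ y in Ioi 0, H y = ∫⁻ s, ENNReal.ofReal (Real.exp (-s)) * H (Real.exp (-s)) := by
  have hsubst := lintegral_image_eq_lintegral_abs_deriv_mul (s := univ)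
    (f := fun s => Real.exp (-s)) MeasurableSet.univ
    (fun s _ => ((hasDerivAt_neg s).exp).hasDerivWithinAt)
    (Real.exp_injective.comp neg_injective).injOn H
  have himage : (fun s => Real.exp (-s)) '' univ = Ioi 0 := by
    rw [image_univ]
    exact (neg_surjective.range_comp Real.exp).trans Real.range_exp
  rw [himage, Measure.restrict_univ] at hsubst
  simpa only [mul_neg, mul_one, abs_neg, abs_of_pos (Real.exp_pos _)] using hsubst

lemma lintegral_enorm_integralOp_mellinChar_sq {b : ℝ → ℂ} (hb1 : Integrable b)
    (hb2 : MemLp b 2) (c : ℝ) :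
    ∫⁻ y in Ioi 0, ENNReal.ofReal (y ^ (-(2 * c - 1))) 
        * ‖integralOp volume (mellinChar c) b y‖ₑ ^ 2
      = ∫⁻ t, ‖b t‖ₑ ^ 2 := by
  have hfourier (s : ℝ) : integralOp volume (mellinChar c) b (Real.exp (-s))
      = (Real.exp (-s * (c - 1)) : ℝ) * 𝓕 b s := by
    simp only [integralOp, mellinChar_exp, mul_assoc, mul_neg, integral_const_mul,
      Real.fourier_real_eq, Circle.smul_def, smul_eq_mul]
  have hweight (s : ℝ) : Real.exp (-s) * Real.exp (-s) ^ (-(2 * c - 1))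
      * Real.exp (-s * (c - 1)) ^ 2 = 1 := by
    rw [← Real.exp_mul, ← Real.exp_nat_mul, ← Real.exp_add, ← Real.exp_add, Real.exp_eq_one_iff]
    push_cast
    ring
  calc _ = ∫⁻ s, ‖𝓕 b s‖ₑ ^ 2 := by
        rw [lintegral_Ioi_comp_exp_neg]
        refine lintegral_congr fun s => ?_
        rw [hfourier, enorm_mul, mul_pow, ← ofReal_norm (Complex.ofReal _), Complex.norm_real,
          Real.norm_of_nonneg (Real.exp_pos _).le, ← ENNReal.ofReal_pow (Real.exp_pos _).le,
          ← mul_assoc, ← mul_assoc, ← ENNReal.ofReal_mul (by positivity),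
          ← ENNReal.ofReal_mul (by positivity), hweight, ENNReal.ofReal_one, one_mul]
    _ = ∫⁻ t, ‖b t‖ₑ ^ 2 := by
        have hplancherel := eLpNorm_fourier_eq hb1 hb2
        simp only [eLpNorm_eq_lintegral_rpow_enorm_toReal two_ne_zero ENNReal.ofNat_ne_top,
          ENNReal.toReal_ofNat, ENNReal.rpow_ofNat] at hplancherel
        exact ENNReal.rpow_left_injective (by norm_num) hplancherel

namespace IsDensity

variable {f φ : ℝ → ℝ} {a c : ℝ}

lemma mellinT_eq_familyMean (hf : IsDensity f) (c : ℝ) :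
    mellinT c f = familyMean (densityMeasure f) (mellinChar c) := by
  ext t
  rw [familyMean, hf.integral_densityMeasure]
  refine setIntegral_congr_fun measurableSet_Ioi fun x hx => ?_
  simp only [cpw_eq_mellinChar c t hx, Complex.real_smul, mul_comm]

lemma wnorm1_eq (hf : IsDensity f) (a : ℝ) : wnorm1 a f = ∫ y, |y| ^ a ∂densityMeasure f := by
  rw [hf.integral_densityMeasure]
  refine setIntegral_congr_fun measurableSet_Ioi fun x (hx : 0 < x) => ?_
  simp only [abs_of_nonneg (hf.1 x), abs_of_pos hx, smul_eq_mul]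

lemma memW1_iff (hf : IsDensity f) :
    MemW1 a f ↔ Integrable (fun y => |y| ^ a) (densityMeasure f) := by
  rw [hf.integrable_densityMeasure_iff]
  refine integrableOn_congr_fun (fun x (hx : 0 < x) => ?_) measurableSet_Ioi
  simp only [abs_of_nonneg (hf.1 x), abs_of_pos hx, smul_eq_mul]

lemma memLp_of_memW1 (hf : IsDensity f) (h : MemW1 (2 * a) f) :
    MemLp (fun y => |y| ^ a) 2 (densityMeasure f) := by
  refine (memLp_two_iff_integrable_sq (f := fun y : ℝ => |y| ^ a)
    (by fun_prop : Measurable fun y : ℝ => |y| ^ a).aestronglyMeasurable).2 ?_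
  simpa only [abs_rpow_pow, Nat.cast_ofNat] using hf.memW1_iff.1 h

lemma memW1_of_two_mul (hf : IsDensity f) (h : MemW1 (2 * a) f) : MemW1 a f :=
  have := hf.isProbabilityMeasure
  hf.memW1_iff.2 ((hf.memLp_of_memW1 h).integrable one_le_two)

lemma sq_wnorm1_le (hf : IsDensity f) (h : MemW1 (2 * a) f) :
    wnorm1 a f ^ 2 ≤ wnorm1 (2 * a) f := by
  have := hf.isProbabilityMeasure
  rw [hf.wnorm1_eq, hf.wnorm1_eq]
  simpa only [abs_rpow_pow, Nat.cast_ofNat] using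
    sq_integral_le_integral_sq (hf.memLp_of_memW1 h)

lemma wnorm1_pos (hf : IsDensity f) (h : MemW1 a f) : 0 < wnorm1 a f := by
  have := hf.isProbabilityMeasure
  rw [hf.wnorm1_eq]
  refine (integral_nonneg fun y => by positivity).lt_of_ne' fun h0 => ?_
  rw [integral_eq_zero_iff_of_nonneg (fun y => by positivity) (hf.memW1_iff.1 h)] at h0
  obtain ⟨y, hy0, hy⟩ := (h0.and (ae_densityMeasure_pos f)).exists
  exact (Real.rpow_pos_of_pos (abs_pos.2 hy.ne') a).ne' hy0

lemma ae_prod_mul_eq {𝕜 : Type*} [Mul 𝕜] (hf : IsDensity f) (hφ : IsDensity φ) {χ : ℝ → 𝕜}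
    (hχ : ∀ x y, 0 < x → 0 < y → χ (x * y) = χ x * χ y) :
    (fun p : ℝ × ℝ => χ p.1 * χ p.2)
      =ᵐ[(densityMeasure f).prod (densityMeasure φ)] fun p => χ (p.1 * p.2) := by
  have := hf.isProbabilityMeasure
  have := hφ.isProbabilityMeasure
  filter_upwards [Measure.quasiMeasurePreserving_fst.ae (ae_densityMeasure_pos f),
    Measure.quasiMeasurePreserving_snd.ae (ae_densityMeasure_pos φ)] with p hx hy
  exact (hχ p.1 p.2 hx hy).symm

lemma integral_mconv_of_mul {𝕜 : Type*} [RCLike 𝕜] (hf : IsDensity f) (hφ : IsDensity φ)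
    {χ : ℝ → 𝕜} (hmeas : Measurable χ) (hχ : ∀ x y, 0 < x → 0 < y → χ (x * y) = χ x * χ y) :
    ∫ y, χ y ∂densityMeasure (MultErr.mconv f φ)
      = (∫ y, χ y ∂densityMeasure f) * ∫ y, χ y ∂densityMeasure φ := by
  have := hf.isProbabilityMeasure
  have := hφ.isProbabilityMeasure
  rw [hf.densityMeasure_mconv hφ, Measure.mconv,
    integral_map (by fun_prop) hmeas.aestronglyMeasurable,
    ← integral_congr_ae (hf.ae_prod_mul_eq hφ hχ), integral_prod_mul χ χ]

lemma memW1_mconv (hf : IsDensity f) (hφ : IsDensity φ) (hfa : MemW1 a f) (hφa : MemW1 a φ) :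
    MemW1 a (MultErr.mconv f φ) := by
  have := hf.isProbabilityMeasure
  have := hφ.isProbabilityMeasure
  have hmeas : Measurable fun y : ℝ => |y| ^ a := by fun_prop
  rw [(hf.mconv hφ).memW1_iff, hf.densityMeasure_mconv hφ, Measure.mconv,
    integrable_map_measure hmeas.aestronglyMeasurable (by fun_prop)]
  exact ((hf.memW1_iff.1 hfa).mul_prod (hφ.memW1_iff.1 hφa)).congr
    (hf.ae_prod_mul_eq hφ (χ := fun y => |y| ^ a) fun x y _ _ => abs_rpow_mul a x y)

lemma wnorm1_mconv (hf : IsDensity f) (hφ : IsDensity φ) (a : ℝ) :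
    wnorm1 a (MultErr.mconv f φ) = wnorm1 a f * wnorm1 a φ := by
  rw [(hf.mconv hφ).wnorm1_eq, hf.wnorm1_eq, hφ.wnorm1_eq]
  exact hf.integral_mconv_of_mul hφ (by fun_prop) fun x y _ _ => abs_rpow_mul a x y

lemma mellinT_mconv (hf : IsDensity f) (hφ : IsDensity φ) (c t : ℝ) :
    mellinT c (MultErr.mconv f φ) t = mellinT c f t * mellinT c φ t := by
  rw [(hf.mconv hφ).mellinT_eq_familyMean, hf.mellinT_eq_familyMean, hφ.mellinT_eq_familyMean]
  exact hf.integral_mconv_of_mul hφ ((measurable_mellinChar c).comp measurable_prodMk_right)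
    fun x y => mellinChar_mul c t

lemma measurable_mellinT (hf : IsDensity f) (c : ℝ) : Measurable (mellinT c f) := by
  have := hf.isProbabilityMeasure
  rw [hf.mellinT_eq_familyMean]
  exact (measurable_mellinChar c).stronglyMeasurable.integral_prod_left'.measurable

lemma norm_mellinT_le (hf : IsDensity f) (h : MemW1 (c - 1) f) (t : ℝ) :
    ‖mellinT c f t‖ ≤ wnorm1 (c - 1) f := by
  rw [hf.mellinT_eq_familyMean, hf.wnorm1_eq]
  exact norm_integral_le_of_norm_le (hf.memW1_iff.1 h)
    (Eventually.of_forall fun y => (norm_mellinChar c y t).le)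

end IsDensity

end MellinTransform

section MellinBessel

variable {f φ : ℝ → ℝ} {a c : ℝ}

lemma lintegral_Ioi_rpow_mul_comp_mul_left (a : ℝ) (G : ℝ → ℝ≥0∞) {x : ℝ} (hx : 0 < x) :
    ∫⁻ u in Ioi 0, ENNReal.ofReal (u ^ (-a)) * G (x * u)
      = ENNReal.ofReal (x ^ (a - 1)) * ∫⁻ y in Ioi 0, ENNReal.ofReal (y ^ (-a)) * G y := by
  have hscale := lintegral_Ioi_comp_mul_left
    (fun y => ENNReal.ofReal ((y / x) ^ (-a)) * G y) hx
  simp only [mul_div_cancel_left₀ _ hx.ne'] at hscale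
  rw [hscale, ← lintegral_const_mul' _ _ ENNReal.ofReal_ne_top,
    ← lintegral_const_mul' _ _ ENNReal.ofReal_ne_top]
  refine setLIntegral_congr_fun measurableSet_Ioi fun y (hy : 0 < y) => ?_
  have hpow : x⁻¹ * (y / x) ^ (-a) = x ^ (a - 1) * y ^ (-a) := by
    rw [Real.div_rpow hy.le hx.le, Real.rpow_neg hx.le, Real.rpow_sub_one hx.ne']
    field_simp
  rw [← mul_assoc, ← mul_assoc, ← ENNReal.ofReal_mul (by positivity),
    ← ENNReal.ofReal_mul (by positivity), hpow]

lemma measurable_integralOp {E T : Type*} [MeasurableSpace E] [MeasurableSpace T] {ν : Measure T}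
    [SFinite ν] {v : E → T → ℂ} (hv : Measurable fun p : E × T => v p.1 p.2) {b : T → ℂ}
    (hb : AEStronglyMeasurable b ν) : Measurable (integralOp ν v b) := by
  have hmk : integralOp ν v b = integralOp ν v (hb.mk b) := by
    ext y
    refine integral_congr_ae ?_
    filter_upwards [hb.ae_eq_mk] with t ht
    rw [ht]
  rw [hmk]
  exact (hv.stronglyMeasurable.mul
    (hb.stronglyMeasurable_mk.comp_measurable measurable_snd)).integral_prod_right'.measurable

lemma integralOp_restrict {E T : Type*} [MeasurableSpace T] (ν : Measure T) {s : Set T}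
    (hs : MeasurableSet s) (v : E → T → ℂ) (b : T → ℂ) :
    integralOp (ν.restrict s) v b = integralOp ν v (s.indicator b) := by
  ext y
  rw [integralOp, ← integral_indicator hs]
  simp only [integralOp, indicator_mul_right]

lemma ofReal_integral_norm_sq_le {E : Type*} [MeasurableSpace E] (μ : Measure E) (F : E → ℂ) :
    ENNReal.ofReal (∫ y, ‖F y‖ ^ 2 ∂μ) ≤ ∫⁻ y, ‖F y‖ₑ ^ 2 ∂μ := by
  rw [← Real.enorm_of_nonneg (integral_nonneg fun y => sq_nonneg ‖F y‖)]
  refine (enorm_integral_le_lintegral_enorm _).trans_eq (lintegral_congr fun y => ?_)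
  rw [enorm_pow, enorm_norm]

lemma lintegral_enorm_sq_eq {T : Type*} [MeasurableSpace T] {ν : Measure T} {b : T → ℂ}
    (hb : MemLp b 2 ν) : ∫⁻ t, ‖b t‖ₑ ^ 2 ∂ν = ENNReal.ofReal (∫ t, ‖b t‖ ^ 2 ∂ν) := by
  rw [ofReal_integral_eq_lintegral_ofReal hb.norm.integrable_sq
    (Eventually.of_forall fun t => sq_nonneg _)]
  simp only [ENNReal.ofReal_pow (norm_nonneg _), ofReal_norm]

namespace IsDensity

lemma ae_ofReal_le_wnormInf_mul (hφ : IsDensity φ) (a : ℝ) : ∀ᵐ u ∂volume.restrict (Ioi 0),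
    ENNReal.ofReal (φ u) ≤ wnormInf a φ * ENNReal.ofReal (u ^ (-a)) := by
  filter_upwards [ENNReal.ae_le_essSup (μ := volume.restrict (Ioi 0))
    fun x => ENNReal.ofReal (|φ x| * x ^ a), ae_restrict_mem measurableSet_Ioi]
    with u hsup (hu : 0 < u)
  calc ENNReal.ofReal (φ u) = ENNReal.ofReal (|φ u| * u ^ a) * ENNReal.ofReal (u ^ (-a)) := by
        rw [← ENNReal.ofReal_mul (by positivity), mul_assoc, ← Real.rpow_add hu, add_neg_cancel,
          Real.rpow_zero, mul_one, abs_of_nonneg (hφ.1 u)]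
    _ ≤ wnormInf a φ * ENNReal.ofReal (u ^ (-a)) := mul_le_mul_left hsup _

lemma ofReal_wnorm1 (hf : IsDensity f) (hfa : MemW1 a f) :
    ENNReal.ofReal (wnorm1 a f) = ∫⁻ y, ENNReal.ofReal (|y| ^ a) ∂densityMeasure f := by
  rw [hf.wnorm1_eq, ofReal_integral_eq_lintegral_ofReal (hf.memW1_iff.1 hfa)
    (Eventually.of_forall fun y => by positivity)]

lemma lintegral_comp_mul_left_le (hφ : IsDensity φ) (a : ℝ) {G : ℝ → ℝ≥0∞} (hG : Measurable G)
    {x : ℝ} (hx : 0 < x) : ∫⁻ u, G (x * u) ∂densityMeasure φ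
      ≤ ENNReal.ofReal (|x| ^ (a - 1))
        * (wnormInf a φ * ∫⁻ y in Ioi 0, ENNReal.ofReal (y ^ (-a)) * G y) := by
  calc ∫⁻ u, G (x * u) ∂densityMeasure φ
      = ∫⁻ u in Ioi 0, ENNReal.ofReal (φ u) * G (x * u) :=
        lintegral_withDensity_eq_lintegral_mul₀ hφ.aemeasurable.ennreal_ofReal (by fun_prop)
    _ ≤ ∫⁻ u in Ioi 0, wnormInf a φ * (ENNReal.ofReal (u ^ (-a)) * G (x * u)) := by
        refine lintegral_mono_ae ((hφ.ae_ofReal_le_wnormInf_mul a).mono fun u hu => ?_)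
        rw [← mul_assoc]
        exact mul_le_mul_left hu _
    _ = _ := by
        rw [lintegral_const_mul _ (by fun_prop), lintegral_Ioi_rpow_mul_comp_mul_left a G hx,
          abs_of_pos hx]
        ring

lemma lintegral_densityMeasure_mconv_le (hf : IsDensity f) (hφ : IsDensity φ)
    (hfa : MemW1 (a - 1) f) {G : ℝ → ℝ≥0∞} (hG : Measurable G) :
    ∫⁻ y, G y ∂densityMeasure (MultErr.mconv f φ) ≤ wnormInf a φ
      * (ENNReal.ofReal (wnorm1 (a - 1) f) * ∫⁻ y in Ioi 0, ENNReal.ofReal (y ^ (-a)) * G y) := by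
  have := hφ.isProbabilityMeasure
  rw [hf.densityMeasure_mconv hφ, Measure.lintegral_mconv hG]
  refine (lintegral_mono_ae ((ae_densityMeasure_pos f).mono fun x hx =>
    hφ.lintegral_comp_mul_left_le a hG hx)).trans_eq ?_
  rw [lintegral_mul_const _ (by fun_prop), hf.ofReal_wnorm1 hfa]
  ring

lemma sq_Vc_le_V2c (hf : IsDensity f) (hφ : IsDensity φ) (hf4 : MemW1 (4 * (c - 1)) f)
    (hφ4 : MemW1 (4 * (c - 1)) φ) : Vc c f φ ^ 2 ≤ V2c c f φ := by
  have hsplit : 4 * (c - 1) = 2 * (2 * (c - 1)) := by ring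
  have hsq := (hf.mconv hφ).sq_wnorm1_le (hsplit ▸ hf.memW1_mconv hφ hf4 hφ4)
  rw [← hsplit] at hsq
  rw [Vc, V2c]
  rcases le_total (wnorm1 (2 * (c - 1)) (MultErr.mconv f φ)) 1 with h | h
  · rw [max_eq_right h, one_pow]
    exact le_max_right _ _
  · rw [max_eq_left h]
    exact hsq.trans (le_max_left _ _)

lemma wnormInfR_mul_wnorm1_le (hf : IsDensity f) (hφ : IsDensity φ)
    (hφ2 : MemW1 (2 * (c - 1)) φ) :
    wnormInfR (2 * c - 1) φ * wnorm1 (2 * (c - 1)) f ≤ cphi c φ * Vc c f φ := by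
  have hφpos := hφ.wnorm1_pos hφ2
  have hmul : wnormInfR (2 * c - 1) φ * wnorm1 (2 * (c - 1)) f
      = wnormInfR (2 * c - 1) φ / wnorm1 (2 * (c - 1)) φ
        * wnorm1 (2 * (c - 1)) (MultErr.mconv f φ) := by
    rw [hf.wnorm1_mconv hφ]
    field_simp
  rw [hmul, cphi, Vc, (hf.mconv hφ).wnorm1_eq]
  gcongr
  · exact le_max_left _ _
  · exact le_max_left _ _

/-- Fubini reduces the bound to the scaling of `y ^ (1 - 2 * c) dy`, for which the family
`mellinChar c` is isometric by Plancherel's theorem. -/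
lemma integral_norm_integralOp_mellinChar_sq_le (hf : IsDensity f) (hφ : IsDensity φ)
    (hf2 : MemW1 (2 * (c - 1)) f) (hφinf : wnormInf (2 * c - 1) φ ≠ ⊤) {s : Set ℝ}
    (hs : MeasurableSet s) (hsfin : volume s ≠ ⊤) {b : ℝ → ℂ}
    (hb : MemLp b 2 (volume.restrict s)) :
    ∫ y, ‖integralOp (volume.restrict s) (mellinChar c) b y‖ ^ 2
        ∂densityMeasure (MultErr.mconv f φ)
      ≤ wnormInfR (2 * c - 1) φ * wnorm1 (2 * (c - 1)) f * ∫ t in s, ‖b t‖ ^ 2 := by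
  have : Fact (volume s < ⊤) := ⟨hsfin.lt_top⟩
  have hsup0 : 0 ≤ wnormInfR (2 * c - 1) φ := ENNReal.toReal_nonneg
  have hsup : wnormInf (2 * c - 1) φ = ENNReal.ofReal (wnormInfR (2 * c - 1) φ) :=
    (ENNReal.ofReal_toReal hφinf).symm
  have hmom : 0 ≤ wnorm1 (2 * (c - 1)) f :=
    hf.wnorm1_eq _ ▸ integral_nonneg fun y => by positivity
  have hb2 : MemLp (s.indicator b) 2 := (memLp_indicator_iff_restrict hs).2 hb
  have hb1 : Integrable (s.indicator b) :=
    (integrable_indicator_iff hs).2 (hb.integrable one_le_two)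
  have hG := (measurable_integralOp (measurable_mellinChar c) hb2.1).enorm.pow_const 2
  have hexp : 2 * c - 1 - 1 = 2 * (c - 1) := by ring
  have hbound := hf.lintegral_densityMeasure_mconv_le hφ (a := 2 * c - 1) (hexp ▸ hf2) hG
  rw [lintegral_enorm_integralOp_mellinChar_sq hb1 hb2, lintegral_enorm_sq_eq hb2, hexp,
    hsup, ← mul_assoc, ← ENNReal.ofReal_mul hsup0, ← ENNReal.ofReal_mul (mul_nonneg hsup0 hmom)]
    at hbound
  have hindicator : ∫ t, ‖s.indicator b t‖ ^ 2 = ∫ t in s, ‖b t‖ ^ 2 := by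
    rw [← integral_indicator hs]
    congr with t
    by_cases ht : t ∈ s <;> simp [ht]
  rw [integralOp_restrict volume hs, ← hindicator,
    ← ENNReal.ofReal_le_ofReal_iff (by positivity)]
  exact (ofReal_integral_norm_sq_le _ _).trans hbound

lemma isBesselFamily_mellinChar (hf : IsDensity f) (hφ : IsDensity φ)
    (hf4 : MemW1 (4 * (c - 1)) f) (hφ4 : MemW1 (4 * (c - 1)) φ)
    (hφinf : wnormInf (2 * c - 1) φ ≠ ⊤) {s : Set ℝ} (hs : MeasurableSet s)
    (hsfin : volume s ≠ ⊤) :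
    IsBesselFamily (densityMeasure (MultErr.mconv f φ)) (volume.restrict s) (mellinChar c)
      (fun y => |y| ^ (c - 1)) (cphi c φ * Vc c f φ) (Vc c f φ) (V2c c f φ) where
  measurable := measurable_mellinChar c
  measurable_env := by fun_prop
  norm_le y t := (norm_mellinChar c y t).le
  env_nonneg y := by positivity
  integrable_env := by
    simpa only [abs_rpow_pow, Nat.cast_ofNat] using
      (hf.mconv hφ).memW1_iff.1 (hf.memW1_mconv hφ hf4 hφ4)
  integral_env_le := by
    simp only [abs_rpow_pow, Nat.cast_ofNat]
    exact ((hf.mconv hφ).wnorm1_eq _).symm.trans_le (le_max_left _ _)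
  integral_norm_sq_le t := by
    simp only [norm_mellinChar, abs_rpow_pow, Nat.cast_ofNat]
    exact ((hf.mconv hφ).wnorm1_eq _).symm.trans_le (le_max_left _ _)
  bessel_pos := mul_pos (zero_lt_one.trans_le (le_max_right _ _))
    (zero_lt_one.trans_le (le_max_right _ _))
  integral_integralOp_sq_le b hb := by
    have hsplit : 4 * (c - 1) = 2 * (2 * (c - 1)) := by ring
    refine (hf.integral_norm_integralOp_mellinChar_sq_le hφ
      (hf.memW1_of_two_mul (hsplit ▸ hf4)) hφinf hs hsfin hb).trans ?_
    exact mul_le_mul_of_nonneg_right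
      (hf.wnormInfR_mul_wnorm1_le hφ (hφ.memW1_of_two_mul (hsplit ▸ hφ4)))
      (integral_nonneg fun t => sq_nonneg _)

end IsDensity

end MellinBessel

section WeightFunction

variable {φ w : ℝ → ℝ} {c K : ℝ}

lemma integral_le_sqrt_mul_sqrt {T : Type*} [MeasurableSpace T] {ν : Measure T}
    [IsFiniteMeasure ν] {g : T → ℝ} (hg0 : ∀ t, 0 ≤ g t) (hg : MemLp g 2 ν) :
    ∫ t, g t ∂ν ≤ √(ν.real univ) * √(∫ t, g t ^ 2 ∂ν) := by
  have hcs := integral_mul_le_Lp_mul_Lq_of_nonneg (μ := ν) Real.HolderConjugate.two_two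
    (f := fun _ => 1) (Eventually.of_forall fun _ => zero_le_one) (Eventually.of_forall hg0)
    (by simpa using memLp_const 1) (by simpa using hg)
  simpa only [Real.sqrt_eq_rpow, one_mul, Real.rpow_ofNat, one_pow, integral_const, smul_eq_mul,
    mul_one] using hcs

lemma wgt_nonneg (c : ℝ) (w φ : ℝ → ℝ) (t : ℝ) : 0 ≤ wgt c w φ t := by
  rw [wgt]
  positivity

lemma ae_wgt_le (hw0 : ∀ t, 0 ≤ w t) (hfin : winf c K w φ ≠ ⊤) :
    ∀ᵐ t ∂volume.restrict (Icc (-K) K), wgt c w φ t ≤ √(Δinf c K w φ) := by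
  have hsqrt : √(Δinf c K w φ) = (winf c K w φ).toReal ^ 2 := by
    rw [Δinf, show 4 = 2 * 2 by rfl, pow_mul, Real.sqrt_sq (sq_nonneg _)]
  filter_upwards [ae_restrict_of_ae (ENNReal.ae_le_essSup (μ := volume) fun t =>
    ENNReal.ofReal ((Icc (-K) K).indicator (fun t => w t / ‖mellinT c φ t‖) t)),
    ae_restrict_mem measurableSet_Icc] with t hsup ht
  rw [indicator_of_mem ht] at hsup
  rw [hsqrt, wgt, ← div_pow]
  exact pow_le_pow_left₀ (div_nonneg (hw0 t) (norm_nonneg _))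
    ((ENNReal.ofReal_le_iff_le_toReal hfin).1 hsup) 2

lemma setIntegral_wgt_sq (c K : ℝ) (w φ : ℝ → ℝ) :
    ∫ t in Icc (-K) K, wgt c w φ t ^ 2 = Δ4 c K w φ := by
  simp only [wgt, Δ4, div_pow, ← pow_mul]

lemma Δ4_nonneg (c K : ℝ) (w φ : ℝ → ℝ) : 0 ≤ Δ4 c K w φ :=
  integral_nonneg fun t => by positivity

lemma Δ4_eq_zero_of_Δinf_eq_zero (hw0 : ∀ t, 0 ≤ w t) (hfin : winf c K w φ ≠ ⊤)
    (hΔ : Δinf c K w φ = 0) : Δ4 c K w φ = 0 := by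
  rw [← setIntegral_wgt_sq]
  refine integral_eq_zero_of_ae ?_
  filter_upwards [ae_wgt_le hw0 hfin] with t ht
  rw [hΔ, Real.sqrt_zero] at ht
  simp [le_antisymm ht (wgt_nonneg c w φ t)]

namespace IsDensity

lemma measurable_wgt (hφ : IsDensity φ) (hw : Measurable w) (c : ℝ) : Measurable (wgt c w φ) :=
  (hw.pow_const 2).div ((hφ.measurable_mellinT c).norm.pow_const 2)

lemma memLp_wgt (hφ : IsDensity φ) (hw : Measurable w) (hw0 : ∀ t, 0 ≤ w t)
    (hfin : winf c K w φ ≠ ⊤) : MemLp (wgt c w φ) 2 (volume.restrict (Icc (-K) K)) :=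
  MemLp.of_bound (hφ.measurable_wgt hw c).aestronglyMeasurable _
    ((ae_wgt_le hw0 hfin).mono fun t ht =>
      (Real.norm_of_nonneg (wgt_nonneg c w φ t)).trans_le ht)

lemma integral_wgt_le (hφ : IsDensity φ) (hw : Measurable w) (hw0 : ∀ t, 0 ≤ w t)
    (hK : 0 ≤ K) (hfin : winf c K w φ ≠ ⊤) :
    ∫ t in Icc (-K) K, wgt c w φ t ≤ √(2 * K) * √(Δ4 c K w φ) := by
  refine (integral_le_sqrt_mul_sqrt (wgt_nonneg c w φ)
    (hφ.memLp_wgt hw hw0 hfin)).trans_eq ?_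
  rw [setIntegral_wgt_sq, measureReal_restrict_apply_univ, Real.volume_real_Icc_of_le (by linarith),
    sub_neg_eq_add, ← two_mul]

lemma isBoundedWeight_wgt (hφ : IsDensity φ) (hw : Measurable w) (hw0 : ∀ t, 0 ≤ w t)
    (hK : 0 ≤ K) (hfin : winf c K w φ ≠ ⊤) :
    IsBoundedWeight (volume.restrict (Icc (-K) K)) (wgt c w φ) (√(Δinf c K w φ))
      (√(2 * K) * √(Δ4 c K w φ)) (√(Δ4 c K w φ) ^ 2) where
  measurable := hφ.measurable_wgt hw c
  nonneg := wgt_nonneg c w φ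
  ae_le := ae_wgt_le hw0 hfin
  integral_le := hφ.integral_wgt_le hw hw0 hK hfin
  integral_sq_le := by rw [setIntegral_wgt_sq, Real.sq_sqrt (Δ4_nonneg c K w φ)]

lemma qk2_eq_zero_of_Δ4_eq_zero (hφ : IsDensity φ) (hw : Measurable w) (hw0 : ∀ t, 0 ≤ w t)
    (hMφ : ∀ t, mellinT c φ t ≠ 0) (hfin : winf c K w φ ≠ ⊤) (hΔ : Δ4 c K w φ = 0) (h : ℝ → ℝ) :
    qk2 c K w h = 0 := by
  rw [← setIntegral_wgt_sq, integral_eq_zero_iff_of_nonneg (fun t => sq_nonneg _)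
    (hφ.memLp_wgt hw hw0 hfin).integrable_sq] at hΔ
  refine integral_eq_zero_of_ae ?_
  filter_upwards [hΔ] with t ht
  have hwt : w t = 0 := by
    simpa [wgt, hMφ t] using ht
  simp [hwt]

end IsDensity

end WeightFunction

section QuadraticDistance

open scoped ComplexConjugate

variable {Ω : Type*} {c K : ℝ} {w φ f f₀ : ℝ → ℝ}

lemma qk2_eq_weightedInner (hMφ : ∀ t, mellinT c φ t ≠ 0) {h : ℝ → ℝ} {m : ℝ → ℂ}
    (hm : ∀ t, m t = mellinT c h t * mellinT c φ t) :
    qk2 c K w h = weightedInner (volume.restrict (Icc (-K) K)) (wgt c w φ) m m := by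
  rw [weightedInner_self, qk2]
  congr with t
  have := norm_ne_zero_iff.2 (hMφ t)
  rw [hm, norm_mul, wgt]
  field_simp

lemma setIntegral_cpw_mul_cpw_neg_re {x y : ℝ} (hx : 0 < x) (hy : 0 < y) :
    (∫ t in Icc (-K) K, cpw c t x * cpw c (-t) y * (wgt c w φ t : ℂ)).re
      = gramKernel (volume.restrict (Icc (-K) K)) (wgt c w φ) (mellinChar c) x y := by
  simp only [gramKernel, weightedInner, cpw_eq_mellinChar c _ hx, cpw_eq_mellinChar c _ hy,
    conj_mellinChar]

lemma That_re {n : ℕ} (Y : Fin n → Ω → ℝ) {ω : Ω} (hpos : ∀ j, 0 < Y j ω) :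
    (That c K w φ Y ω).re = ((n : ℝ) * (n - 1))⁻¹ * (2 * pairSum
      (gramKernel (volume.restrict (Icc (-K) K)) (wgt c w φ) (mellinChar c)) n (Y · ω)) := by
  have hcoef : ((n : ℂ) * (n - 1))⁻¹ = (((n : ℝ) * (n - 1))⁻¹ : ℝ) := by push_cast; rfl
  rw [That, hcoef, Complex.re_ofReal_mul, ← sum_sum_ne_eq_pairSum
    (A := gramKernel _ _ (mellinChar c)) (fun x y => weightedInner_comm _ _ _ _)]
  simp only [Complex.re_sum, apply_ite Complex.re, Complex.zero_re,
    setIntegral_cpw_mul_cpw_neg_re (hpos _) (hpos _)]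

lemma Shat_re {n : ℕ} (Y : Fin n → Ω → ℝ) {ω : Ω} (hpos : ∀ j, 0 < Y j ω) :
    (Shat c K w φ f₀ Y ω).re = (n : ℝ)⁻¹ * ∑ j, weightedInner (volume.restrict (Icc (-K) K))
      (wgt c w φ) (mellinChar c (Y j ω)) (mellinT c (mconv f₀ φ)) := by
  rw [Shat, ← Complex.ofReal_natCast, ← Complex.ofReal_inv, Complex.re_ofReal_mul, Complex.re_sum]
  simp only [weightedInner, cpw_eq_mellinChar c _ (hpos _)]

namespace IsDensity

lemma memW1_of_four_mul {a : ℝ} (hf : IsDensity f) (h : MemW1 (4 * a) f) : MemW1 a f := by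
  rw [show 4 * a = 2 * (2 * a) by ring] at h
  exact hf.memW1_of_two_mul (hf.memW1_of_two_mul h)

lemma mellinT_sub (hf : IsDensity f) (hf₀ : IsDensity f₀) (hfc : MemW1 (c - 1) f)
    (hf₀c : MemW1 (c - 1) f₀) (t : ℝ) :
    mellinT c (fun x => f x - f₀ x) t = mellinT c f t - mellinT c f₀ t := by
  have hint {h : ℝ → ℝ} (hh : IsDensity h) (hhc : MemW1 (c - 1) h) :
      IntegrableOn (fun x => cpw c t x * (h x : ℂ)) (Ioi 0) := by
    have hchar : Integrable (fun y => mellinChar c y t) (densityMeasure h) :=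
      (hh.memW1_iff.1 hhc).mono'
        ((measurable_mellinChar c).comp measurable_prodMk_right).aestronglyMeasurable
        (Eventually.of_forall fun y => (norm_mellinChar c y t).le)
    refine (hh.integrable_densityMeasure_iff.1 hchar).congr_fun (fun x hx => ?_) measurableSet_Ioi
    simp only [cpw_eq_mellinChar c t hx, Complex.real_smul, mul_comm]
  simp only [mellinT, Complex.ofReal_sub, mul_sub]
  exact integral_sub (hint hf hfc) (hint hf₀ hf₀c)

lemma memLp_mellinT (hf : IsDensity f) (hfc : MemW1 (c - 1) f) {ν : Measure ℝ}
    [IsFiniteMeasure ν] : MemLp (mellinT c f) 2 ν :=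
  MemLp.of_bound (hf.measurable_mellinT c).aestronglyMeasurable _
    (Eventually.of_forall (hf.norm_mellinT_le hfc))

lemma qk2_sub_eq_weightedInner (hf : IsDensity f) (hf₀ : IsDensity f₀) (hφ : IsDensity φ)
    (hMφ : ∀ t, mellinT c φ t ≠ 0) (hfc : MemW1 (c - 1) f) (hf₀c : MemW1 (c - 1) f₀) :
    qk2 c K w (fun x => f x - f₀ x) = weightedInner (volume.restrict (Icc (-K) K)) (wgt c w φ)
      (mellinT c (MultErr.mconv f φ) - mellinT c (MultErr.mconv f₀ φ))
      (mellinT c (MultErr.mconv f φ) - mellinT c (MultErr.mconv f₀ φ)) := by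
  refine qk2_eq_weightedInner hMφ fun t => ?_
  rw [Pi.sub_apply, hf.mellinT_sub hf₀ hfc hf₀c, hf.mellinT_mconv hφ, hf₀.mellinT_mconv hφ,
    sub_mul]

lemma qhat_eq_distanceStat (hf₀ : IsDensity f₀) (hφ : IsDensity φ)
    (hMφ : ∀ t, mellinT c φ t ≠ 0) {n : ℕ} (Y : Fin n → Ω → ℝ) {ω : Ω} (hpos : ∀ j, 0 < Y j ω) :
    qhat c K w φ f₀ Y ω = distanceStat (volume.restrict (Icc (-K) K)) (wgt c w φ) (mellinChar c)
      (mellinT c (MultErr.mconv f₀ φ)) n (Y · ω) := by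
  rw [qhat, distanceStat, qk2_eq_weightedInner hMφ (hf₀.mellinT_mconv hφ c), Complex.sub_re,
    ← Complex.ofReal_ofNat, Complex.re_ofReal_mul, That_re Y hpos, Shat_re Y hpos]

end IsDensity

end QuadraticDistance

section QuantileBound

variable {Ω : Type*} [MeasurableSpace Ω] {P : Measure Ω} {c K : ℝ} {w φ f f₀ g : ℝ → ℝ} {n : ℕ}

namespace IID

variable {Y : Fin n → Ω → ℝ}

lemma ae_pos (hY : IID P Y g) (hg : IsDensity g) : ∀ᵐ ω ∂P, ∀ j, 0 < Y j ω := by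
  refine ae_all_iff.2 fun j => ae_of_ae_map (hY.2 j).1.aemeasurable ?_
  rw [(hY.2 j).2, hg.withDensity_eq]
  exact ae_densityMeasure_pos g

lemma map_eq_sampleLaw [IsProbabilityMeasure P] (hY : IID P Y g) (hg : IsDensity g) :
    P.map (fun ω j => Y j ω) = sampleLaw (densityMeasure g) n := by
  rw [(ProbabilityTheory.iIndepFun_iff_map_fun_eq_pi_map fun j => (hY.2 j).1.aemeasurable).1 hY.1]
  congr with j : 1
  rw [(hY.2 j).2, hg.withDensity_eq]

end IID

lemma measure_qhat_lt_le_of_sampleLaw [IsProbabilityMeasure P] (hf₀ : IsDensity f₀)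
    (hφ : IsDensity φ) (hMφ : ∀ t, mellinT c φ t ≠ 0) (hg : IsDensity g)
    {Y : Fin n → Ω → ℝ} (hY : IID P Y g) {τ β : ℝ} (hlaw : (sampleLaw (densityMeasure g) n).real
      {y | distanceStat (volume.restrict (Icc (-K) K)) (wgt c w φ) (mellinChar c)
        (mellinT c (mconv f₀ φ)) n y < τ} ≤ β) :
    P {ω | qhat c K w φ f₀ Y ω < τ} ≤ ENNReal.ofReal β := by
  have := hg.isProbabilityMeasure
  set A := {y | distanceStat (volume.restrict (Icc (-K) K)) (wgt c w φ) (mellinChar c)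
    (mellinT c (mconv f₀ φ)) n y < τ}
  have hsub : ∀ᵐ ω ∂P, qhat c K w φ f₀ Y ω < τ → (Y · ω) ∈ A := by
    filter_upwards [hY.ae_pos hg] with ω hpos hlt
    rwa [mem_ofPred_eq, ← hf₀.qhat_eq_distanceStat hφ hMφ Y hpos]
  calc P {ω | qhat c K w φ f₀ Y ω < τ} ≤ P ((fun ω j => Y j ω) ⁻¹' A) := measure_mono_ae hsub
    _ ≤ P.map (fun ω j => Y j ω) A :=
      Measure.le_map_apply (aemeasurable_pi_lambda _ fun j => (hY.2 j).1.aemeasurable) A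
    _ = ENNReal.ofReal ((sampleLaw (densityMeasure g) n).real A) := by
      rw [hY.map_eq_sampleLaw hg, ofReal_measureReal]
    _ ≤ ENNReal.ofReal β := ENNReal.ofReal_le_ofReal hlaw

lemma Lq_div_four {β : ℝ} : Lq (β / 4) = 1 + Real.log (4 / β) := by
  rw [Lq, ← inv_div, Real.log_inv, sub_neg_eq_add]

lemma one_le_Lq_div_four {β : ℝ} (hβ : 0 < β) (hβ1 : β ≤ 1) : 1 ≤ Lq (β / 4) := by
  rw [Lq_div_four, le_add_iff_nonneg_right]
  exact Real.log_nonneg ((one_le_div hβ).2 (by linarith))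

theorem quantile_bound_alternative_general [IsProbabilityMeasure P] (hw : Measurable w)
    (hw0 : ∀ t, 0 ≤ w t) (hφ : IsDensity φ) (hf₀ : IsDensity f₀) (hf : IsDensity f)
    (hMφ : ∀ t, mellinT c φ t ≠ 0) (hK : 1 / 2 ≤ K) (hwinf : winf c K w φ ≠ ⊤)
    (hφinf : wnormInf (2 * c - 1) φ ≠ ⊤) (hφ4 : MemW1 (4 * (c - 1)) φ) (hf₀1 : MemW1 (c - 1) f₀)
    (hf4 : MemW1 (4 * (c - 1)) f) {β : ℝ} (hβ : 0 < β) (hβ1 : β ≤ 1) (hn : 2 ≤ n)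
    {τ : ℝ} (hτ : 0 < τ)
    (hsep : 2 * τ
        + 2 * (18 * cphi c φ * V2c c f φ + 138986 * (Lq (β / 4) / β) * (√(2 * K) / n))
          * √(Lq (β / 4)) * √(Δ4 c K w φ) / n
        + 112 * cphi c φ * Vc c f φ * (Lq (β / 4) / β) * √(Δinf c K w φ) / n
      ≤ qk2 c K w (fun x => f x - f₀ x))
    {Y : Fin n → Ω → ℝ} (hY : IID P Y (mconv f φ)) :
    P {ω | qhat c K w φ f₀ Y ω < τ} ≤ ENNReal.ofReal β := by
  have := (hf.mconv hφ).isProbabilityMeasure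
  have hC : 1 ≤ cphi c φ := le_max_right _ _
  have hV : 1 ≤ Vc c f φ := le_max_right _ _
  have hW : 1 ≤ V2c c f φ := le_max_right _ _
  have hL := one_le_Lq_div_four hβ hβ1
  have hLsq : √(Lq (β / 4)) ^ 2 = Lq (β / 4) := Real.sq_sqrt (by linarith)
  have hΔ4 : Δ4 c K w φ ≠ 0 := fun h0 => by
    rw [hφ.qk2_eq_zero_of_Δ4_eq_zero hw hw0 hMφ hwinf h0] at hsep
    exact (lt_of_lt_of_le (by positivity) hsep).false
  have hΔinf : Δinf c K w φ ≠ 0 := mt (Δ4_eq_zero_of_Δinf_eq_zero hw0 hwinf) hΔ4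
  have hΔinf0 : 0 ≤ Δinf c K w φ := pow_nonneg ENNReal.toReal_nonneg 4
  have hbessel := hf.isBesselFamily_mellinChar hφ hf4 hφ4 hφinf
    (measurableSet_Icc (a := -K) (b := K)) measure_Icc_lt_top.ne
  have hweight := hφ.isBoundedWeight_wgt hw hw0 (by linarith) hwinf
  have hnull : MemLp (mellinT c (mconv f₀ φ)) 2 (volume.restrict (Icc (-K) K)) :=
    (hf₀.mconv hφ).memLp_mellinT (hf₀.memW1_mconv hφ hf₀1 (hφ.memW1_of_four_mul hφ4))
  refine measure_qhat_lt_le_of_sampleLaw hf₀ hφ hMφ (hf.mconv hφ) hY <|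
    hbessel.measureReal_distanceStat_lt_le hweight hC hV (hf.sq_Vc_le_V2c hφ hf4 hφ4)
      (Real.one_le_sqrt.2 (by linarith)) (Real.sqrt_pos.2 ((Δ4_nonneg c K w φ).lt_of_ne' hΔ4))
      (Real.sqrt_pos.2 (hΔinf0.lt_of_ne' hΔinf)) hnull hn hβ hβ1 (Real.one_le_sqrt.2 hL) ?_ hτ.le ?_
  · rw [hLsq, Lq_div_four]
    linarith
  · rwa [hLsq, ← (hf.mconv hφ).mellinT_eq_familyMean,
      ← hf.qk2_sub_eq_weightedInner hf₀ hφ hMφ (hf.memW1_of_four_mul hf4) hf₀1]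

end QuantileBound

/-- Proposition 3.2: bound for the quantile of the test statistic `q̂_k²`
under the alternative: if the density `f` of `X` satisfies the separation condition for some
critical value `τ > 0`, then `P(q̂_k² < τ) ≤ β`. -/
theorem quantile_bound_alternative
    {Ω : Type*} [MeasurableSpace Ω] (P : Measure Ω) [IsProbabilityMeasure P]
    (c : ℝ) (w φ f₀ : ℝ → ℝ)
    (hw : IsSymmDensity w) (hφ : regD c φ) (hf₀ : regD c f₀)
    (hMφ : ∀ t, mellinT c φ t ≠ 0)
    (hwinf : ∀ k : ℝ, 0 < k → winf c k w φ ≠ ⊤)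
    (hφinf : wnormInf (2 * c - 1) φ ≠ ⊤)
    (hφ4 : MemW1 (4 * (c - 1)) φ)
    (hf₀4 : MemW1 (4 * (c - 1)) f₀)
    (β : ℝ) (hβ : β ∈ Ioo (0 : ℝ) 1)
    (n : ℕ) (hn : 2 ≤ n) (k : ℕ) (hk : 1 ≤ k)
    (f : ℝ → ℝ) (hf : regD c f) (hf4 : MemW1 (4 * (c - 1)) f)
    (τ : ℝ) (hτ : 0 < τ)
    (hsep : 2 * τ
        + 2 * (18 * cphi c φ * V2c c f φ
            + 138986 * (Lq (β / 4) / β) * (Real.sqrt (2 * (k : ℝ)) / (n : ℝ)))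
          * Real.sqrt (Lq (β / 4)) * Real.sqrt (Δ4 c (k : ℝ) w φ) / (n : ℝ)
        + 112 * cphi c φ * Vc c f φ * (Lq (β / 4) / β)
            * Real.sqrt (Δinf c (k : ℝ) w φ) / (n : ℝ)
        ≤ qk2 c (k : ℝ) w (fun x => f x - f₀ x))
    (Y : Fin n → Ω → ℝ) (hY : IID P Y (mconv f φ)) :
    P {ω | qhat c (k : ℝ) w φ f₀ Y ω < τ} ≤ ENNReal.ofReal β := by
  have hk1 : (1 : ℝ) ≤ k := by exact_mod_cast hk
  exact quantile_bound_alternative_general hw.1 hw.2.1 hφ.1 hf₀.1 hf.1 hMφ (by linarith)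
    (hwinf k (by linarith)) hφinf hφ4 hf₀.2.1 hf4 hβ.1 hβ.2.le hn hτ hsep hY

end MultErr
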